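/- arXiv:1102.5415 — 2 statements merged into one kernel-verified Lean document; each statement's English description precedes it below -/
import Mathlib

section
/- Let F be a finite field with q elements, χ a multiplicative character of F of order d = q-1 (extended by χ(0) = 0), and f ∈ F[x] a monic polynomial with m distinct roots (in the algebraic closure) that is not a d-th power in F[x]. Then |Σ_{x∈F} χ(f(x))| ≤ (m-1)√q. -/
open Finset Polynomial
open scoped Classical

/-!
Put `q = #F` and `d = orderOf χ`. Replacing `(χ, f)` by `(χ ^ e, g)`, where `f = g ^ e` with `e ∣ d`
as large as possible, one may assume that `f` is not an `l`-th power for any prime `l ∣ d`.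

For monic `h` put `λ(h) = χ(Res(h, f))`, and let `m` be the number of distinct roots of `f`. As
`λ(h)` depends only on `deg h` and on `h` modulo the radical of `f`, and is not trivial, the
L-function `L(T) = ∑ λ(h) T ^ deg h` is a polynomial of degree less than `m`. Grouping points into
conjugacy classes shows that the coefficients of `T * d/dT log L(T)` are the sums
`S n = ∑ χ(N(f(x)))` over the `x` in the extension of degree `n`, with `N` the norm to `F`. Hence
`S n` is minus the sum of the `n`-th powers of the reciprocal roots of `L`, and `S 1` is the sum to
be bounded.

It remains to see that the reciprocal roots have absolute value at most `√q`, for which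
`S (2 * k) = O(q ^ k)` suffices. This is Stepanov's method. With `r = q ^ k = d * s + 1`, the points
of the extension of degree `2 * k` at which `χ(N(f(x)))` takes a given nonzero value satisfy
`f(x) ^ (s * (r + 1)) = a` for some `a ∈ F`. Linear algebra provides a nontrivial combination `R`
of the polynomials `X ^ (r * j + l) * f ^ (s * i)`, `i < d`, such that `R ^ r * f ^ (s * (d - 1))`,
reduced by this equation and by `x ^ (r * r) = x`, vanishes identically; the degree of `R` bounds
the number of such points by `r ^ 2 / d + O(r)`. That `R ≠ 0` follows from the irreducibility of
`T ^ d - f(X) / f(Y)` over `F(X, Y)`.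
-/

namespace WeilBound

section KummerPolynomial

variable {L : Type*} [Field L]

theorem exists_pow_eq_pow_natDegree_of_dvd_X_pow_sub_C {p : L[X]} (hp : p ≠ 0) {d : ℕ} {a : L}
    (hdvd : p ∣ X ^ d - C a) : ∃ b : L, b ^ d = a ^ p.natDegree := by
  refine ⟨Algebra.norm L (AdjoinRoot.root p), ?_⟩
  have hroot := eval₂_eq_zero_of_dvd_of_eval₂_eq_zero _ _ hdvd (AdjoinRoot.eval₂_root p)
  rw [eval₂_sub, eval₂_pow, eval₂_C, eval₂_X, sub_eq_zero] at hroot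
  rw [← map_pow, hroot, ← AdjoinRoot.algebraMap_eq, Algebra.norm_algebraMap,
    (AdjoinRoot.powerBasis hp).finrank, AdjoinRoot.powerBasis_dim hp]

theorem exists_pow_eq_of_pow_mul_eq_pow_mul {t d s : ℕ} (htd : 0 < t * d) {ζ : L}
    (hζ : IsPrimitiveRoot ζ (t * d)) (hcop : s.Coprime d) {a b : L}
    (hb : b ^ (t * d) = a ^ (t * s)) : ∃ c : L, c ^ d = a := by
  have : NeZero t := ⟨(Nat.pos_of_mul_pos_right htd).ne'⟩
  obtain rfl | ha := eq_or_ne a 0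
  · exact ⟨0, zero_pow (Nat.pos_of_mul_pos_left htd).ne'⟩
  have hω : (a ^ s / b ^ d) ^ t = 1 := by
    rw [div_pow, ← pow_mul, ← pow_mul, mul_comm d, mul_comm s, hb, div_self (pow_ne_zero _ ha)]
  obtain ⟨i, -, hi⟩ := (hζ.pow htd (mul_comm t d)).eq_pow_of_pow_eq_one hω
  have hb0 : b ^ d ≠ 0 := by
    intro h0
    rw [mul_comm t d, pow_mul, h0, zero_pow (NeZero.ne t)] at hb
    exact pow_ne_zero _ ha hb.symm
  have has : a ^ s ∈ Set.range (· ^ d : L → L) :=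
    ⟨ζ ^ i * b, by
      change (ζ ^ i * b) ^ d = a ^ s
      rw [mul_pow, pow_right_comm, hi, div_mul_cancel₀ _ hb0]⟩
  exact (pow_mem_range_pow_of_coprime hcop a).mp has

theorem irreducible_X_pow_sub_C_of_isPrimitiveRoot {d : ℕ} (hd : 0 < d) {ζ : L}
    (hζ : IsPrimitiveRoot ζ d) {a : L} (ha : ∀ l, l.Prime → l ∣ d → ∀ b : L, b ^ l ≠ a) :
    Irreducible (X ^ d - C a) := by
  have hne : (X ^ d - C a : L[X]) ≠ 0 := X_pow_sub_C_ne_zero hd a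
  have hunit : ¬ IsUnit (X ^ d - C a) := by
    rw [isUnit_iff_degree_eq_zero, degree_X_pow_sub_C hd, Nat.cast_eq_zero]
    exact hd.ne'
  obtain ⟨p, hp, hdvd⟩ := WfDvdMonoid.exists_irreducible_factor hunit hne
  obtain ⟨b, hb⟩ := exists_pow_eq_pow_natDegree_of_dvd_X_pow_sub_C hp.ne_zero hdvd
  obtain ⟨s, e, hcop, hs, he⟩ := Nat.exists_coprime p.natDegree d
  set t := Nat.gcd p.natDegree d
  rw [mul_comm] at hs he
  have he1 : e = 1 := by
    by_contra he1
    obtain ⟨c, hc⟩ := exists_pow_eq_of_pow_mul_eq_pow_mul (he ▸ hd) (he ▸ hζ) hcop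
      (by rwa [← hs, ← he])
    obtain ⟨v, hv⟩ := Nat.minFac_dvd e
    refine ha _ (Nat.minFac_prime he1) ((Nat.minFac_dvd e).trans ⟨t, by rw [mul_comm, ← he]⟩)
      (c ^ v) ?_
    rw [← pow_mul, mul_comm, ← hv, hc]
  have hle : d ≤ p.natDegree := by
    refine Nat.le_of_dvd hp.natDegree_pos ⟨s, ?_⟩
    rw [he1, mul_one] at he
    rw [← he] at hs
    exact hs
  exact (associated_of_dvd_of_natDegree_le hdvd hne
    (natDegree_X_pow_sub_C.trans_le hle)).irreducible hp

end KummerPolynomial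

section PowerInFractionField

variable {F : Type*} [Field F]

theorem isRelPrime_C_map_C {g : F[X]} (hg : g.Monic) : IsRelPrime (C g) (g.map C) := by
  intro p hpC hpmap
  have hp0 : p.natDegree = 0 := by
    simpa using natDegree_le_of_dvd hpC (C_ne_zero.mpr hg.ne_zero)
  rw [eq_C_of_natDegree_eq_zero hp0] at hpmap ⊢
  exact ((hg.map C).isPrimitive _ hpmap).map C

theorem exists_monic_eq_pow_of_associated_pow {g k : F[X]} (hg : g.Monic) {l : ℕ} (hl : l ≠ 0)
    (h : Associated (k ^ l) g) : ∃ k' : F[X], k'.Monic ∧ g = k' ^ l := by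
  have hk : k ≠ 0 := by
    rintro rfl
    exact hg.ne_zero (h.eq_zero_iff.mp (zero_pow hl))
  have hmonic := monic_mul_leadingCoeff_inv hk
  have hassoc : Associated (k * C k.leadingCoeff⁻¹) k :=
    associated_mul_unit_left _ _ (isUnit_C.mpr (by simpa using hk))
  exact ⟨_, hmonic, (eq_of_monic_of_associated (hmonic.pow l) hg (hassoc.pow_pow.trans h)).symm⟩

theorem exists_eq_pow_of_C_div_map_C_eq_pow {L : Type*} [Field L] [Algebra F[X][X] L]
    [IsFractionRing F[X][X] L] {g : F[X]} (hg : g.Monic) {l : ℕ} (hl : 0 < l) {b : L}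
    (hb : b ^ l = algebraMap F[X][X] L (C g) / algebraMap F[X][X] L (g.map C)) :
    ∃ k : F[X], g = k ^ l := by
  let _ : GCDMonoid F[X][X] := UniqueFactorizationMonoid.toGCDMonoid _
  have hinj := IsFractionRing.injective F[X][X] L
  have hγ : algebraMap F[X][X] L (g.map C) ≠ 0 :=
    (map_ne_zero_iff _ hinj).mpr (hg.map C).ne_zero
  have hpow : (b * algebraMap F[X][X] L (g.map C)) ^ l =
      algebraMap F[X][X] L (C g * g.map C ^ (l - 1)) := by
    rw [mul_pow, hb, map_mul, map_pow, div_mul_eq_mul_div, div_eq_iff hγ, mul_assoc, ← pow_succ,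
      Nat.sub_add_cancel hl]
  obtain ⟨c, hc⟩ := IsIntegrallyClosed.exists_algebraMap_eq_of_isIntegral_pow (R := F[X][X]) hl
    (hpow ▸ isIntegral_algebraMap)
  rw [← hc, ← map_pow] at hpow
  have hunit : IsUnit (gcd (C g) (g.map C ^ (l - 1))) :=
    (gcd_isUnit_iff_isRelPrime).mpr (isRelPrime_C_map_C hg).pow_right
  obtain ⟨k, hk⟩ := exists_associated_pow_of_mul_eq_pow hunit (hinj hpow).symm
  have hk0 : k.natDegree = 0 := by
    have := natDegree_eq_of_degree_eq (degree_eq_degree_of_associated hk)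
    rw [natDegree_pow, natDegree_C] at this
    exact (Nat.mul_eq_zero.mp this).resolve_left hl.ne'
  rw [eq_C_of_natDegree_eq_zero hk0, ← C_pow] at hk
  obtain ⟨k', -, hk'⟩ := exists_monic_eq_pow_of_associated_pow (k := k.coeff 0) hg hl.ne'
    (by simpa using hk.map (evalRingHom (0 : F[X])))
  exact ⟨k', hk'⟩

end PowerInFractionField

section Resultant

theorem natDegree_resultant_le {R : Type*} [CommRing R] {p q : R[X][X]} {a b : ℕ}
    (hp : ∀ i, (p.coeff i).natDegree ≤ a) (hq : ∀ i, (q.coeff i).natDegree ≤ b) (m n : ℕ) :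
    (resultant p q m n).natDegree ≤ m * b + n * a := by
  rw [resultant, Matrix.det_apply]
  refine natDegree_sum_le_of_forall_le _ _ fun σ _ ↦ (natDegree_smul_le _ _).trans ?_
  refine (natDegree_prod_le _ _).trans ?_
  rw [Fin.sum_univ_add]
  have hleft (j : Fin m) :
      (sylvester p q m n (σ (Fin.castAdd n j)) (Fin.castAdd n j)).natDegree ≤ b := by
    rw [sylvester, Matrix.of_apply, Fin.addCases_left]
    split_ifs
    · exact hq _
    · simp
  have hright (j : Fin n) :
      (sylvester p q m n (σ (Fin.natAdd m j)) (Fin.natAdd m j)).natDegree ≤ a := by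
    rw [sylvester, Matrix.of_apply, Fin.addCases_right]
    split_ifs
    · exact hp _
    · simp
  calc _ ≤ ∑ _j : Fin m, b + ∑ _j : Fin n, a :=
        add_le_add (sum_le_sum fun j _ ↦ hleft j) (sum_le_sum fun j _ ↦ hright j)
    _ = m * b + n * a := by simp

theorem map_resultant_eq_zero_of_eval_eq_zero {R S : Type*} [CommRing R] [CommRing S]
    (φ : R →+* S) {p q : R[X]} {y : S} (hp : (p.map φ).eval y = 0) (hq : (q.map φ).eval y = 0)
    (hp0 : p.natDegree ≠ 0) : φ (resultant p q) = 0 := by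
  obtain ⟨u, v, -, -, huv⟩ :=
    exists_mul_add_mul_eq_C_resultant p q le_rfl le_rfl (Or.inl hp0)
  simpa [hp, hq] using (congrArg (fun w ↦ (w.map φ).eval y) huv).symm

variable {F : Type*} [Field F]

/-- The polynomial `g(Y) T ^ d - g(X)` in `T` over `F[X][Y]`; for `r = d * s + 1` a power of the
cardinality of `F`, it has the root `T = g ^ s` after the substitution `(X, Y) ↦ (X ^ r, X)`. -/
noncomputable def kummerPolynomial (g : F[X]) (d : ℕ) : F[X][X][X] :=
  C (g.map C) * X ^ d - C (C g)

variable {g : F[X]} {d : ℕ}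

theorem natDegree_kummerPolynomial (hg : g.Monic) :
    (kummerPolynomial g d).natDegree = d := by
  rw [kummerPolynomial, natDegree_sub_C, natDegree_C_mul_X_pow _ _ (hg.map C).ne_zero]

theorem natDegree_coeff_kummerPolynomial_le (i : ℕ) :
    ((kummerPolynomial g d).coeff i).natDegree ≤ g.natDegree := by
  rw [kummerPolynomial, coeff_sub, coeff_C_mul_X_pow, coeff_C]
  refine (natDegree_sub_le _ _).trans (max_le ?_ ?_) <;> split_ifs <;> simp

theorem irreducible_map_kummerPolynomial (hg : g.Monic) (hd : 0 < d) {ζ : F}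
    (hζ : IsPrimitiveRoot ζ d) (hpow : ∀ l, l.Prime → l ∣ d → ∀ k : F[X], g ≠ k ^ l) :
    Irreducible ((kummerPolynomial g d).map (algebraMap F[X][X] (FractionRing F[X][X]))) := by
  set φ := algebraMap F[X][X] (FractionRing F[X][X])
  have hinj : Function.Injective φ := IsFractionRing.injective _ _
  have hγ : φ (g.map C) ≠ 0 := (map_ne_zero_iff _ hinj).mpr (hg.map C).ne_zero
  have hfactor : (kummerPolynomial g d).map φ =
      C (φ (g.map C)) * (X ^ d - C (φ (C g) / φ (g.map C))) := by
    rw [kummerPolynomial, Polynomial.map_sub, Polynomial.map_mul, Polynomial.map_pow, map_X, map_C,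
      map_C, mul_sub, ← C_mul, mul_div_cancel₀ _ hγ]
  have hζ' : IsPrimitiveRoot (φ (C (C ζ))) d :=
    hζ.map_of_injective (f := φ.comp (C.comp C)) (hinj.comp (C_injective.comp C_injective))
  have hirr := irreducible_X_pow_sub_C_of_isPrimitiveRoot hd hζ'
    (a := φ (C g) / φ (g.map C)) fun l hl hld b hb ↦ by
      obtain ⟨k, hk⟩ := exists_eq_pow_of_C_div_map_C_eq_pow hg hl.pos hb
      exact hpow l hl hld k hk
  rw [hfactor]
  exact (irreducible_isUnit_mul (isUnit_C.mpr hγ.isUnit)).mpr hirr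

theorem resultant_kummerPolynomial_ne_zero (hg : g.Monic) (hd : 0 < d) {ζ : F}
    (hζ : IsPrimitiveRoot ζ d) (hpow : ∀ l, l.Prime → l ∣ d → ∀ k : F[X], g ≠ k ^ l)
    {W : F[X][X][X]} (hW : W ≠ 0) (hWd : W.natDegree < d) :
    resultant (kummerPolynomial g d) W ≠ 0 := by
  set φ := algebraMap F[X][X] (FractionRing F[X][X])
  have hinj : Function.Injective φ := IsFractionRing.injective _ _
  have hcop : IsCoprime ((kummerPolynomial g d).map φ) (W.map φ) := by
    rw [(irreducible_map_kummerPolynomial hg hd hζ hpow).coprime_iff_not_dvd]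
    refine not_dvd_of_natDegree_lt ((Polynomial.map_ne_zero_iff hinj).mpr hW) ?_
    rwa [natDegree_map_eq_of_injective hinj, natDegree_map_eq_of_injective hinj,
      natDegree_kummerPolynomial hg]
  have hres := resultant_ne_zero _ _ hcop
  rw [natDegree_map_eq_of_injective hinj, natDegree_map_eq_of_injective hinj,
    resultant_map_map] at hres
  exact fun h0 ↦ hres (by rw [h0, map_zero])

end Resultant

section DiagonalExpand

variable {F : Type*} [Field F]

/-- The substitution `p(X, Y) ↦ p(X ^ r, X)` on `F[X][Y]`. -/
noncomputable def diagonalExpand (F : Type*) [Field F] (r : ℕ) : F[X][X] →+* F[X] :=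
  eval₂RingHom (expand F r : F[X] →ₐ[F] F[X]).toRingHom X

@[simp]
theorem diagonalExpand_C (r : ℕ) (p : F[X]) : diagonalExpand F r (C p) = expand F r p := by
  simp [diagonalExpand]

@[simp]
theorem diagonalExpand_X (r : ℕ) : diagonalExpand F r X = X := by
  simp [diagonalExpand]

@[simp]
theorem diagonalExpand_map_C (r : ℕ) (p : F[X]) : diagonalExpand F r (p.map C) = p := by
  have hcomp : (expand F r : F[X] →ₐ[F] F[X]).toRingHom.comp C = C := by ext; simp
  rw [diagonalExpand, coe_eval₂RingHom, eval₂_map, hcomp, eval₂_C_X]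

theorem coeff_diagonalExpand {r l : ℕ} (hl : l < r) {p : F[X][X]} (hp : p.natDegree < r) (j : ℕ) :
    (diagonalExpand F r p).coeff (j * r + l) = (p.coeff l).coeff j := by
  have hr : 0 < r := by omega
  conv_lhs => rw [p.as_sum_range_C_mul_X_pow' hp, map_sum, finsetSum_coeff]
  simp only [map_mul, map_pow, diagonalExpand_C, diagonalExpand_X, coeff_mul_X_pow']
  rw [sum_eq_single_of_mem l (mem_range.mpr hl)]
  · rw [if_pos (by omega), Nat.add_sub_cancel, coeff_expand_mul hr]
  · intro i hi hil
    split_ifs with hle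
    · rw [coeff_expand hr, if_neg]
      intro hdvd
      have hmod : i % r = (j * r + l) % r := (Nat.modEq_iff_dvd' hle).mpr hdvd
      rw [Nat.mod_eq_of_lt (mem_range.mp hi), Nat.mul_add_mod', Nat.mod_eq_of_lt hl] at hmod
      exact hil hmod
    · rfl

theorem diagonalExpand_ne_zero {r : ℕ} {p : F[X][X]} (hp0 : p ≠ 0) (hp : p.natDegree < r) :
    diagonalExpand F r p ≠ 0 := by
  contrapose! hp0
  ext l j
  obtain hl | hl := lt_or_ge l r
  · rw [← coeff_diagonalExpand hl hp, hp0]; simp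
  · rw [coeff_eq_zero_of_natDegree_lt (hp.trans_le hl)]; simp

theorem eval_map_diagonalExpand_ne_zero {g h : F[X]} (hg : g.Monic) {d r b : ℕ} (hd : 0 < d)
    {ζ : F} (hζ : IsPrimitiveRoot ζ d) (hpow : ∀ l, l.Prime → l ∣ d → ∀ k : F[X], g ≠ k ^ l)
    (hh : g * h ^ d = expand F r g) {W : F[X][X][X]} (hW : W ≠ 0) (hWd : W.natDegree < d)
    (hWb : ∀ i, (W.coeff i).natDegree ≤ b) (hr : d * (g.natDegree + b) < r) :
    (W.map (diagonalExpand F r)).eval h ≠ 0 := by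
  -- The resultant eliminates `T` between `W` and `kummerPolynomial g d`, whose substitutions have
  -- the common root `h`; its degree in `Y` is below `r`, so `diagonalExpand` does not kill it.
  intro hWh
  have hQ : (kummerPolynomial g d).natDegree = d := natDegree_kummerPolynomial hg
  have hQh : ((kummerPolynomial g d).map (diagonalExpand F r)).eval h = 0 := by
    rw [kummerPolynomial, Polynomial.map_sub, Polynomial.map_mul, Polynomial.map_pow, map_X, map_C,
      map_C, diagonalExpand_map_C, diagonalExpand_C, eval_sub, eval_mul, eval_pow, eval_X, eval_C,
      eval_C, hh, sub_self]
  have hdeg : (resultant (kummerPolynomial g d) W).natDegree < r := calc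
    _ ≤ (kummerPolynomial g d).natDegree * b + W.natDegree * g.natDegree :=
        natDegree_resultant_le natDegree_coeff_kummerPolynomial_le hWb _ _
    _ ≤ d * b + d * g.natDegree := by rw [hQ]; gcongr
    _ < r := by linarith
  have hzero : diagonalExpand F r (resultant (kummerPolynomial g d) W) = 0 :=
    map_resultant_eq_zero_of_eval_eq_zero _ hQh hWh (hQ.trans_ne hd.ne')
  exact diagonalExpand_ne_zero (resultant_kummerPolynomial_ne_zero hg hd hζ hpow hW hWd) hdeg hzero

end DiagonalExpand

section Frobenius

variable {F : Type*} [Field F] [Fintype F]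

theorem pow_card_pow_eq_expand (g : F[X]) (k : ℕ) :
    g ^ Fintype.card F ^ k = expand F (Fintype.card F ^ k) g := by
  induction k with
  | zero => simp
  | succ k ih => rw [pow_succ, pow_mul, ih, mul_comm, expand_mul, FiniteField.expand_card]

theorem aeval_pow_card_pow {K : Type*} [CommSemiring K] [Algebra F K] (g : F[X]) (k : ℕ) (x : K) :
    aeval x g ^ Fintype.card F ^ k = aeval (x ^ Fintype.card F ^ k) g := by
  rw [← map_pow, pow_card_pow_eq_expand, expand_aeval]

end Frobenius

section Stepanov

variable {F : Type*} [Field F]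

theorem exists_ne_zero_sum_C_mul_eq_zero {ι : Type*} [Fintype ι] (v : ι → F[X]) {N : ℕ}
    (hv : ∀ i, (v i).natDegree < N) (hN : N < Fintype.card ι) :
    ∃ c : ι → F, c ≠ 0 ∧ ∑ i, C (c i) * v i = 0 := by
  have hdep : ¬ LinearIndependent F fun i (n : Fin N) ↦ (v i).coeff n := fun h ↦
    hN.not_ge (by simpa using h.fintype_card_le_finrank)
  obtain ⟨c, hc, i, hi⟩ := Fintype.not_linearIndependent_iff.mp hdep
  refine ⟨c, fun h ↦ hi (congrFun h i), ?_⟩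
  ext n
  simp only [finsetSum_coeff, coeff_C_mul, coeff_zero]
  obtain hn | hn := lt_or_ge n N
  · simpa using congrFun hc ⟨n, hn⟩
  · exact sum_eq_zero fun i _ ↦ by
      rw [coeff_eq_zero_of_natDegree_lt ((hv i).trans_le hn), mul_zero]

variable {d J B : ℕ}

/-- The trivariate polynomial `∑ c i j l * X ^ j * Y ^ l * T ^ i` (innermost variable `X`, outermost
variable `T`) behind `stepanovPolynomial`. -/
noncomputable def coeffPolynomial (c : Fin d × Fin J × Fin B → F) : F[X][X][X] :=
  ∑ t, monomial t.1 (monomial t.2.2 (monomial t.2.1 (c t)))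

/-- Stepanov's auxiliary polynomial `∑ c i j l * X ^ (r * j + l) * h ^ i`. -/
noncomputable def stepanovPolynomial (r : ℕ) (h : F[X]) (c : Fin d × Fin J × Fin B → F) : F[X] :=
  ∑ t, C (c t) * (X ^ (r * t.2.1 + t.2.2) * h ^ (t.1 : ℕ))

/-- The polynomial of small degree agreeing with `stepanovPolynomial r h c ^ r * h ^ (d - 1)` at the
points `x` with `x ^ (r * r) = x` and `h x ^ (r + 1) = a`. -/
noncomputable def reducedStepanovPolynomial (r : ℕ) (h : F[X]) (a : F)
    (c : Fin d × Fin J × Fin B → F) : F[X] :=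
  ∑ t, C (c t) * (C (a ^ (t.1 : ℕ)) * X ^ (r * t.2.2 + t.2.1) * h ^ (d - 1 - t.1))

theorem coeffPolynomial_ne_zero {c : Fin d × Fin J × Fin B → F} (hc : c ≠ 0) :
    coeffPolynomial c ≠ 0 := by
  contrapose! hc
  funext t
  have hcoeff := congrArg (fun p ↦ ((p.coeff t.1).coeff t.2.2).coeff t.2.1) hc
  simp only [coeffPolynomial, finsetSum_coeff, coeff_zero] at hcoeff
  rw [sum_eq_single_of_mem t (mem_univ t)] at hcoeff
  · simpa using hcoeff
  · intro u _ hut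
    have hne : ¬ ((u.1 : ℕ) = t.1 ∧ (u.2.2 : ℕ) = t.2.2 ∧ (u.2.1 : ℕ) = t.2.1) :=
      fun ⟨h1, h2, h3⟩ ↦ hut (Prod.ext (Fin.ext h1) (Prod.ext (Fin.ext h3) (Fin.ext h2)))
    by_cases h1 : (u.1 : ℕ) = t.1 <;> by_cases h2 : (u.2.2 : ℕ) = t.2.2 <;>
      simp_all [coeff_monomial]

theorem natDegree_coeffPolynomial_lt (hd : 0 < d) (c : Fin d × Fin J × Fin B → F) :
    (coeffPolynomial c).natDegree < d := by
  refine (natDegree_sum_le_of_forall_le (n := d - 1) _ _ fun t _ ↦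
    (natDegree_monomial_le _).trans (by omega)).trans_lt (by omega)

theorem natDegree_coeff_coeffPolynomial_le (c : Fin d × Fin J × Fin B → F) (i : ℕ) :
    ((coeffPolynomial c).coeff i).natDegree ≤ B - 1 := by
  rw [coeffPolynomial, finsetSum_coeff]
  refine natDegree_sum_le_of_forall_le _ _ fun t _ ↦ ?_
  rw [coeff_monomial]
  split_ifs
  · exact (natDegree_monomial_le _).trans (by omega)
  · simp

theorem eval_map_coeffPolynomial (r : ℕ) (h : F[X]) (c : Fin d × Fin J × Fin B → F) :
    ((coeffPolynomial c).map (diagonalExpand F r)).eval h = stepanovPolynomial r h c := by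
  simp only [coeffPolynomial, stepanovPolynomial, Polynomial.map_sum, eval_finsetSum,
    map_monomial, eval_monomial]
  refine sum_congr rfl fun t _ ↦ ?_
  simp only [← C_mul_X_pow_eq_monomial, map_mul, map_pow, diagonalExpand_C, diagonalExpand_X,
    expand_C, expand_X]
  ring

theorem natDegree_stepanovPolynomial_le (r : ℕ) (h : F[X]) (c : Fin d × Fin J × Fin B → F) :
    (stepanovPolynomial r h c).natDegree ≤ r * (J - 1) + (B - 1) + (d - 1) * h.natDegree := by
  refine natDegree_sum_le_of_forall_le _ _ fun t _ ↦ (natDegree_C_mul_le _ _).trans ?_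
  refine natDegree_mul_le.trans (add_le_add ?_ (natDegree_pow_le.trans ?_))
  · rw [natDegree_X_pow]
    gcongr <;> omega
  · gcongr
    omega

theorem natDegree_reducedStepanovTerm_lt (r : ℕ) (h : F[X]) (a : F) (t : Fin d × Fin J × Fin B) :
    (C (a ^ (t.1 : ℕ)) * X ^ (r * t.2.2 + t.2.1) * h ^ (d - 1 - t.1)).natDegree <
      r * (B - 1) + J + (d - 1) * h.natDegree := by
  have hj := t.2.1.isLt
  have hl := t.2.2.isLt
  calc _ ≤ r * t.2.2 + t.2.1 + (d - 1 - t.1) * h.natDegree :=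
        natDegree_mul_le.trans (add_le_add (natDegree_C_mul_X_pow_le _ _) natDegree_pow_le)
    _ < r * t.2.2 + J + (d - 1 - t.1) * h.natDegree := by omega
    _ ≤ _ := add_le_add (Nat.add_le_add_right (Nat.mul_le_mul_left _ (by omega)) _)
        (Nat.mul_le_mul_right _ (Nat.sub_le _ _))

theorem exists_reducedStepanovPolynomial_eq_zero (r : ℕ) (h : F[X]) (a : F)
    (hcount : r * (B - 1) + J + (d - 1) * h.natDegree < d * (J * B)) :
    ∃ c : Fin d × Fin J × Fin B → F, c ≠ 0 ∧ reducedStepanovPolynomial r h a c = 0 :=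
  exists_ne_zero_sum_C_mul_eq_zero _ (natDegree_reducedStepanovTerm_lt r h a)
    (by simpa using hcount)

theorem aeval_reducedStepanovPolynomial [Fintype F] {K : Type*} [Field K] [Algebra F K]
    {r k : ℕ} (hr : r = Fintype.card F ^ k) (h : F[X]) (a : F) (c : Fin d × Fin J × Fin B → F)
    {x : K} (hx : x ^ (r * r) = x) (ha : aeval x h ^ (r + 1) = algebraMap F K a) :
    aeval x (reducedStepanovPolynomial r h a c) =
      aeval x (stepanovPolynomial r h c) ^ r * aeval x h ^ (d - 1) := by
  have hfrob (p : F[X]) : aeval x p ^ r = aeval (x ^ r) p := hr ▸ aeval_pow_card_pow p k x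
  rw [hfrob, reducedStepanovPolynomial, stepanovPolynomial, map_sum, map_sum, sum_mul]
  refine sum_congr rfl fun t _ ↦ ?_
  have hX : (x ^ r) ^ (r * t.2.1 + t.2.2 : ℕ) = x ^ (r * t.2.2 + t.2.1 : ℕ) := by
    rw [← pow_mul, mul_add, ← mul_assoc, pow_add, pow_mul x (r * r), hx, ← pow_add, add_comm]
  have hh : aeval (x ^ r) h ^ (t.1 : ℕ) * aeval x h ^ (d - 1) =
      algebraMap F K a ^ (t.1 : ℕ) * aeval x h ^ (d - 1 - t.1) := by
    have hsplit : d - 1 = t.1 + (d - 1 - t.1) := by omega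
    rw [← hfrob, ← ha, pow_succ, mul_pow, mul_assoc, ← pow_add, ← hsplit]
  simp only [map_mul, map_pow, aeval_C, aeval_X, hX]
  linear_combination -(algebraMap F K (c t) * x ^ (r * t.2.2 + t.2.1 : ℕ)) * hh

theorem stepanovPolynomial_ne_zero {g h : F[X]} (hg : g.Monic) (hd : 0 < d) {ζ : F}
    (hζ : IsPrimitiveRoot ζ d) (hpow : ∀ l, l.Prime → l ∣ d → ∀ k : F[X], g ≠ k ^ l) {r : ℕ}
    (hh : g * h ^ d = expand F r g) (hr : d * (g.natDegree + (B - 1)) < r)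
    {c : Fin d × Fin J × Fin B → F} (hc : c ≠ 0) : stepanovPolynomial r h c ≠ 0 :=
  eval_map_coeffPolynomial r h c ▸ eval_map_diagonalExpand_ne_zero hg hd hζ hpow hh
    (coeffPolynomial_ne_zero hc) (natDegree_coeffPolynomial_lt hd c)
    (natDegree_coeff_coeffPolynomial_le c) hr

/- The hypothesis of `exists_reducedStepanovPolynomial_eq_zero` for `r = d * s + 1`,
`J = s + 2 * D + 4`, `B = s - D` and `h = g ^ s` with `g` of degree `D`. -/
theorem stepanov_degree_lt_card_coeffs {d s D : ℕ} (hd : 2 ≤ d) (hs : 2 * D + 1 ≤ s) :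
    (d * s + 1) * (s - D - 1) + (s + 2 * D + 4) + (d - 1) * (s * D) <
      d * ((s + 2 * D + 4) * (s - D)) := by
  obtain ⟨t, rfl⟩ := Nat.exists_eq_add_of_le hs
  obtain ⟨e, rfl⟩ := Nat.exists_eq_add_of_le hd
  rw [show 2 * D + 1 + t - D - 1 = D + t by omega, show 2 * D + 1 + t - D = D + t + 1 by omega,
    show 2 + e - 1 = e + 1 by omega]
  ring_nf
  nlinarith [Nat.zero_le (e * D), Nat.zero_le (t * D), Nat.zero_le (e * t),
    Nat.zero_le (e * t * D), Nat.zero_le (e * D * D)]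

theorem card_le_of_aeval_pow_eq [Fintype F] {K : Type*} [Field K] [Algebra F K] {g : F[X]}
    (hg : g.Monic) (hd : 2 ≤ d) {ζ : F} (hζ : IsPrimitiveRoot ζ d)
    (hpow : ∀ l, l.Prime → l ∣ d → ∀ k : F[X], g ≠ k ^ l) {r s k : ℕ}
    (hr : r = Fintype.card F ^ k) (hrs : r = d * s + 1) (hs : 2 * g.natDegree + 1 ≤ s)
    {a : F} (ha : a ≠ 0) {P : Finset K}
    (hP : ∀ x ∈ P, x ^ (r * r) = x ∧ aeval x g ^ (s * (r + 1)) = algebraMap F K a) :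
    P.card ≤ r * s + (3 * g.natDegree + 5) * r := by
  set D := g.natDegree
  set h := g ^ s
  have hhD : h.natDegree = s * D := hg.natDegree_pow s
  obtain ⟨c, hc, hc0⟩ := exists_reducedStepanovPolynomial_eq_zero (d := d) (J := s + 2 * D + 4)
    (B := s - D) r h a (by rw [hhD, hrs]; exact stepanov_degree_lt_card_coeffs hd hs)
  have hgh : g * h ^ d = expand F r g := by
    rw [← pow_mul, ← pow_succ', mul_comm s d, ← hrs, hr, pow_card_pow_eq_expand]
  have hdeg : d * (D + (s - D - 1)) < r := by
    rw [hrs, Nat.lt_succ_iff]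
    gcongr
    omega
  have hne := stepanovPolynomial_ne_zero hg (by omega) hζ hpow hgh hdeg hc
  set R := stepanovPolynomial r h c
  have hroot : ∀ x ∈ P, aeval x R = 0 := by
    intro x hx
    obtain ⟨hxr, hxa⟩ := hP x hx
    have hha : aeval x h ^ (r + 1) = algebraMap F K a := by rw [map_pow, ← pow_mul, hxa]
    have hh0 : aeval x h ≠ 0 := fun h0 ↦ ha <| by simpa [h0] using hha.symm
    have hzero := aeval_reducedStepanovPolynomial hr h a c hxr hha
    rw [hc0, map_zero, eq_comm, mul_eq_zero, or_iff_left (pow_ne_zero _ hh0)] at hzero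
    exact eq_zero_of_pow_eq_zero hzero
  calc P.card ≤ (R.map (algebraMap F K)).natDegree :=
        card_le_degree_of_subset_roots fun x hx ↦ by
          rw [mem_roots ((Polynomial.map_ne_zero_iff (algebraMap F K).injective).mpr hne),
            IsRoot.def, eval_map_algebraMap, hroot x hx]
    _ ≤ r * (s + 2 * D + 4 - 1) + (s - D - 1) + (d - 1) * (s * D) := by
        rw [natDegree_map, ← hhD]
        exact natDegree_stepanovPolynomial_le r h c
    _ ≤ r * (s + 2 * D + 3) + d * s + d * (s * D) := by
        gcongr
        · omega
        · nlinarith [Nat.sub_le s (D + 1)]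
        · omega
    _ ≤ r * s + (3 * D + 5) * r := by rw [hrs]; ring_nf; nlinarith

end Stepanov

section RationalPoints

variable {F K : Type*} [Field F] [Fintype F] [Field K]

/-- The points of the affine line with coordinates in the subfield of `K` with `q ^ n` elements,
where `q` is the cardinality of `F`. For `n = 0` the defining polynomial vanishes and the set is
empty. -/
noncomputable def rationalPoints (F K : Type*) [Fintype F] [Field K] (n : ℕ) : Finset K :=
  (X ^ Fintype.card F ^ n - X : K[X]).roots.toFinset

theorem mem_rationalPoints {n : ℕ} (hn : n ≠ 0) {x : K} :
    x ∈ rationalPoints F K n ↔ x ^ Fintype.card F ^ n = x := by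
  rw [rationalPoints, Multiset.mem_toFinset,
    mem_roots (FiniteField.X_pow_card_pow_sub_X_ne_zero _ hn Fintype.one_lt_card)]
  simp [sub_eq_zero]

variable [Algebra F K] [IsAlgClosed K]

theorem card_rationalPoints {n : ℕ} (hn : n ≠ 0) :
    (rationalPoints F K n).card = Fintype.card F ^ n := by
  obtain ⟨p, hp⟩ := CharP.exists F
  obtain ⟨m, -, hm⟩ := FiniteField.card F p
  have : CharP K p := charP_of_injective_algebraMap (algebraMap F K).injective p
  have hsep : Separable (X ^ Fintype.card F ^ n - X : K[X]) := by
    refine galois_poly_separable p _ ?_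
    rw [hm]
    exact (dvd_pow_self p m.ne_zero).trans (dvd_pow_self _ hn)
  rw [rationalPoints, Multiset.toFinset_card_of_nodup (nodup_roots hsep),
    ← (IsAlgClosed.splits _).natDegree_eq_card_roots]
  exact FiniteField.X_pow_card_pow_sub_X_natDegree_eq _ hn Fintype.one_lt_card

theorem image_algebraMap_eq_rationalPoints_one :
    univ.image (algebraMap F K) = rationalPoints F K 1 := by
  refine Finset.eq_of_subset_of_card_le (fun x hx ↦ ?_) ?_
  · obtain ⟨a, -, rfl⟩ := Finset.mem_image.1 hx
    rw [mem_rationalPoints one_ne_zero, pow_one, ← map_pow, FiniteField.pow_card]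
  · rw [card_rationalPoints one_ne_zero,
      Finset.card_image_of_injective _ (algebraMap F K).injective, pow_one, Finset.card_univ]

end RationalPoints

section Conjugates

variable {F K : Type*} [Field F] [Field K] [Algebra F K]

theorem rootMultiplicity_map_algebraMap_eq_multiplicity {x : K} (hx : IsSeparable F x) {h : F[X]}
    (hh : h ≠ 0) : (h.map (algebraMap F K)).rootMultiplicity x = multiplicity (minpoly F x) h := by
  have hint : IsIntegral F x := hx.isIntegral
  have hfin : FiniteMultiplicity (minpoly F x) h :=
    FiniteMultiplicity.of_not_isUnit (minpoly.irreducible hint).not_isUnit hh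
  obtain ⟨w, hw, hndvd⟩ := hfin.exists_eq_pow_mul_and_not_dvd
  have hminpoly : ((minpoly F x).map (algebraMap F K)).rootMultiplicity x = 1 := by
    refine le_antisymm (rootMultiplicity_le_one_of_separable (Separable.map hx) x) ?_
    rw [Nat.one_le_iff_ne_zero, Ne, rootMultiplicity_eq_zero_iff]
    simp [minpoly.ne_zero hint]
  have hw_root : (w.map (algebraMap F K)).rootMultiplicity x = 0 := by
    refine rootMultiplicity_eq_zero fun hroot ↦ hndvd (minpoly.dvd F x ?_)
    rwa [IsRoot.def, eval_map_algebraMap] at hroot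
  have hmap : ((minpoly F x ^ multiplicity (minpoly F x) h).map (algebraMap F K)) *
      w.map (algebraMap F K) ≠ 0 := by
    rwa [← Polynomial.map_mul, ← hw, Polynomial.map_ne_zero_iff (algebraMap F K).injective]
  conv_lhs => rw [hw]
  rw [Polynomial.map_mul, rootMultiplicity_mul hmap, hw_root, add_zero, Polynomial.map_pow,
    ← count_roots, roots_pow, Multiset.count_nsmul, count_roots, hminpoly, mul_one]

/-- For `x` rational over the extension `E` of degree `n` of `F`, the characteristic polynomial over
`F` of multiplication by `x` on `E`; the division is then exact. -/
noncomputable def charpolyOfDegree (F : Type*) [Field F] [Algebra F K] (n : ℕ) (x : K) : F[X] :=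
  minpoly F x ^ (n / (minpoly F x).natDegree)

theorem monic_charpolyOfDegree [Algebra.IsAlgebraic F K] (n : ℕ) (x : K) :
    (charpolyOfDegree F n x).Monic :=
  (minpoly.monic (Algebra.IsIntegral.isIntegral x)).pow _

variable [Fintype F]

theorem pow_card_pow_injective (k : ℕ) : Function.Injective fun x : K ↦ x ^ Fintype.card F ^ k := by
  have h := (FiniteField.frobeniusAlgHom F K : K →+* K).injective.iterate k
  rwa [AlgHom.coe_toRingHom, FiniteField.coe_frobeniusAlgHom, pow_iterate] at h

variable [Algebra.IsAlgebraic F K]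

theorem pow_card_pow_eq_self_iff {x : K} {n : ℕ} :
    x ^ Fintype.card F ^ n = x ↔ (minpoly F x).natDegree ∣ n := by
  have hint : IsIntegral F x := Algebra.IsIntegral.isIntegral x
  rw [(minpoly.irreducible hint).natDegree_dvd_iff_dvd_X_pow_card_pow_sub_X,
    minpoly.dvd_iff, Nat.card_eq_fintype_card]
  simp [sub_eq_zero]

theorem injOn_pow_card_pow (x : K) :
    Set.InjOn (fun i ↦ x ^ Fintype.card F ^ i) (range (minpoly F x).natDegree) := by
  have hne_of_lt : ∀ i j, i < j → j < (minpoly F x).natDegree →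
      x ^ Fintype.card F ^ i ≠ x ^ Fintype.card F ^ j := by
    intro i j hij hj heq
    have hfix : x ^ Fintype.card F ^ (j - i) = x := by
      refine pow_card_pow_injective (F := F) i ?_
      simp only [← pow_mul, ← pow_add, Nat.sub_add_cancel hij.le, heq]
    exact absurd (Nat.le_of_dvd (by omega) (pow_card_pow_eq_self_iff.1 hfix)) (by omega)
  intro i hi j hj heq
  simp only [coe_range, Set.mem_Iio] at hi hj
  rcases lt_trichotomy i j with hij | hij | hij
  · exact absurd heq (hne_of_lt i j hij hj)
  · exact hij
  · exact absurd heq.symm (hne_of_lt j i hij hi)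

theorem map_minpoly_eq_prod_X_sub_C (x : K) : (minpoly F x).map (algebraMap F K) =
    ∏ i ∈ range (minpoly F x).natDegree, (X - C (x ^ Fintype.card F ^ i)) := by
  have hmonic := (minpoly.monic (Algebra.IsIntegral.isIntegral (R := F) x)).map (algebraMap F K)
  refine eq_of_monic_of_dvd_of_natDegree_le (monic_prod_X_sub_C _ _) hmonic ?_ ?_
  · refine Finset.prod_dvd_of_coprime (fun i hi j hj hij ↦ ?_) fun i _ ↦ ?_
    · exact isCoprime_X_sub_C_of_isUnit_sub
        (sub_ne_zero.2 fun h ↦ hij (injOn_pow_card_pow x hi hj h)).isUnit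
    · rw [dvd_iff_isRoot, IsRoot.def, eval_map_algebraMap, ← aeval_pow_card_pow, minpoly.aeval,
        zero_pow (pow_ne_zero _ Fintype.card_ne_zero)]
  · rw [natDegree_map, natDegree_finsetProd_X_sub_C_eq_card, card_range]

theorem map_charpolyOfDegree {n : ℕ} {x : K} (hx : x ^ Fintype.card F ^ n = x) :
    (charpolyOfDegree F n x).map (algebraMap F K) =
      ∏ i ∈ range n, (X - C (x ^ Fintype.card F ^ i)) := by
  have hpos : 0 < (minpoly F x).natDegree := minpoly.natDegree_pos (Algebra.IsIntegral.isIntegral x)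
  obtain ⟨t, rfl⟩ := pow_card_pow_eq_self_iff.1 hx
  rw [charpolyOfDegree, Nat.mul_div_cancel_left t hpos]
  clear hx
  induction t with
  | zero => simp
  | succ t ih =>
    have hperiod : x ^ Fintype.card F ^ ((minpoly F x).natDegree * t) = x :=
      pow_card_pow_eq_self_iff.2 (dvd_mul_right _ t)
    rw [pow_succ, Polynomial.map_mul, ih, map_minpoly_eq_prod_X_sub_C, mul_add_one,
      Finset.prod_range_add]
    simp only [pow_add, pow_mul] at hperiod ⊢
    simp only [hperiod]

theorem natDegree_charpolyOfDegree {n : ℕ} {x : K} (hx : x ^ Fintype.card F ^ n = x) :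
    (charpolyOfDegree F n x).natDegree = n := by
  rw [charpolyOfDegree, natDegree_pow, Nat.div_mul_cancel (pow_card_pow_eq_self_iff.1 hx)]

theorem card_filter_charpolyOfDegree_dvd {h : F[X]} (hh : h ≠ 0) (x : K) :
    #{j ∈ Icc 1 h.natDegree | x ^ Fintype.card F ^ j = x ∧ charpolyOfDegree F j x ∣ h} =
      (h.map (algebraMap F K)).rootMultiplicity x := by
  have hint : IsIntegral F x := Algebra.IsIntegral.isIntegral x
  have hpos : 0 < (minpoly F x).natDegree := minpoly.natDegree_pos hint
  have hfin : FiniteMultiplicity (minpoly F x) h :=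
    FiniteMultiplicity.of_not_isUnit (minpoly.irreducible hint).not_isUnit hh
  have hdvd_iff : ∀ t, charpolyOfDegree F ((minpoly F x).natDegree * t) x ∣ h ↔
      t ≤ multiplicity (minpoly F x) h := fun t ↦ by
    rw [charpolyOfDegree, Nat.mul_div_cancel_left t hpos, hfin.pow_dvd_iff_le_multiplicity]
  rw [rootMultiplicity_map_algebraMap_eq_multiplicity
    (PerfectField.separable_of_irreducible (minpoly.irreducible hint)) hh]
  have himage : {j ∈ Icc 1 h.natDegree | x ^ Fintype.card F ^ j = x ∧ charpolyOfDegree F j x ∣ h} =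
      (Icc 1 (multiplicity (minpoly F x) h)).image ((minpoly F x).natDegree * ·) := by
    ext j
    simp only [mem_filter, mem_Icc, mem_image]
    constructor
    · rintro ⟨⟨hj, -⟩, hfix, hdvd⟩
      obtain ⟨t, rfl⟩ := pow_card_pow_eq_self_iff.1 hfix
      exact ⟨t, ⟨Nat.pos_of_mul_pos_left hj, (hdvd_iff t).1 hdvd⟩, rfl⟩
    · rintro ⟨t, ⟨ht, htle⟩, rfl⟩
      have hfix : x ^ Fintype.card F ^ ((minpoly F x).natDegree * t) = x :=
        pow_card_pow_eq_self_iff.2 (dvd_mul_right _ t)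
      have hdvd := (hdvd_iff t).2 htle
      refine ⟨⟨Nat.mul_pos hpos ht, ?_⟩, hfix, hdvd⟩
      exact (natDegree_charpolyOfDegree hfix).ge.trans (natDegree_le_of_dvd hdvd hh)
  rw [himage, card_image_of_injective _ (mul_right_injective₀ hpos.ne'), Nat.card_Icc,
    Nat.add_sub_cancel]

theorem aeval_eq_zero_of_charpolyOfDegree_dvd {n : ℕ} (hn : n ≠ 0) {x : K}
    (hx : x ^ Fintype.card F ^ n = x) {h : F[X]} (hdvd : charpolyOfDegree F n x ∣ h) :
    aeval x h = 0 := by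
  refine aeval_eq_zero_of_dvd_aeval_eq_zero hdvd ?_
  have hle := Nat.le_of_dvd (Nat.pos_of_ne_zero hn) (pow_card_pow_eq_self_iff.1 hx)
  have hpos : 0 < (minpoly F x).natDegree := minpoly.natDegree_pos (Algebra.IsIntegral.isIntegral x)
  rw [charpolyOfDegree, map_pow, minpoly.aeval, zero_pow (Nat.div_pos hle hpos).ne']

theorem sum_card_filter_charpolyOfDegree_dvd [IsAlgClosed K] {h : F[X]} (hh : h ≠ 0) :
    ∑ j ∈ Icc 1 h.natDegree, #{x ∈ rationalPoints F K j | charpolyOfDegree F j x ∣ h} =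
      h.natDegree := by
  have hmap : h.map (algebraMap F K) ≠ 0 := Polynomial.map_ne_zero hh
  have hfilter : ∀ j ∈ Icc 1 h.natDegree,
      {x ∈ rationalPoints F K j | charpolyOfDegree F j x ∣ h} =
        {x ∈ (h.map (algebraMap F K)).roots.toFinset |
          x ^ Fintype.card F ^ j = x ∧ charpolyOfDegree F j x ∣ h} := fun j hj ↦ by
    have hj0 : j ≠ 0 := by have := (mem_Icc.1 hj).1; omega
    ext x
    simp only [mem_filter, Multiset.mem_toFinset, mem_roots hmap, mem_rationalPoints hj0,
      IsRoot.def, eval_map_algebraMap]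
    exact ⟨fun hx ↦ ⟨aeval_eq_zero_of_charpolyOfDegree_dvd hj0 hx.1 hx.2, hx⟩, fun hx ↦ hx.2⟩
  calc ∑ j ∈ Icc 1 h.natDegree, #{x ∈ rationalPoints F K j | charpolyOfDegree F j x ∣ h}
      = ∑ x ∈ (h.map (algebraMap F K)).roots.toFinset, #{j ∈ Icc 1 h.natDegree |
          x ^ Fintype.card F ^ j = x ∧ charpolyOfDegree F j x ∣ h} := by
        rw [sum_congr rfl fun j hj ↦ congrArg card (hfilter j hj)]
        simp only [card_filter]
        exact sum_comm
    _ = ∑ x ∈ (h.map (algebraMap F K)).roots.toFinset, (h.map (algebraMap F K)).roots.count x :=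
        sum_congr rfl fun x _ ↦ by rw [card_filter_charpolyOfDegree_dvd hh, count_roots]
    _ = h.natDegree := by
        rw [Multiset.toFinset_sum_count_eq, ← (IsAlgClosed.splits _).natDegree_eq_card_roots,
          natDegree_map]

end Conjugates

section LFunction

variable {F : Type*} [Field F] [Fintype F]

theorem finite_setOf_monic_natDegree_eq (F : Type*) [Field F] [Finite F] (n : ℕ) :
    {h : F[X] | h.Monic ∧ h.natDegree = n}.Finite := by
  have : Finite (degreeLT F (n + 1)) := Finite.of_equiv _ (degreeLTEquiv F (n + 1)).symm.toEquiv
  refine (Set.toFinite (degreeLT F (n + 1) : Set F[X])).subset fun h hh ↦ mem_degreeLT.2 ?_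
  exact degree_le_natDegree.trans_lt (by exact_mod_cast hh.2.trans_lt n.lt_succ_self)

/-- The monic polynomials of degree `n` over a finite field. -/
noncomputable def monicOfDegree (F : Type*) [Field F] [Fintype F] (n : ℕ) : Finset F[X] :=
  (finite_setOf_monic_natDegree_eq F n).toFinset

theorem mem_monicOfDegree {n : ℕ} {h : F[X]} :
    h ∈ monicOfDegree F n ↔ h.Monic ∧ h.natDegree = n := by
  simp [monicOfDegree]

theorem monicOfDegree_zero : monicOfDegree F 0 = {1} := by
  ext h
  rw [mem_monicOfDegree, mem_singleton]
  refine ⟨fun hh ↦ hh.1.natDegree_eq_zero.1 hh.2, ?_⟩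
  rintro rfl
  exact ⟨monic_one, natDegree_one⟩

variable {R : Type*} [CommSemiring R] (lam : F[X] →* R)

/-- The coefficient of `T ^ k` in the L-function `∑ lam h * T ^ deg h`, the sum running over the
monic polynomials `h`, of a multiplicative function `lam`. -/
noncomputable def lCoeff (k : ℕ) : R := ∑ h ∈ monicOfDegree F k, lam h

/-- The coefficient of `T ^ n` in `T * L'(T) / L(T)`, where `L` is the L-function of `lam`, written
as a sum over the points of the affine line that are rational over the extension of degree `n`. -/
noncomputable def pointSum (K : Type*) [Field K] [Algebra F K] (n : ℕ) : R :=
  ∑ x ∈ rationalPoints F K n, lam (charpolyOfDegree F n x)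

theorem lCoeff_zero : lCoeff lam 0 = 1 := by
  simp [lCoeff, monicOfDegree_zero]

theorem map_mul_lCoeff {p : F[X]} (hp : p.Monic) (n : ℕ) :
    lam p * lCoeff lam n = ∑ h ∈ monicOfDegree F (p.natDegree + n) with p ∣ h, lam h := by
  rw [lCoeff, mul_sum]
  refine sum_bij (fun h _ ↦ p * h) (fun h hh ↦ ?_)
    (fun _ _ _ _ heq ↦ mul_left_cancel₀ hp.ne_zero heq) (fun h hh ↦ ?_)
    fun h _ ↦ (map_mul _ _ _).symm
  · rw [mem_monicOfDegree] at hh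
    rw [mem_filter, mem_monicOfDegree, hp.natDegree_mul hh.1, hh.2]
    exact ⟨⟨hp.mul hh.1, rfl⟩, dvd_mul_right _ _⟩
  · rw [mem_filter, mem_monicOfDegree] at hh
    obtain ⟨⟨hmonic, hdeg⟩, h', rfl⟩ := hh
    have hh' : h'.Monic := hp.of_mul_monic_left hmonic
    rw [hp.natDegree_mul hh', add_right_inj] at hdeg
    exact ⟨h', mem_monicOfDegree.2 ⟨hh', hdeg⟩, rfl⟩

variable {K : Type*} [Field K] [Algebra F K] [Algebra.IsAlgebraic F K]

theorem pointSum_mul_lCoeff {j : ℕ} (hj : j ≠ 0) (n : ℕ) :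
    pointSum lam K j * lCoeff lam n = ∑ h ∈ monicOfDegree F (j + n),
      #{x ∈ rationalPoints F K j | charpolyOfDegree F j x ∣ h} * lam h := by
  have hpoint : ∀ x ∈ rationalPoints F K j, lam (charpolyOfDegree F j x) * lCoeff lam n =
      ∑ h ∈ monicOfDegree F (j + n), if charpolyOfDegree F j x ∣ h then lam h else 0 :=
    fun x hx ↦ by
      rw [map_mul_lCoeff lam (monic_charpolyOfDegree j x), sum_filter,
        natDegree_charpolyOfDegree ((mem_rationalPoints hj).1 hx)]
  rw [pointSum, sum_mul, sum_congr rfl hpoint, sum_comm]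
  exact sum_congr rfl fun h _ ↦ by rw [← sum_filter, sum_const, nsmul_eq_mul]

variable (K) in
theorem natCast_mul_lCoeff [IsAlgClosed K] (k : ℕ) :
    k * lCoeff lam k = ∑ j ∈ Icc 1 k, pointSum lam K j * lCoeff lam (k - j) := by
  have hterm : ∀ j ∈ Icc 1 k, pointSum lam K j * lCoeff lam (k - j) =
      ∑ h ∈ monicOfDegree F k,
        #{x ∈ rationalPoints F K j | charpolyOfDegree F j x ∣ h} * lam h := fun j hj ↦ by
    rw [mem_Icc] at hj
    rw [pointSum_mul_lCoeff lam (by omega), Nat.add_sub_cancel' hj.2]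
  rw [sum_congr rfl hterm, sum_comm, lCoeff, mul_sum]
  refine sum_congr rfl fun h hh ↦ ?_
  obtain ⟨hmonic, rfl⟩ := mem_monicOfDegree.1 hh
  rw [← sum_mul, ← Nat.cast_sum, sum_card_filter_charpolyOfDegree_dvd hmonic.ne_zero]

end LFunction

section Vanishing

variable {F : Type*} [Field F]

theorem modByMonic_eq_of_dvd_mul_sub_mul {r u h h' : F[X]} (hr : r.Monic) (hu : IsCoprime u r)
    (hdvd : r ∣ u * h - u * h') : h %ₘ r = h' %ₘ r := by
  rw [← mul_sub] at hdvd
  rw [← sub_eq_zero, ← sub_modByMonic, modByMonic_eq_zero_iff_dvd hr]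
  exact hu.symm.dvd_of_dvd_mul_left hdvd

/-- Changes the residue class of `h` modulo `r` to that of `u * h`, leaving the quotient of `h` by
`r` unchanged. -/
noncomputable def mulResidue (r u h : F[X]) : F[X] := h + ((u * h) %ₘ r - h %ₘ r)

theorem dvd_mulResidue_sub_mul {r : F[X]} (u h : F[X]) :
    r ∣ mulResidue r u h - u * h := by
  refine ⟨h /ₘ r - (u * h) /ₘ r, ?_⟩
  have h₁ := modByMonic_add_div h r
  have h₂ := modByMonic_add_div (u * h) r
  rw [mulResidue]
  linear_combination h₂ - h₁

theorem mulResidue_injective {r u : F[X]} (hr : r.Monic) (hu : IsCoprime u r) :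
    Function.Injective (mulResidue r u) := by
  intro h h' heq
  have hdvd : r ∣ u * h - u * h' := by
    have := dvd_sub (dvd_mulResidue_sub_mul (r := r) u h') (dvd_mulResidue_sub_mul (r := r) u h)
    rwa [heq, sub_sub_sub_cancel_left] at this
  have hmod : (u * h) %ₘ r = (u * h') %ₘ r := by
    rwa [← sub_eq_zero, ← sub_modByMonic, modByMonic_eq_zero_iff_dvd hr]
  simpa [mulResidue, hmod, modByMonic_eq_of_dvd_mul_sub_mul hr hu hdvd] using heq

variable [Fintype F]

theorem mulResidue_mem_monicOfDegree {r h : F[X]} {k : ℕ} (hr : r.Monic) (hk : r.natDegree ≤ k)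
    (u : F[X]) (hh : h ∈ monicOfDegree F k) : mulResidue r u h ∈ monicOfDegree F k := by
  rw [mem_monicOfDegree] at hh ⊢
  have hlt : ((u * h) %ₘ r - h %ₘ r).degree < h.degree :=
    calc ((u * h) %ₘ r - h %ₘ r).degree
        < r.degree := (degree_sub_le _ _).trans_lt
          (max_lt (degree_modByMonic_lt _ hr) (degree_modByMonic_lt _ hr))
      _ ≤ h.degree := by
          rw [degree_eq_natDegree hr.ne_zero, degree_eq_natDegree hh.1.ne_zero, hh.2]
          exact_mod_cast hk
  exact ⟨hh.1.add_of_left hlt, (natDegree_add_eq_left_of_degree_lt hlt).trans hh.2⟩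

theorem sum_monicOfDegree_eq_zero {A : Type*} [Ring A] [NoZeroDivisors A] {r u : F[X]}
    (hr : r.Monic) (hu : IsCoprime u r) {k : ℕ} (hk : r.natDegree ≤ k) {lam : F[X] → A} {c : A}
    (hc : c ≠ 1)
    (hlam : ∀ h ∈ monicOfDegree F k, ∀ h' ∈ monicOfDegree F k, r ∣ h' - u * h →
      lam h' = c * lam h) :
    ∑ h ∈ monicOfDegree F k, lam h = 0 := by
  have himage : (monicOfDegree F k).image (mulResidue r u) = monicOfDegree F k := by
    refine eq_of_subset_of_card_le (image_subset_iff.2 fun h hh ↦ ?_)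
      (card_image_of_injective _ (mulResidue_injective hr hu)).ge
    exact mulResidue_mem_monicOfDegree hr hk u hh
  have hinv : ∑ h ∈ monicOfDegree F k, lam h = c * ∑ h ∈ monicOfDegree F k, lam h := by
    conv_lhs => rw [← himage, sum_image (mulResidue_injective hr hu).injOn]
    rw [mul_sum]
    exact sum_congr rfl fun h hh ↦ hlam h hh _ (mulResidue_mem_monicOfDegree hr hk u hh)
      (dvd_mulResidue_sub_mul u h)
  have hzero : (c - 1) * ∑ h ∈ monicOfDegree F k, lam h = 0 := by
    rw [sub_mul, ← hinv, one_mul, sub_self]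
  exact (mul_eq_zero.1 hzero).resolve_left (sub_ne_zero.2 hc)

end Vanishing

section Radical

variable {F : Type*} [Field F]

open UniqueFactorizationMonoid in
theorem monic_radical (f : F[X]) : (radical f).Monic := by
  refine monic_prod_of_monic _ _ fun p hp ↦ ?_
  have hp := mem_primeFactors.1 hp
  rw [← normalize_normalized_factor p hp]
  exact monic_normalize (irreducible_of_normalized_factor p hp).ne_zero

theorem aeval_radical_eq_zero_iff {K : Type*} [Field K] [Algebra F K] {f : F[X]} (hf : f ≠ 0)
    {x : K} : aeval x (UniqueFactorizationMonoid.radical f) = 0 ↔ aeval x f = 0 := by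
  refine ⟨fun h ↦ aeval_eq_zero_of_dvd_aeval_eq_zero
    UniqueFactorizationMonoid.radical_dvd_self h, fun h ↦ ?_⟩
  obtain ⟨n, hn⟩ := UniqueFactorizationMonoid.exists_dvd_radical_self_pow hf
  have hpow := aeval_eq_zero_of_dvd_aeval_eq_zero hn h
  rw [map_pow] at hpow
  exact eq_zero_of_pow_eq_zero hpow

theorem natDegree_radical_eq_card_roots [PerfectField F] {K : Type*} [Field K] [IsAlgClosed K]
    [Algebra F K] {f : F[X]} (hf : f ≠ 0) :
    (UniqueFactorizationMonoid.radical f).natDegree =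
      (f.map (algebraMap F K)).roots.toFinset.card := by
  have hsep : (UniqueFactorizationMonoid.radical f).Separable :=
    PerfectField.separable_iff_squarefree.2 UniqueFactorizationMonoid.squarefree_radical
  rw [← natDegree_map (algebraMap F K), (IsAlgClosed.splits _).natDegree_eq_card_roots,
    ← Multiset.toFinset_card_of_nodup (nodup_roots hsep.map)]
  congr 1
  ext x
  simp only [Multiset.mem_toFinset, mem_roots (Polynomial.map_ne_zero hf),
    mem_roots (Polynomial.map_ne_zero (monic_radical f).ne_zero), IsRoot.def, eval_map_algebraMap,
    aeval_radical_eq_zero_iff hf]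

end Radical

section ResultantCharacter

variable {F : Type*} [Field F] {f : F[X]}

/-- The multiplicative function `h ↦ χ (Res(h, f))` on polynomials, whose value at a monic `h` is
the product of the `χ (f x)` over the roots `x` of `h` when `h` splits over `F`. -/
noncomputable def resultantCharacter (χ : MulChar F ℂ) (hf : f.Monic) : F[X] →* ℂ where
  toFun h := χ (resultant h f)
  map_one' := by simp
  map_mul' a b := by
    rw [← map_mul]
    by_cases hab : a * b = 0
    · rcases eq_or_ne f 1 with rfl | hf1
      · simp
      have hdeg : f.natDegree ≠ 0 := fun h ↦ hf1 (hf.natDegree_eq_zero.1 h)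
      rcases mul_eq_zero.1 hab with rfl | rfl <;> simp [hdeg]
    · obtain ⟨ha, hb⟩ := mul_ne_zero_iff.1 hab
      rw [natDegree_mul ha hb, resultant_mul_left _ _ _ _ le_rfl]

theorem algebraMap_resultant_eq_prod {K : Type*} [Field K] [Algebra F K] [IsAlgClosed K]
    (hf : f.Monic) (h : F[X]) : algebraMap F K (resultant f h) =
      ((f.map (algebraMap F K)).roots.map fun x ↦ aeval x h).prod := by
  have hprod := resultant_eq_prod_eval (f.map (algebraMap F K)) (h.map (algebraMap F K))
    h.natDegree natDegree_map_le (IsAlgClosed.splits _)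
  rw [natDegree_map, (hf.map _).leadingCoeff, one_pow, one_mul, resultant_map_map] at hprod
  simpa only [eval_map_algebraMap] using hprod

theorem resultant_eq_mul_of_radical_dvd_sub_mul (hf : f.Monic) {u h h' : F[X]}
    (hdeg : h'.natDegree = h.natDegree)
    (hdvd : UniqueFactorizationMonoid.radical f ∣ h' - u * h) :
    resultant h' f = resultant f u * resultant h f := by
  have heval : ∀ x ∈ (f.map (algebraMap F (AlgebraicClosure F))).roots,
      aeval x h' = aeval x u * aeval x h := fun x hx ↦ by
    rw [mem_roots (Polynomial.map_ne_zero hf.ne_zero), IsRoot.def, eval_map_algebraMap,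
      ← aeval_radical_eq_zero_iff hf.ne_zero] at hx
    simpa [sub_eq_zero] using aeval_eq_zero_of_dvd_aeval_eq_zero hdvd hx
  have hres : resultant f h' = resultant f u * resultant f h := by
    refine (algebraMap F (AlgebraicClosure F)).injective ?_
    rw [map_mul, algebraMap_resultant_eq_prod hf, algebraMap_resultant_eq_prod hf,
      algebraMap_resultant_eq_prod hf, ← Multiset.prod_map_mul, Multiset.map_congr rfl heval]
  rw [resultant_comm h', resultant_comm h, hres, hdeg]
  ring

variable [Fintype F]

theorem lCoeff_resultantCharacter_eq_zero {χ : MulChar F ℂ} (hf : f.Monic) {u : F[X]}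
    (hu₀ : resultant f u ≠ 0) (hu₁ : χ (resultant f u) ≠ 1) {k : ℕ}
    (hk : (UniqueFactorizationMonoid.radical f).natDegree ≤ k) :
    lCoeff (resultantCharacter χ hf) k = 0 := by
  have hcop : IsCoprime f u := by
    by_contra hcop
    exact hu₀ (resultant_eq_zero_iff.2 ⟨Or.inl hf.ne_zero, hcop⟩)
  refine sum_monicOfDegree_eq_zero (monic_radical f)
    (hcop.of_isCoprime_of_dvd_left UniqueFactorizationMonoid.radical_dvd_self).symm hk hu₁
    fun h hh h' hh' hdvd ↦ ?_
  have hdeg : h'.natDegree = h.natDegree :=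
    (mem_monicOfDegree.1 hh').2.trans (mem_monicOfDegree.1 hh).2.symm
  change χ (resultant h' f) = χ (resultant f u) * χ (resultant h f)
  rw [resultant_eq_mul_of_radical_dvd_sub_mul hf hdeg hdvd, map_mul]

variable {K : Type*} [Field K] [Algebra F K] [Algebra.IsAlgebraic F K]

theorem algebraMap_resultant_charpolyOfDegree (f : F[X]) {n : ℕ} {x : K}
    (hx : x ^ Fintype.card F ^ n = x) :
    algebraMap F K (resultant (charpolyOfDegree F n x) f) =
      aeval x f ^ ∑ i ∈ range n, Fintype.card F ^ i := by
  rw [← resultant_map_map, ← natDegree_map (algebraMap F K), map_charpolyOfDegree hx,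
    resultant_prod_left _ _ _ _ (by simp only [leadingCoeff_X_sub_C, prod_const_one, ne_eq,
      one_ne_zero, not_false_eq_true]) natDegree_map_le, ← prod_pow_eq_pow_sum]
  refine prod_congr rfl fun i _ ↦ ?_
  rw [natDegree_X_sub_C, resultant_X_sub_C_left _ _ _ natDegree_map_le, eval_map_algebraMap,
    aeval_pow_card_pow]

variable (K) in
theorem pointSum_resultantCharacter_one [IsAlgClosed K] (χ : MulChar F ℂ) (hf : f.Monic) :
    pointSum (resultantCharacter χ hf) K 1 = ∑ x : F, χ (f.eval x) := by
  rw [pointSum, ← image_algebraMap_eq_rationalPoints_one,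
    sum_image (algebraMap F K).injective.injOn]
  refine sum_congr rfl fun x _ ↦ congrArg χ ((algebraMap F K).injective ?_)
  rw [algebraMap_resultant_charpolyOfDegree f
    (by rw [pow_one, ← map_pow, FiniteField.pow_card]), sum_range_one, pow_zero, pow_one,
    aeval_algebraMap_apply, coe_aeval_eq_eval]

end ResultantCharacter

section RootsOfUnity

theorem sum_nthRootsFinset_one_eq_zero {R : Type*} [CommRing R] [IsDomain R] {ζ : R} {d : ℕ}
    (hζ : IsPrimitiveRoot ζ d) (hd : 2 ≤ d) : ∑ w ∈ nthRootsFinset d (1 : R), w = 0 := by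
  rw [nthRootsFinset_def, Finset.sum, Multiset.map_id', Multiset.toFinset_val,
    hζ.nthRoots_one_nodup.dedup, hζ.nthRoots_eq (one_pow d)]
  simp only [mul_one]
  exact hζ.geom_sum_eq_zero hd

theorem norm_sum_le_of_card_fiber_le {ι : Type*} {s : Finset ι} {v : ι → ℂ} {d : ℕ} (hd : 2 ≤ d)
    (hv : ∀ i ∈ s, v i ^ d = 1) {Q M D : ℝ} (hM : 0 ≤ M)
    (hfiber : ∀ w, (#{i ∈ s | v i = w} : ℝ) ≤ Q / d + M) (hcard : Q - D ≤ #s) :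
    ‖∑ i ∈ s, v i‖ ≤ 2 * d * M + D := by
  -- The `d`-th roots of unity sum to zero, so `Q / d` may be subtracted from each fiber count; an
  -- upper bound on every count and a lower bound on their total control the absolute deviations.
  have hζ := Complex.isPrimitiveRoot_exp d (by omega)
  have hmaps : ∀ i ∈ s, v i ∈ nthRootsFinset d (1 : ℂ) := fun i hi ↦
    (mem_nthRootsFinset (by omega) 1).2 (hv i hi)
  have hsum : ∑ i ∈ s, v i =
      ∑ w ∈ nthRootsFinset d (1 : ℂ), w * ((#{i ∈ s | v i = w} - Q / d : ℝ) : ℂ) := by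
    rw [← sum_fiberwise_of_maps_to' hmaps fun w ↦ w]
    push_cast
    simp only [mul_sub, sum_sub_distrib, ← sum_mul, sum_nthRootsFinset_one_eq_zero hζ hd, mul_zero,
      sub_zero, sum_const, nsmul_eq_mul, mul_comm]
  have hterm : ∀ w ∈ nthRootsFinset d (1 : ℂ), ‖w * ((#{i ∈ s | v i = w} - Q / d : ℝ) : ℂ)‖ ≤
      2 * M + Q / d - #{i ∈ s | v i = w} := fun w hw ↦ by
    have hw : ‖w‖ = 1 := Complex.norm_eq_one_of_pow_eq_one
      ((mem_nthRootsFinset (by omega) 1).1 hw) (by omega)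
    rw [norm_mul, hw, one_mul, Complex.norm_real, Real.norm_eq_abs, abs_le]
    constructor <;> linarith [hfiber w]
  calc ‖∑ i ∈ s, v i‖
      ≤ ∑ w ∈ nthRootsFinset d (1 : ℂ), (2 * M + Q / d - #{i ∈ s | v i = w}) := by
        rw [hsum]
        exact norm_sum_le_of_le _ hterm
    _ = 2 * d * M + (Q - #s) := by
        rw [sum_sub_distrib, ← Nat.cast_sum, ← card_eq_sum_card_fiberwise hmaps, sum_const,
          hζ.card_nthRootsFinset, nsmul_eq_mul]
        field_simp
        ring
    _ ≤ 2 * d * M + D := by linarith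

end RootsOfUnity

section CharacterOrder

theorem orderOf_apply_generator {M R : Type*} [CommMonoid M] [CommMonoidWithZero R]
    (χ : MulChar M R) {g : Mˣ} (hg : ∀ x, x ∈ Subgroup.zpowers g) : orderOf (χ g) = orderOf χ :=
  orderOf_eq_orderOf_iff.2 fun n ↦ by
    rw [← MulChar.pow_apply_coe, MulChar.eq_iff hg, MulChar.one_apply_coe]

variable {F : Type*} [Field F] [Fintype F]

theorem exists_isPrimitiveRoot_of_dvd_card_sub_one {d : ℕ} (hd : d ∣ Fintype.card F - 1) :
    ∃ ζ : F, IsPrimitiveRoot ζ d := by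
  obtain ⟨e, he⟩ := hd
  obtain ⟨u, hu⟩ := IsCyclic.exists_ofOrder_eq_natCard (α := Fˣ)
  rw [Nat.card_eq_fintype_card, Fintype.card_units] at hu
  have hprim : IsPrimitiveRoot (u : F) (Fintype.card F - 1) := by
    rw [IsPrimitiveRoot.coe_units_iff, ← hu]
    exact IsPrimitiveRoot.orderOf u
  exact ⟨_, hprim.pow (Nat.sub_pos_of_lt Fintype.one_lt_card) (he.trans (mul_comm d e))⟩

theorem pow_eq_pow_of_apply_eq {R : Type*} [CommMonoidWithZero R] {χ : MulChar F R} {e : ℕ}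
    (he : e * orderOf χ = Fintype.card F - 1) {a b : F} (ha : a ≠ 0) (hb : b ≠ 0)
    (hab : χ a = χ b) : a ^ e = b ^ e := by
  obtain ⟨g, hg⟩ := IsCyclic.exists_generator (α := Fˣ)
  obtain ⟨n, hn⟩ := mem_powers_iff_mem_zpowers.2 (hg ((Units.mk0 b hb)⁻¹ * Units.mk0 a ha))
  have hmul : a = b * (g : F) ^ n := by
    rw [← Units.val_pow_eq_pow_val, show g ^ n = _ from hn]
    simp [hb]
  have hone : χ (g : F) ^ n = 1 := by
    rw [hmul, map_mul, map_pow] at hab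
    exact (hb.isUnit.map χ).mul_left_cancel (hab.trans (mul_one _).symm)
  obtain ⟨k, rfl⟩ : orderOf χ ∣ n := orderOf_apply_generator χ hg ▸ orderOf_dvd_of_pow_eq_one hone
  rw [hmul, mul_pow, ← pow_mul, show orderOf χ * k * e = e * orderOf χ * k by ring, he, pow_mul,
    FiniteField.pow_card_sub_one_eq_one _ g.ne_zero, one_pow, mul_one]

end CharacterOrder

section PointSumBound

variable {F : Type*} [Field F] [Fintype F]

theorem mul_sum_range_pow_eq {q k d e s : ℕ} (hq : 1 ≤ q) (hd : d ≠ 0) (hed : e * d = q - 1)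
    (hs : q ^ k = d * s + 1) : e * ∑ i ∈ range (2 * k), q ^ i = s * (q ^ k + 1) := by
  refine Nat.eq_of_mul_eq_mul_left (Nat.pos_of_ne_zero hd) ?_
  calc d * (e * ∑ i ∈ range (2 * k), q ^ i) = (∑ i ∈ range (2 * k), q ^ i) * (q - 1) := by
        rw [← hed]
        ring
    _ = q ^ k * q ^ k - 1 := by rw [geom_sum_mul_of_one_le hq, two_mul, pow_add]
    _ = d * (s * (q ^ k + 1)) := by
        rw [hs, Nat.sub_eq_iff_eq_add (Nat.le_add_left _ _ |>.trans (Nat.le_mul_self _))]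
        ring

variable {K : Type*} [Field K] [Algebra F K]

theorem card_pow_le_card_filter_aeval_ne_zero_add [IsAlgClosed K] {f : F[X]} (hf : f ≠ 0) {n : ℕ}
    (hn : n ≠ 0) : Fintype.card F ^ n ≤
      #{x ∈ rationalPoints F K n | aeval x f ≠ 0} + f.natDegree := by
  rw [← card_rationalPoints (K := K) hn,
    ← card_filter_add_card_filter_not (s := rationalPoints F K n) (fun x ↦ aeval x f ≠ 0),
    ← natDegree_map (algebraMap F K)]
  gcongr
  refine card_le_degree_of_subset_roots fun x hx ↦ ?_
  rw [mem_roots (Polynomial.map_ne_zero hf), IsRoot.def, eval_map_algebraMap]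
  exact not_not.1 (mem_filter.1 hx).2

variable [Algebra.IsAlgebraic F K] {χ : MulChar F ℂ} {f : F[X]}

theorem resultant_charpolyOfDegree_ne_zero_iff {n : ℕ} (hn : n ≠ 0) {x : K}
    (hx : x ^ Fintype.card F ^ n = x) :
    resultant (charpolyOfDegree F n x) f ≠ 0 ↔ aeval x f ≠ 0 := by
  have hpos : ∑ i ∈ range n, Fintype.card F ^ i ≠ 0 :=
    (sum_pos (fun i _ ↦ pow_pos Fintype.card_pos i) (nonempty_range_iff.2 hn)).ne'
  rw [← map_ne_zero (algebraMap F K), algebraMap_resultant_charpolyOfDegree f hx, ne_eq,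
    pow_eq_zero_iff hpos]

theorem pointSum_resultantCharacter_eq_sum_filter (hf : f.Monic) {n : ℕ} (hn : n ≠ 0) :
    pointSum (resultantCharacter χ hf) K n = ∑ x ∈ rationalPoints F K n with aeval x f ≠ 0,
      χ (resultant (charpolyOfDegree F n x) f) := by
  refine (sum_filter_of_ne fun x hx hne ↦ ?_).symm
  rw [← resultant_charpolyOfDegree_ne_zero_iff hn ((mem_rationalPoints hn).1 hx)]
  exact fun h ↦ hne ((congrArg χ h).trans χ.map_zero)

theorem card_fiber_resultant_charpolyOfDegree_le (hf : f.Monic) (hχ : 2 ≤ orderOf χ)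
    (hpow : ∀ l, l.Prime → l ∣ orderOf χ → ∀ h : F[X], f ≠ h ^ l) {k s : ℕ} (hk : k ≠ 0)
    (hs : Fintype.card F ^ k = orderOf χ * s + 1) (hfs : 2 * f.natDegree + 1 ≤ s) (w : ℂ) :
    #{x ∈ {x ∈ rationalPoints F K (2 * k) | aeval x f ≠ 0} |
        χ (resultant (charpolyOfDegree F (2 * k) x) f) = w} ≤
      Fintype.card F ^ k * s + (3 * f.natDegree + 5) * Fintype.card F ^ k := by
  obtain ⟨e, he⟩ := χ.orderOf_dvd_card_sub_one
  rw [mul_comm] at he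
  obtain ⟨ζ, hζ⟩ := exists_isPrimitiveRoot_of_dvd_card_sub_one χ.orderOf_dvd_card_sub_one
  set P := {x ∈ {x ∈ rationalPoints F K (2 * k) | aeval x f ≠ 0} |
    χ (resultant (charpolyOfDegree F (2 * k) x) f) = w} with hP
  rcases P.eq_empty_or_nonempty with hempty | ⟨x₀, hx₀⟩
  · simp [hempty]
  have hmem : ∀ x ∈ P, x ^ Fintype.card F ^ (2 * k) = x ∧
      resultant (charpolyOfDegree F (2 * k) x) f ≠ 0 ∧
      χ (resultant (charpolyOfDegree F (2 * k) x) f) = w := fun x hx ↦ by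
    rw [hP, mem_filter, mem_filter, mem_rationalPoints (by omega)] at hx
    exact ⟨hx.1.1, (resultant_charpolyOfDegree_ne_zero_iff (by omega) hx.1.1).2 hx.1.2, hx.2⟩
  obtain ⟨-, hne₀, hw₀⟩ := hmem x₀ hx₀
  refine card_le_of_aeval_pow_eq hf hχ hζ hpow rfl hs hfs (pow_ne_zero e hne₀) fun x hx ↦ ?_
  obtain ⟨hfix, hne, hw⟩ := hmem x hx
  refine ⟨by rwa [← pow_add, ← two_mul], ?_⟩
  rw [← pow_eq_pow_of_apply_eq he.symm hne hne₀ (hw.trans hw₀.symm), map_pow,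
    algebraMap_resultant_charpolyOfDegree f hfix, ← pow_mul, mul_comm _ e,
    mul_sum_range_pow_eq Fintype.card_pos (by omega) he.symm hs]

theorem norm_pointSum_resultantCharacter_le_of_card_pow_eq [IsAlgClosed K] (hf : f.Monic)
    (hχ : 2 ≤ orderOf χ) (hpow : ∀ l, l.Prime → l ∣ orderOf χ → ∀ h : F[X], f ≠ h ^ l) {k s : ℕ}
    (hk : k ≠ 0) (hs : Fintype.card F ^ k = orderOf χ * s + 1) (hfs : 2 * f.natDegree + 1 ≤ s) :
    ‖pointSum (resultantCharacter χ hf) K (2 * k)‖ ≤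
      2 * orderOf χ * ((3 * f.natDegree + 5) * Fintype.card F ^ k) + f.natDegree := by
  have hk₂ : 2 * k ≠ 0 := by omega
  rw [pointSum_resultantCharacter_eq_sum_filter hf hk₂]
  refine norm_sum_le_of_card_fiber_le (Q := (Fintype.card F : ℝ) ^ (2 * k)) hχ (fun x hx ↦ ?_)
    (by positivity) (fun w ↦ ?_) ?_
  · obtain ⟨hx, hfx⟩ := mem_filter.1 hx
    have hne := (resultant_charpolyOfDegree_ne_zero_iff hk₂ ((mem_rationalPoints hk₂).1 hx)).2 hfx
    rw [← χ.pow_apply' (by omega), pow_orderOf_eq_one, MulChar.one_apply hne.isUnit]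
  · have hs_le : (Fintype.card F ^ k * s : ℝ) ≤ Fintype.card F ^ (2 * k) / orderOf χ := by
      have hs : (Fintype.card F ^ k : ℝ) = orderOf χ * s + 1 := by exact_mod_cast hs
      rw [le_div_iff₀ (by exact_mod_cast (by omega : 0 < orderOf χ)), two_mul, pow_add, mul_assoc]
      gcongr
      linarith
    refine le_trans ?_ (add_le_add_left hs_le _)
    exact_mod_cast card_fiber_resultant_charpolyOfDegree_le (K := K) hf hχ hpow hk hs hfs w
  · rw [sub_le_iff_le_add]
    exact_mod_cast card_pow_le_card_filter_aeval_ne_zero_add hf.ne_zero hk₂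

theorem norm_pointSum_resultantCharacter_le [IsAlgClosed K] (hf : f.Monic) (hχ : 2 ≤ orderOf χ)
    (hpow : ∀ l, l.Prime → l ∣ orderOf χ → ∀ h : F[X], f ≠ h ^ l) {k : ℕ}
    (hk : orderOf χ * (2 * f.natDegree + 1) < Fintype.card F ^ k) :
    ‖pointSum (resultantCharacter χ hf) K (2 * k)‖ ≤
      (2 * orderOf χ * (3 * f.natDegree + 5) + f.natDegree) * (Fintype.card F : ℝ) ^ k := by
  have hk₀ : k ≠ 0 := by
    rintro rfl
    rw [pow_zero] at hk
    nlinarith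
  obtain ⟨s, hs⟩ : orderOf χ ∣ Fintype.card F ^ k - 1 :=
    χ.orderOf_dvd_card_sub_one.trans (Nat.sub_one_dvd_pow_sub_one _ _)
  have hfs : 2 * f.natDegree + 1 ≤ s :=
    Nat.le_of_mul_le_mul_left (hs ▸ Nat.le_sub_one_of_lt hk) (by omega)
  have hcard : (1 : ℝ) ≤ (Fintype.card F : ℝ) ^ k :=
    one_le_pow₀ (by exact_mod_cast Fintype.card_pos)
  calc ‖pointSum (resultantCharacter χ hf) K (2 * k)‖
      ≤ 2 * orderOf χ * ((3 * f.natDegree + 5) * (Fintype.card F : ℝ) ^ k) + f.natDegree :=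
        norm_pointSum_resultantCharacter_le_of_card_pow_eq hf hχ hpow hk₀ (by omega) hfs
    _ ≤ 2 * orderOf χ * ((3 * f.natDegree + 5) * (Fintype.card F : ℝ) ^ k) +
          f.natDegree * (Fintype.card F : ℝ) ^ k := by
        gcongr
        exact le_mul_of_one_le_right f.natDegree.cast_nonneg hcard
    _ = _ := by ring

theorem resultant_charpolyOfDegree_comm {n : ℕ} (hn : Even n) {x : K}
    (hx : x ^ Fintype.card F ^ n = x) :
    resultant (charpolyOfDegree F n x) f = resultant f (charpolyOfDegree F n x) := by
  rw [resultant_comm, natDegree_charpolyOfDegree hx, Even.neg_one_pow (hn.mul_right _), one_mul]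

end PointSumBound

theorem exists_apply_resultant_ne_one {F : Type*} [Field F] [Finite F] {χ : MulChar F ℂ} {f : F[X]}
    (hf : f.Monic) (hχ : 2 ≤ orderOf χ)
    (hpow : ∀ l, l.Prime → l ∣ orderOf χ → ∀ h : F[X], f ≠ h ^ l) :
    ∃ u : F[X], resultant f u ≠ 0 ∧ χ (resultant f u) ≠ 1 := by
  have := Fintype.ofFinite F
  -- Otherwise every term of `pointSum` at a point with `f x ≠ 0` is `1`, and the sum over
  -- `q ^ (2 * k)` points is not `O(q ^ k)`.
  by_contra! hone
  set M := 2 * orderOf χ * (3 * f.natDegree + 5) + f.natDegree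
  set k := orderOf χ * (2 * f.natDegree + 1) + M + f.natDegree
  have hk₂ : 2 * k ≠ 0 := by
    have : 0 < orderOf χ * (2 * f.natDegree + 1) := by positivity
    omega
  have hlt : k < Fintype.card F ^ k := Nat.lt_pow_self Fintype.one_lt_card
  have hvalue : ∀ x ∈ {x ∈ rationalPoints F (AlgebraicClosure F) (2 * k) | aeval x f ≠ 0},
      χ (resultant (charpolyOfDegree F (2 * k) x) f) = 1 := fun x hx ↦ by
    obtain ⟨hx, hfx⟩ := mem_filter.1 hx
    rw [mem_rationalPoints hk₂] at hx
    have hne := (resultant_charpolyOfDegree_ne_zero_iff hk₂ hx).2 hfx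
    rw [resultant_charpolyOfDegree_comm (even_two_mul k) hx] at hne ⊢
    exact hone _ hne
  have hupper : #{x ∈ rationalPoints F (AlgebraicClosure F) (2 * k) | aeval x f ≠ 0} ≤
      M * Fintype.card F ^ k := by
    have h := norm_pointSum_resultantCharacter_le (K := AlgebraicClosure F) hf hχ hpow
      (k := k) (by omega)
    rw [pointSum_resultantCharacter_eq_sum_filter hf hk₂, sum_congr rfl hvalue, sum_const,
      nsmul_one, Complex.norm_natCast] at h
    exact_mod_cast h
  have hlower := card_pow_le_card_filter_aeval_ne_zero_add (K := AlgebraicClosure F) hf.ne_zero hk₂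
  refine lt_irrefl (Fintype.card F ^ (2 * k)) ?_
  calc Fintype.card F ^ (2 * k) ≤ M * Fintype.card F ^ k + f.natDegree := by omega
    _ ≤ M * Fintype.card F ^ k + f.natDegree * Fintype.card F ^ k := by
        gcongr
        exact Nat.le_mul_of_pos_right _ (by omega)
    _ = (M + f.natDegree) * Fintype.card F ^ k := (add_mul _ _ _).symm
    _ < Fintype.card F ^ k * Fintype.card F ^ k :=
        Nat.mul_lt_mul_of_pos_right (by omega) (by omega)
    _ = Fintype.card F ^ (2 * k) := by rw [← pow_add, ← two_mul]

section PowerSums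

theorem sum_coeff_mul_sum_pow {R : Type*} [CommSemiring R] (b : Multiset R) (g : R[X]) (k : ℕ) :
    ∑ t ∈ range (g.natDegree + 1), g.coeff t * (b.map fun z ↦ z ^ (k + t)).sum =
      (b.map fun z ↦ z ^ k * g.eval z).sum := by
  simp only [eval_eq_sum_range, mul_sum, ← Multiset.sum_map_mul_left, Multiset.sum_map_sum]
  exact sum_congr rfl fun t _ ↦ congrArg _ (Multiset.map_congr rfl fun z _ ↦ by ring)

theorem norm_le_one_of_norm_sum_pow_le {b : Multiset ℂ} {M : ℝ} {k₀ : ℕ}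
    (h : ∀ k ≥ k₀, ‖(b.map fun z ↦ z ^ k).sum‖ ≤ M) {z : ℂ} (hz : z ∈ b) : ‖z‖ ≤ 1 := by
  -- A polynomial vanishing at all other members of `b` isolates the contribution of `z`.
  set g : ℂ[X] := ∏ w ∈ b.toFinset.erase z, (X - C w) with hg
  have hgz : g.eval z ≠ 0 := by
    rw [hg, eval_prod, prod_ne_zero_iff]
    exact fun w hw ↦ by simpa [sub_eq_zero] using (ne_of_mem_erase hw).symm
  have hgw : ∀ w ≠ z, w ∈ b → g.eval w = 0 := fun w hwz hw ↦ by
    rw [hg, eval_prod]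
    exact prod_eq_zero (mem_erase.2 ⟨hwz, Multiset.mem_toFinset.2 hw⟩) (by simp)
  have hisolate : ∀ k, ∑ t ∈ range (g.natDegree + 1),
      g.coeff t * (b.map fun w ↦ w ^ (k + t)).sum = b.count z * g.eval z * z ^ k := fun k ↦ by
    rw [sum_coeff_mul_sum_pow, Multiset.sum_map_eq_nsmul_single z fun w hwz hw ↦ by
      rw [hgw w hwz hw, mul_zero], nsmul_eq_mul]
    ring
  set a := ‖b.count z * g.eval z‖
  have ha : 0 < a := norm_pos_iff.2
    (mul_ne_zero (Nat.cast_ne_zero.2 (Multiset.count_pos.2 hz).ne') hgz)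
  have hbound : ∀ k ≥ k₀, a * ‖z‖ ^ k ≤ ∑ t ∈ range (g.natDegree + 1), ‖g.coeff t‖ * M :=
    fun k hk ↦ by
      rw [← norm_pow, ← norm_mul, ← hisolate]
      refine norm_sum_le_of_le _ fun t _ ↦ ?_
      rw [norm_mul]
      gcongr
      exact h _ (by omega)
  by_contra! hlt
  obtain ⟨n, hn⟩ := pow_unbounded_of_one_lt
    ((∑ t ∈ range (g.natDegree + 1), ‖g.coeff t‖ * M) / a) hlt
  rw [div_lt_iff₀' ha] at hn
  have hmono : a * ‖z‖ ^ n ≤ a * ‖z‖ ^ max n k₀ := by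
    gcongr
    exacts [hlt.le, le_max_left _ _]
  exact (hn.trans_le hmono).not_ge (hbound _ (le_max_right _ _))

theorem norm_le_sqrt_of_norm_sum_pow_le {s : Multiset ℂ} {q M : ℝ} (hq : 0 < q) {k₀ : ℕ}
    (h : ∀ k ≥ k₀, ‖(s.map fun z ↦ z ^ (2 * k)).sum‖ ≤ M * q ^ k) {z : ℂ} (hz : z ∈ s) :
    ‖z‖ ≤ √q := by
  have hnormalized : ‖z ^ 2 / (q : ℂ)‖ ≤ 1 := by
    refine norm_le_one_of_norm_sum_pow_le (b := s.map fun w ↦ w ^ 2 / (q : ℂ)) (M := M)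
      (k₀ := k₀) (fun k hk ↦ ?_) (Multiset.mem_map_of_mem _ hz)
    have hsum : ((s.map fun w ↦ w ^ 2 / (q : ℂ)).map fun w ↦ w ^ k).sum =
        (s.map fun w ↦ w ^ (2 * k)).sum / (q : ℂ) ^ k := by
      simp only [Multiset.map_map, Function.comp_def, div_pow, ← pow_mul, Multiset.sum_map_div]
    rw [hsum, norm_div, norm_pow, Complex.norm_of_nonneg hq.le, div_le_iff₀ (by positivity)]
    exact h k hk
  rw [norm_div, norm_pow, Complex.norm_of_nonneg hq.le, div_le_one hq] at hnormalized
  exact Real.le_sqrt_of_sq_le hnormalized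

theorem natCast_mul_esymm_eq_neg_sum {R : Type*} [CommRing R] (s : Multiset R) (k : ℕ) :
    k * ((-1) ^ k * s.esymm k) =
      -∑ j ∈ Icc 1 k, (s.map fun z ↦ z ^ j).sum * ((-1) ^ (k - j) * s.esymm (k - j)) := by
  have hesymm : ∀ n, MvPolynomial.aeval (fun x : s.ToType ↦ x.1)
      (MvPolynomial.esymm s.ToType R n) = s.esymm n := fun n ↦ by
    rw [MvPolynomial.aeval_esymm_eq_multiset_esymm, Multiset.map_univ_coe]
  have hpsum : ∀ n, MvPolynomial.aeval (fun x : s.ToType ↦ x.1)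
      (MvPolynomial.psum s.ToType R n) = (s.map fun z ↦ z ^ n).sum := fun n ↦ by
    simp only [MvPolynomial.psum, map_sum, map_pow, MvPolynomial.aeval_X]
    conv_rhs => rw [← Multiset.map_univ_coe s, Multiset.map_map]
    rfl
  have hnewton := congrArg (MvPolynomial.aeval fun x : s.ToType ↦ x.1)
    (MvPolynomial.mul_esymm_eq_sum s.ToType R k)
  simp only [map_mul, map_natCast, map_pow, map_neg, map_one, map_sum, hesymm, hpsum] at hnewton
  rw [mul_left_comm, hnewton, ← mul_assoc, ← pow_add, ← add_assoc,
    Odd.neg_one_pow (Even.add_one ⟨k, rfl⟩), neg_one_mul]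
  congr 1
  refine sum_bij' (fun a _ ↦ a.2) (fun j _ ↦ (k - j, j)) ?_ ?_ ?_ (fun _ _ ↦ rfl) ?_
  · simp only [mem_filter, HasAntidiagonal.mem_antidiagonal, mem_Icc]
    omega
  · simp only [mem_filter, HasAntidiagonal.mem_antidiagonal, mem_Icc]
    omega
  · simp only [mem_filter, HasAntidiagonal.mem_antidiagonal, Prod.ext_iff, and_true]
    omega
  · rintro ⟨i, j⟩ hij
    simp only [mem_filter, HasAntidiagonal.mem_antidiagonal] at hij
    rw [show k - j = i by omega]
    ring

theorem exists_eq_neg_one_pow_mul_esymm {K : Type*} [Field K] [IsAlgClosed K] {c : ℕ → K} {n : ℕ}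
    (hc₀ : c 0 = 1) (hc : ∀ k, n < k → c k = 0) :
    ∃ s : Multiset K, s.card = n ∧ ∀ k, c k = (-1) ^ k * s.esymm k := by
  set g : K[X] := ∑ k ∈ range (n + 1), C (c k) * X ^ (n - k) with hg
  have hcoeff : ∀ k ≤ n, g.coeff (n - k) = c k := fun k hk ↦ by
    rw [hg, finsetSum_coeff, sum_eq_single_of_mem k (mem_range.2 (by omega))]
    · simp
    · intro j hj hjk
      rw [mem_range] at hj
      rw [coeff_C_mul_X_pow, if_neg (by omega)]
  have hdeg : g.natDegree ≤ n := natDegree_sum_le_of_forall_le _ _ fun k _ ↦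
    (natDegree_C_mul_X_pow_le _ _).trans (Nat.sub_le _ _)
  have hlead : g.coeff n = 1 := (hcoeff 0 n.zero_le).trans hc₀
  have hmonic : g.Monic := monic_of_natDegree_le_of_coeff_eq_one n hdeg hlead
  have hnat : g.natDegree = n := hdeg.antisymm (le_natDegree_of_ne_zero (by simp [hlead]))
  have hcard : g.roots.card = n := (IsAlgClosed.splits g).natDegree_eq_card_roots.symm.trans hnat
  refine ⟨g.roots, hcard, fun k ↦ ?_⟩
  rcases le_or_gt k n with hk | hk
  · rw [← hcoeff k hk, coeff_eq_esymm_roots_of_card (hcard.trans hnat.symm) (by omega),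
      hmonic.leadingCoeff, hnat, Nat.sub_sub_self hk, one_mul]
  · rw [hc k hk, Multiset.esymm, Multiset.powersetCard_eq_empty _ (by omega)]
    simp

theorem eq_neg_sum_pow_of_natCast_mul_eq_sum {R : Type*} [CommRing R] {c p : ℕ → R}
    {s : Multiset R} (hc : ∀ k, c k = (-1) ^ k * s.esymm k)
    (hrec : ∀ k : ℕ, k * c k = ∑ j ∈ Icc 1 k, p j * c (k - j)) {k : ℕ} (hk : k ≠ 0) :
    p k = -(s.map fun z ↦ z ^ k).sum := by
  induction k using Nat.strong_induction_on with
  | _ k ih =>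
    obtain ⟨k, rfl⟩ := Nat.exists_eq_succ_of_ne_zero hk
    have hnewton := natCast_mul_esymm_eq_neg_sum s (k + 1)
    simp only [← hc] at hnewton
    have hlower : ∑ j ∈ Icc 1 k, p j * c (k + 1 - j) =
        ∑ j ∈ Icc 1 k, -((s.map fun z ↦ z ^ j).sum * c (k + 1 - j)) :=
      sum_congr rfl fun j hj ↦ by
        rw [mem_Icc] at hj
        rw [ih j (by omega) (by omega), neg_mul]
    rw [hrec, ← sum_neg_distrib, sum_Icc_succ_top (by omega), sum_Icc_succ_top (by omega), hlower,
      add_right_inj, Nat.sub_self, hc 0] at hnewton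
    simpa [Multiset.esymm] using hnewton

theorem norm_le_mul_sqrt_of_natCast_mul_eq_sum {c p : ℕ → ℂ} {n : ℕ} (hc₀ : c 0 = 1)
    (hc : ∀ k, n < k → c k = 0)
    (hrec : ∀ k : ℕ, k * c k = ∑ j ∈ Icc 1 k, p j * c (k - j)) {q M : ℝ} (hq : 0 < q) {k₀ : ℕ}
    (hp : ∀ k ≥ k₀, ‖p (2 * k)‖ ≤ M * q ^ k) : ‖p 1‖ ≤ n * √q := by
  obtain ⟨s, rfl, hs⟩ := exists_eq_neg_one_pow_mul_esymm hc₀ hc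
  have hpow : ∀ k ≠ 0, p k = -(s.map fun z ↦ z ^ k).sum := fun k ↦
    eq_neg_sum_pow_of_natCast_mul_eq_sum hs hrec
  have hroot : ∀ z ∈ s, ‖z‖ ≤ √q := fun z ↦
    norm_le_sqrt_of_norm_sum_pow_le hq (k₀ := max k₀ 1) fun k hk ↦ by
      rw [← norm_neg, ← hpow _ (by omega)]
      exact hp k (by omega)
  calc ‖p 1‖ = ‖s.sum‖ := by simp [hpow 1 one_ne_zero]
    _ ≤ (s.map fun z ↦ ‖z‖).sum := norm_multiset_sum_le s
    _ ≤ s.card • √q := by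
        simpa using Multiset.sum_le_card_nsmul (s.map fun z ↦ ‖z‖) (√q) (by simpa using hroot)
    _ = s.card * √q := nsmul_eq_mul _ _

end PowerSums

section Weil

variable {F : Type*} [Field F]

theorem exists_dvd_eq_pow_of_forall_ne_pow {f : F[X]} (hf : f.Monic) {d : ℕ} (hd : d ≠ 0)
    (hpow : ∀ g : F[X], f ≠ g ^ d) :
    ∃ (e : ℕ) (g : F[X]), e ∣ d ∧ d / e ≠ 1 ∧ g.Monic ∧ f = g ^ e ∧
      ∀ l : ℕ, l.Prime → l ∣ d / e → ∀ h : F[X], g ≠ h ^ l := by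
  obtain ⟨e, he, hmax⟩ := exists_max_image {e ∈ d.divisors | ∃ g : F[X], g.Monic ∧ f = g ^ e} id
    ⟨1, mem_filter.2 ⟨Nat.one_mem_divisors.2 hd, f, hf, (pow_one f).symm⟩⟩
  obtain ⟨hdivisor, g, hg, hfg⟩ := mem_filter.1 he
  have hed : e ∣ d := Nat.dvd_of_mem_divisors hdivisor
  refine ⟨e, g, hed, fun h ↦ hpow g ?_, hg, hfg, fun l hl hld h hgh ↦ ?_⟩
  · rwa [← Nat.eq_of_dvd_of_div_eq_one hed h]
  · obtain ⟨h', hh', hgh'⟩ :=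
      exists_monic_eq_pow_of_associated_pow hg hl.ne_zero (.of_eq hgh.symm)
    have hmem : e * l ∈ {e ∈ d.divisors | ∃ g : F[X], g.Monic ∧ f = g ^ e} := mem_filter.2
      ⟨Nat.mem_divisors.2 ⟨Nat.mul_dvd_of_dvd_div hed hld, hd⟩, h', hh', by
        rw [hfg, hgh', ← pow_mul, mul_comm]⟩
    exact (lt_mul_of_one_lt_right (Nat.pos_of_mem_divisors hdivisor) hl.one_lt).not_ge
      (hmax _ hmem)

variable [Fintype F]

theorem norm_sum_apply_eval_le_of_forall_prime_ne_pow (K : Type*) [Field K] [Algebra F K]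
    [IsAlgClosed K] [Algebra.IsAlgebraic F K] {χ : MulChar F ℂ} {f : F[X]} (hf : f.Monic)
    (hχ : 2 ≤ orderOf χ)
    (hpow : ∀ l : ℕ, l.Prime → l ∣ orderOf χ → ∀ h : F[X], f ≠ h ^ l) :
    ‖∑ x : F, χ (f.eval x)‖ ≤
      (((f.map (algebraMap F K)).roots.toFinset.card : ℝ) - 1) * √(Fintype.card F) := by
  obtain ⟨u, hu₀, hu₁⟩ := exists_apply_resultant_ne_one hf hχ hpow
  have hvanish : ∀ k, (UniqueFactorizationMonoid.radical f).natDegree ≤ k →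
      lCoeff (resultantCharacter χ hf) k = 0 := fun k ↦
    lCoeff_resultantCharacter_eq_zero hf hu₀ hu₁
  rw [natDegree_radical_eq_card_roots (K := K) hf.ne_zero] at hvanish
  set m := (f.map (algebraMap F K)).roots.toFinset.card
  have hm : 1 ≤ m := by
    by_contra! hm
    exact one_ne_zero ((lCoeff_zero _).symm.trans (hvanish 0 (by omega)))
  rw [← pointSum_resultantCharacter_one K χ hf, ← Nat.cast_pred hm]
  exact norm_le_mul_sqrt_of_natCast_mul_eq_sum (lCoeff_zero _) (fun k hk ↦ hvanish k (by omega))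
    (natCast_mul_lCoeff _ K) (mod_cast Fintype.card_pos) fun k hk ↦
      norm_pointSum_resultantCharacter_le hf hχ hpow
        (hk.trans_lt (Nat.lt_pow_self Fintype.one_lt_card))

end Weil

end WeilBound

open WeilBound in
theorem stmt_7_general {F : Type*} [Field F] [Fintype F] (K : Type*) [Field K] [Algebra F K]
    [IsAlgClosed K] [Algebra.IsAlgebraic F K] (χ : MulChar F ℂ) {f : F[X]} (hf : f.Monic)
    (hpow : ∀ g : F[X], f ≠ g ^ orderOf χ) :
    ‖∑ x : F, χ (f.eval x)‖ ≤
      (((f.map (algebraMap F K)).roots.toFinset.card : ℝ) - 1) * √(Fintype.card F) := by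
  have hd : 0 < orderOf χ := χ.orderOf_pos
  obtain ⟨e, g, hed, hne, hg, rfl, hprime⟩ :=
    exists_dvd_eq_pow_of_forall_ne_pow hf hd.ne' hpow
  have he : e ≠ 0 := (Nat.pos_of_dvd_of_pos hed hd).ne'
  have hord : orderOf (χ ^ e) = orderOf χ / e := orderOf_pow_of_dvd he hed
  have hdiv : 0 < orderOf χ / e := Nat.div_pos (Nat.le_of_dvd hd hed) (Nat.pos_of_ne_zero he)
  have hbound := norm_sum_apply_eval_le_of_forall_prime_ne_pow K (χ := χ ^ e) hg
    (by omega) (hord ▸ hprime)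
  simpa only [MulChar.pow_apply' χ he, eval_pow, map_pow, Polynomial.map_pow, roots_pow,
    Multiset.toFinset_nsmul _ _ he] using hbound

/-- Weil bound: Let F be a finite field with q elements, χ a multiplicative
character of F of order d = q-1 (extended by χ(0)=0), and f ∈ F[x] a monic polynomial
with m distinct roots in the algebraic closure which is not a d-th power in F[x]. Then
|∑_{x∈F} χ(f(x))| ≤ (m-1)·√q. -/
theorem stmt_7 {F : Type*} [Field F] [Fintype F]
    (χ : MulChar F ℂ) (hord : orderOf χ = Fintype.card F - 1)
    (f : Polynomial F) (hmonic : f.Monic) (m : ℕ)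
    (hroots : ((f.map (algebraMap F (AlgebraicClosure F))).roots.toFinset.card = m))
    (hnotpow : ¬ ∃ g : Polynomial F, f = g ^ (Fintype.card F - 1)) :
    ‖∑ x : F, χ (f.eval x)‖ ≤ ((m : ℝ) - 1) * Real.sqrt (Fintype.card F) := by
  subst hroots
  exact stmt_7_general (AlgebraicClosure F) χ hmonic (not_exists.mp (hord ▸ hnotpow))
end

section
/- Let F = F_q be a finite field, χ a multiplicative character of order d = q-1, and χ_a = χ^a, χ_b = χ^b with 0 < a < q-1 and 0 ≤ b < q-1. Let S be a non-empty subset of F and A : F → F any function with A(y) ≠ y for all y ∈ F. Then Σ_{y∈F} |Σ_{s∈S} χ_a(s+y)χ_b(s+A(y))| ≤ 11^{1/4} · q^{5/4} · |S|^{1/2}. -/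
open Finset

/-!
By duality and Cauchy–Schwarz the fourth power of the sum is at most `|S|²` times the square of
`∑ |∑ s, f_y(s) conj (f_z(s))|` over pairs `(y, z)`, where `f_y(s) = χ_a(s + y) χ_b(s + A y)`.
Unless `z ∈ {y, A y}`, the point `-z` is a zero of the factor `conj χ_a(s + z)` alone, because
`A z ≠ z`; the Weil bound then gives `3√q`. The at most `2q` exceptional pairs are bounded
trivially by `q`, and Cauchy–Schwarz over the pairs gives `q² (9q · q² + q² · 2q) = 11 q⁵`.

For the Weil bound, the generating series of the sums of a product of `m` characters over monic
polynomials of degree `n` is a polynomial of degree less than `m`, by orthogonality, and its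
logarithmic derivative has as coefficients the corresponding character sums over the extensions
`F_{q^n}`. On `F_{R²}`, `R = q^r`, Stepanov's method with the auxiliary polynomial
`∑ a_{jik} X^j X^{Ri} g^{ck}`, `R = dc + 1`, bounds how often a character takes each of its values.
Since `W = g^c` satisfies `g(X) W^d = g(X^R)`, the auxiliary polynomial is nonzero by the
irreducibility of `g(x) W^d - g(z)` in `W`. Hence the character sums over `F_{q^{2r}}` are `O(q^r)`,
which is possible only if every inverse root has modulus at most `√q`.
-/

open Polynomial

section Kummer

variable {K : Type*} [Field K] {d : ℕ} {ζ θ : K}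

theorem exists_algebraMap_eq_pow_natDegree_minpoly {L : Type*} [Field L] [Algebra K L]
    (hd : d ≠ 0) (hζ : IsPrimitiveRoot ζ d) {w : L} (hw : w ^ d = algebraMap K L θ) :
    ∃ k : K, algebraMap K L k = w ^ (minpoly K w).natDegree := by
  have hintegral : IsIntegral K w := ⟨X ^ d - C θ, monic_X_pow_sub_C θ hd, by simp [hw]⟩
  rcases eq_or_ne w 0 with rfl | hw0
  · exact ⟨0, by simp⟩
  let M := IntermediateField.adjoin K {w}
  let gen : M := IntermediateField.AdjoinSimple.gen K w
  have : FiniteDimensional K M := IntermediateField.adjoin.finiteDimensional hintegral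
  have gen_pow : gen ^ d = algebraMap K M θ := by
    apply (algebraMap M L).injective
    rw [map_pow, IntermediateField.AdjoinSimple.algebraMap_gen, hw]
    rfl
  set k := Algebra.norm K gen
  have norm_pow : k ^ d = θ ^ (minpoly K w).natDegree := by
    rw [← map_pow, gen_pow, Algebra.norm_algebraMap, IntermediateField.adjoin.finrank hintegral]
  have hk0 : algebraMap K L k ≠ 0 := by
    rw [_root_.map_ne_zero, Algebra.norm_ne_zero_iff]
    rintro h
    exact hw0 (by simpa [gen] using congrArg (algebraMap M L) h)
  have ratio_pow : (w ^ (minpoly K w).natDegree / algebraMap K L k) ^ d = 1 := by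
    rw [div_pow, ← map_pow, norm_pow, map_pow, ← hw, pow_right_comm, div_self (by positivity)]
  have : NeZero d := ⟨hd⟩
  obtain ⟨i, -, hi⟩ :=
    (hζ.map_of_injective (algebraMap K L).injective).eq_pow_of_pow_eq_one ratio_pow
  exact ⟨ζ ^ i * k, by rw [map_mul, map_pow, hi, div_mul_cancel₀ _ hk0]⟩

theorem exists_algebraMap_eq_pow_gcd {L : Type*} [Field L] [Algebra K L] {w : L} {m n : ℕ}
    (hm : ∃ k, algebraMap K L k = w ^ m) (hn : ∃ k, algebraMap K L k = w ^ n) :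
    ∃ k, algebraMap K L k = w ^ m.gcd n := by
  obtain ⟨k, hk⟩ := hm
  obtain ⟨l, hl⟩ := hn
  rcases eq_or_ne w 0 with rfl | hw0
  · exact ⟨0 ^ m.gcd n, by simp⟩
  refine ⟨k ^ m.gcdA n * l ^ m.gcdB n, ?_⟩
  rw [map_mul, map_zpow₀, map_zpow₀, hk, hl, ← zpow_natCast, ← zpow_natCast, ← zpow_natCast,
    ← zpow_mul, ← zpow_mul, ← zpow_add₀ hw0, ← Nat.gcd_eq_gcd_ab]

theorem irreducible_X_pow_sub_C_of_isPrimitiveRoot (hd : d ≠ 0) (hζ : IsPrimitiveRoot ζ d)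
    (hθ : ∀ n, n ∣ d → n ≠ 1 → ∀ b : K, b ^ n ≠ θ) : Irreducible (X ^ d - C θ) := by
  obtain ⟨w, hw⟩ :=
    IsAlgClosed.exists_pow_nat_eq (algebraMap K (AlgebraicClosure K) θ) (Nat.pos_of_ne_zero hd)
  have hintegral : IsIntegral K w := ⟨X ^ d - C θ, monic_X_pow_sub_C θ hd, by simp [hw]⟩
  have hdvd : minpoly K w ∣ X ^ d - C θ := minpoly.dvd _ _ (by simp [hw])
  set r := (minpoly K w).natDegree
  obtain ⟨b, hb⟩ := exists_algebraMap_eq_pow_gcd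
    (exists_algebraMap_eq_pow_natDegree_minpoly hd hζ hw) ⟨θ, hw.symm⟩
  have hgd : r.gcd d ∣ d := r.gcd_dvd_right d
  have hbθ : b ^ (d / r.gcd d) = θ := by
    apply (algebraMap K (AlgebraicClosure K)).injective
    rw [map_pow, hb, ← pow_mul, Nat.mul_div_cancel' hgd, hw]
  have hquot : d / r.gcd d = 1 := by
    by_contra hne
    exact hθ _ (Nat.div_dvd_of_dvd hgd) hne b hbθ
  have hdr : d ≤ r :=
    calc d = r.gcd d := (Nat.eq_of_dvd_of_div_eq_one hgd hquot).symm
      _ ≤ r := Nat.gcd_le_left _ (minpoly.natDegree_pos hintegral)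
  rw [eq_of_monic_of_dvd_of_natDegree_le (minpoly.monic hintegral) (monic_X_pow_sub_C θ hd) hdvd
    (by rwa [natDegree_X_pow_sub_C])]
  exact minpoly.irreducible hintegral

end Kummer

section Resultant

theorem natDegree_resultant_le {R : Type*} [CommRing R] {f g : R[X][X]} {a b : ℕ}
    (hf : ∀ i, (f.coeff i).natDegree ≤ a) (hg : ∀ i, (g.coeff i).natDegree ≤ b) (m n : ℕ) :
    (resultant f g m n).natDegree ≤ m * b + n * a := by
  have hcol (i j : Fin (m + n)) : (sylvester f g m n i j).natDegree ≤
      j.addCases (motive := fun _ => ℕ) (fun _ => b) (fun _ => a) := by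
    refine j.addCases (fun j => ?_) (fun j => ?_)
    · simp only [sylvester, Matrix.of_apply, Fin.addCases_left]
      split_ifs <;> simp [hg]
    · simp only [sylvester, Matrix.of_apply, Fin.addCases_right]
      split_ifs <;> simp [hf]
  rw [resultant, Matrix.det_apply]
  refine natDegree_sum_le_of_forall_le _ _ fun σ _ => ?_
  calc (Equiv.Perm.sign σ • ∏ j, sylvester f g m n (σ j) j).natDegree
      ≤ ∑ j, (sylvester f g m n (σ j) j).natDegree :=
        (natDegree_smul_le _ _).trans (natDegree_prod_le _ _)
    _ ≤ ∑ j : Fin (m + n), j.addCases (motive := fun _ => ℕ) (fun _ => b) (fun _ => a) :=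
        sum_le_sum fun j _ => hcol _ _
    _ = m * b + n * a := by simp [Fin.sum_univ_add]

theorem map_resultant_eq_zero_of_eval₂_eq_zero {R S : Type*} [CommRing R] [CommRing S]
    (φ : R →+* S) {f g : R[X]} {w : S} (hf : f.eval₂ φ w = 0) (hg : g.eval₂ φ w = 0)
    (hdeg : f.natDegree ≠ 0) : φ (resultant f g) = 0 := by
  obtain ⟨p, q, -, -, hpq⟩ :=
    exists_mul_add_mul_eq_C_resultant f g le_rfl le_rfl (Or.inl hdeg)
  rw [← eval₂_C φ w, ← hpq, eval₂_add, eval₂_mul, eval₂_mul, hf, hg, zero_mul, zero_mul, add_zero]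

theorem eq_zero_of_resultant_eq_zero_of_irreducible {R K : Type*} [CommRing R] [Field K]
    [Algebra R K] [FaithfulSMul R K] {f g : R[X]} (hf : Irreducible (f.map (algebraMap R K)))
    (hdeg : g.natDegree < f.natDegree) (hres : resultant f g = 0) : g = 0 := by
  have hinj := FaithfulSMul.algebraMap_injective R K
  have hmap : resultant (f.map (algebraMap R K)) (g.map (algebraMap R K)) = 0 := by
    rw [natDegree_map_eq_of_injective hinj, natDegree_map_eq_of_injective hinj, resultant_map_map,
      hres, map_zero]
  have hdvd : f.map (algebraMap R K) ∣ g.map (algebraMap R K) :=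
    hf.dvd_iff_not_isCoprime.mpr (resultant_eq_zero_iff.mp hmap).2
  rw [← Polynomial.map_eq_zero_iff hinj]
  apply eq_zero_of_dvd_of_natDegree_lt hdvd
  rwa [natDegree_map_eq_of_injective hinj, natDegree_map_eq_of_injective hinj]

end Resultant

section Specialization

variable {F : Type*} [Field F]

theorem pow_ne_C_div_map_C {K : Type*} [Field K] [Algebra F[X][X] K] [IsFractionRing F[X][X] K]
    {g : F[X]} {n : ℕ} (hn : n ≠ 0) {p : F} (hp : ¬ n ∣ g.rootMultiplicity p) (b : K) :
    b ^ n ≠ algebraMap F[X][X] K (C g) / algebraMap F[X][X] K (g.map C) := by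
  classical
  intro hb
  have hg : g ≠ 0 := by rintro rfl; simp at hp
  have hinj := IsFractionRing.injective F[X][X] K
  have hgz : (C g : F[X][X]) ≠ 0 := C_ne_zero.mpr hg
  have hgx : (g.map C : F[X][X]) ≠ 0 := by rwa [Ne, Polynomial.map_eq_zero_iff C_injective]
  have hgz' := (map_ne_zero_iff _ hinj).mpr hgz
  have hgx' := (map_ne_zero_iff _ hinj).mpr hgx
  have hpow : (algebraMap F[X][X] K (C g) / b) ^ n =
      algebraMap F[X][X] K (g.map C * C g ^ (n - 1)) := by
    obtain ⟨m, rfl⟩ := Nat.exists_eq_succ_of_ne_zero hn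
    rw [div_pow, hb, map_mul, map_pow, Nat.succ_sub_one]
    field_simp
    rw [pow_succ']
  -- `F[X][X]` is integrally closed, so the quotient `g(z) / b` is itself a polynomial.
  obtain ⟨β, hβ⟩ := IsIntegrallyClosed.exists_algebraMap_eq_of_isIntegral_pow (R := F[X][X])
    (Nat.pos_of_ne_zero hn) (by rw [hpow]; exact isIntegral_algebraMap)
  rw [← hβ, ← map_pow] at hpow
  have hroots := congrArg (fun f => Multiset.count (C p) (roots f)) (hinj hpow)
  rw [roots_mul (mul_ne_zero hgx (pow_ne_zero _ hgz)), roots_pow, ← C_pow, roots_C, add_zero,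
    Multiset.count_nsmul, count_roots, count_roots] at hroots
  apply hp
  rw [eq_rootMultiplicity_map C_injective p, ← hroots]
  exact dvd_mul_right _ _

/-- The specialization `Φ(x, z) ↦ Φ(X, X ^ R)` of bivariate polynomials, the outer variable of
`F[X][X]` being `x` and the inner one `z`. -/
noncomputable def specialize (R : ℕ) : F[X][X] →+* F[X] :=
  eval₂RingHom (expand F R).toRingHom X

theorem coeff_specialize {R : ℕ} {Φ : F[X][X]} (hΦ : Φ.natDegree < R) (i : ℕ) {j : ℕ}
    (hj : j < R) : (specialize R Φ).coeff (i * R + j) = (Φ.coeff j).coeff i := by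
  have hR : 0 < R := by omega
  rw [specialize, coe_eval₂RingHom, eval₂_eq_sum_range' _ hΦ, finsetSum_coeff,
    sum_eq_single_of_mem j (mem_range.mpr hj)]
  · simp [coeff_mul_X_pow', coeff_expand hR, hR]
  · intro k hk hkj
    simp only [AlgHom.toRingHom_eq_coe, RingHom.coe_coe, coeff_mul_X_pow', coeff_expand hR]
    rw [ite_eq_right_iff, ite_eq_right_iff]
    intro hle hdvd
    have hmod : k ≡ i * R + j [MOD R] := (Nat.modEq_iff_dvd' hle).mpr hdvd
    rw [Nat.ModEq, Nat.mod_eq_of_lt (mem_range.mp hk), Nat.mul_add_mod_of_lt hj] at hmod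
    exact absurd hmod hkj

theorem eq_zero_of_specialize_eq_zero {R : ℕ} {Φ : F[X][X]} (hΦ : Φ.natDegree < R)
    (h : specialize R Φ = 0) : Φ = 0 := by
  ext j i
  rcases lt_or_ge j R with hj | hj
  · rw [← coeff_specialize hΦ i hj, h, coeff_zero, coeff_zero, coeff_zero]
  · rw [coeff_eq_zero_of_natDegree_lt (hΦ.trans_le hj)]; simp

theorem specialize_C (R : ℕ) (f : F[X]) : specialize R (C f) = expand F R f := by
  simp [specialize]

theorem specialize_map_C (R : ℕ) (f : F[X]) : specialize R (f.map C) = f := by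
  have hcomp : (expand F R).toRingHom.comp C = (C : F →+* F[X]) := by ext x; simp
  rw [specialize, coe_eval₂RingHom, eval₂_map, hcomp, eval₂_C_X]

theorem irreducible_map_C_mul_X_pow_sub_C {K : Type*} [Field K] [Algebra F[X][X] K]
    [IsFractionRing F[X][X] K] {d : ℕ} (hd : d ≠ 0) {ζ : F} (hζ : IsPrimitiveRoot ζ d) {g : F[X]}
    (hg : g ≠ 0) (hmult : ∀ n, n ∣ d → (∀ p, n ∣ g.rootMultiplicity p) → n = 1) :
    Irreducible ((C (g.map C) * X ^ d - C (C g)).map (algebraMap F[X][X] K)) := by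
  have hinj := IsFractionRing.injective F[X][X] K
  have hgx : algebraMap F[X][X] K (g.map C) ≠ 0 := by
    rwa [Ne, map_eq_zero_iff _ hinj, Polynomial.map_eq_zero_iff C_injective]
  have hζK : IsPrimitiveRoot (algebraMap F[X][X] K (C (C ζ))) d :=
    hζ.map_of_injective (f := (algebraMap F[X][X] K).comp ((C : F[X] →+* F[X][X]).comp C))
      (hinj.comp (C_injective.comp C_injective))
  have hirr : Irreducible (X ^ d -
      C (algebraMap F[X][X] K (C g) / algebraMap F[X][X] K (g.map C))) := by
    refine irreducible_X_pow_sub_C_of_isPrimitiveRoot hd hζK fun n hnd hn1 => ?_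
    obtain ⟨p, hp⟩ := not_forall.mp (mt (hmult n hnd) hn1)
    exact pow_ne_C_div_map_C (ne_zero_of_dvd_ne_zero hd hnd) hp
  convert (irreducible_isUnit_mul (isUnit_C.mpr hgx.isUnit)).mpr hirr using 1
  rw [mul_sub, ← C_mul, mul_div_cancel₀ _ hgx]
  simp

theorem eval₂_specialize_ne_zero {d c N : ℕ} (hd : d ≠ 0) {ζ : F} (hζ : IsPrimitiveRoot ζ d)
    {g : F[X]} (hg : g ≠ 0) (hmult : ∀ n, n ∣ d → (∀ p, n ∣ g.rootMultiplicity p) → n = 1)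
    (hexpand : expand F (d * c + 1) g = g ^ (d * c + 1))
    {h : F[X][X][X]} (hne : h ≠ 0) (hh : h.natDegree < d) (hN : ∀ i, (h.coeff i).natDegree ≤ N)
    (hdeg : N + g.natDegree ≤ c) :
    h.eval₂ (specialize (d * c + 1)) (g ^ c) ≠ 0 := by
  intro hroot
  set f : F[X][X][X] := C (g.map C) * X ^ d - C (C g)
  have hgx : (g.map C : F[X][X]) ≠ 0 := by rwa [Ne, Polynomial.map_eq_zero_iff C_injective]
  have hfdeg : f.natDegree = d := by
    rw [natDegree_sub_C, natDegree_C_mul_X_pow _ _ hgx]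
  have hfroot : f.eval₂ (specialize (d * c + 1)) (g ^ c) = 0 := by
    simp only [f, eval₂_sub, eval₂_mul, eval₂_C, eval₂_X_pow, specialize_map_C, specialize_C,
      hexpand]
    ring
  have hfN (i : ℕ) : (f.coeff i).natDegree ≤ g.natDegree := by
    simp only [f, coeff_sub, coeff_C_mul, coeff_X_pow, coeff_C]
    refine (natDegree_sub_le _ _).trans (max_le ?_ ?_) <;> split_ifs <;> simp
  refine hne (eq_zero_of_resultant_eq_zero_of_irreducible (K := FractionRing F[X][X])
    (irreducible_map_C_mul_X_pow_sub_C hd hζ hg hmult) (by rwa [hfdeg]) ?_)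
  refine eq_zero_of_specialize_eq_zero (R := d * c + 1) (Nat.lt_succ_of_le ?_)
    (map_resultant_eq_zero_of_eval₂_eq_zero _ hfroot hroot (by rwa [hfdeg]))
  calc (resultant f h).natDegree ≤ f.natDegree * N + h.natDegree * g.natDegree :=
        natDegree_resultant_le hfN hN _ _
    _ ≤ d * N + d * g.natDegree := by rw [hfdeg]; gcongr
    _ = d * (N + g.natDegree) := by ring
    _ ≤ d * c := by gcongr

end Specialization

section Stepanov

variable {F : Type*} [Field F]

theorem exists_ne_zero_sum_C_mul_eq_zero {ι : Type*} [Fintype ι] {D : ℕ} {v : ι → F[X]}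
    (hv : ∀ i, (v i).degree < D) (hD : D < Fintype.card ι) :
    ∃ a : ι → F, a ≠ 0 ∧ ∑ i, C (a i) * v i = 0 := by
  let φ : (ι → F) →ₗ[F] degreeLT F D :=
    Fintype.linearCombination F fun i => ⟨v i, mem_degreeLT.mpr (hv i)⟩
  have hrank : Module.finrank F (degreeLT F D) < Module.finrank F (ι → F) := by
    rwa [(degreeLTEquiv F D).finrank_eq, Module.finrank_fin_fun, Module.finrank_fintype_fun_eq_card]
  obtain ⟨a, ha, ha0⟩ := (Submodule.ne_bot_iff _).mp (LinearMap.ker_ne_bot_of_finrank_lt hrank)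
  have hφa : ((φ a : degreeLT F D) : F[X]) = 0 := by rw [LinearMap.mem_ker.mp ha]; rfl
  exact ⟨a, ha0, by simpa [φ, Fintype.linearCombination_apply, smul_eq_C_mul] using hφa⟩

variable {A B d : ℕ}

/-- The polynomial `∑ a (j, i, k) xʲ zⁱ Wᵏ`, where `W` is the outermost variable of
`F[X][X][X]` and `z` the innermost. -/
noncomputable def trivariate (a : Fin A × Fin B × Fin d → F) : F[X][X][X] :=
  ∑ l, monomial (l.2.2 : ℕ) (monomial (l.1 : ℕ) (monomial (l.2.1 : ℕ) (a l)))

theorem coeff_trivariate (a : Fin A × Fin B × Fin d → F) (l : Fin A × Fin B × Fin d) :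
    (((trivariate a).coeff l.2.2).coeff l.1).coeff l.2.1 = a l := by
  simp only [trivariate, finsetSum_coeff]
  rw [Fintype.sum_eq_single l]
  · simp
  · intro l' hne
    by_contra hcoeff
    have hk : (l'.2.2 : ℕ) = l.2.2 := by
      by_contra h
      simp [coeff_monomial_of_ne _ (Ne.symm h)] at hcoeff
    rw [hk, coeff_monomial_same] at hcoeff
    have hj : (l'.1 : ℕ) = l.1 := by
      by_contra h
      simp [coeff_monomial_of_ne _ (Ne.symm h)] at hcoeff
    rw [hj, coeff_monomial_same] at hcoeff
    have hi : (l'.2.1 : ℕ) = l.2.1 := by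
      by_contra h
      simp [coeff_monomial_of_ne _ (Ne.symm h)] at hcoeff
    exact hne (Prod.ext (Fin.ext hj) (Prod.ext (Fin.ext hi) (Fin.ext hk)))

theorem trivariate_ne_zero {a : Fin A × Fin B × Fin d → F} (ha : a ≠ 0) : trivariate a ≠ 0 := by
  rintro h
  apply ha
  ext l
  simp [← coeff_trivariate a l, h]

theorem natDegree_trivariate_lt (hd : d ≠ 0) (a : Fin A × Fin B × Fin d → F) :
    (trivariate a).natDegree < d := by
  refine (natDegree_sum_le_of_forall_le _ _ (n := d - 1) fun l _ => ?_).trans_lt (by omega)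
  exact (natDegree_monomial_le _).trans (by omega)

theorem natDegree_coeff_trivariate_le (a : Fin A × Fin B × Fin d → F) (k : ℕ) :
    ((trivariate a).coeff k).natDegree ≤ A := by
  rw [trivariate, finsetSum_coeff]
  refine natDegree_sum_le_of_forall_le _ _ fun l _ => ?_
  rw [coeff_monomial]
  split_ifs
  · exact (natDegree_monomial_le _).trans l.1.isLt.le
  · simp

/-- Stepanov's auxiliary polynomial `∑ a (j, i, k) Xʲ X ^ (R i) g ^ (c k)`, to be chosen so that
it vanishes on a prescribed set of points. -/
noncomputable def stepanovPoly (g : F[X]) (R c : ℕ) (a : Fin A × Fin B × Fin d → F) : F[X] :=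
  (trivariate a).eval₂ (specialize R) (g ^ c)

theorem stepanovPoly_eq_sum (g : F[X]) (R c : ℕ) (a : Fin A × Fin B × Fin d → F) :
    stepanovPoly g R c a =
      ∑ l, C (a l) * (X ^ (l.1 : ℕ) * (X ^ R) ^ (l.2.1 : ℕ) * (g ^ c) ^ (l.2.2 : ℕ)) := by
  simp only [stepanovPoly, trivariate, eval₂_finsetSum, eval₂_monomial]
  refine sum_congr rfl fun l _ => ?_
  simp only [specialize, coe_eval₂RingHom, eval₂_monomial, AlgHom.toRingHom_eq_coe,
    RingHom.coe_coe, expand_monomial]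
  rw [← C_mul_X_pow_eq_monomial]
  ring

theorem natDegree_stepanovPoly_le (g : F[X]) (R c : ℕ) (a : Fin A × Fin B × Fin d → F) :
    (stepanovPoly g R c a).natDegree ≤ A + B * R + d * (c * g.natDegree) := by
  rw [stepanovPoly_eq_sum]
  refine natDegree_sum_le_of_forall_le _ _ fun l _ => (natDegree_C_mul_le _ _).trans ?_
  refine natDegree_mul_le.trans (add_le_add (natDegree_mul_le.trans (add_le_add ?_ ?_)) ?_)
  · exact (natDegree_X_pow_le _).trans l.1.isLt.le
  · refine natDegree_pow_le.trans (Nat.mul_le_mul l.2.1.isLt.le ?_)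
    exact natDegree_X_pow_le _
  · exact natDegree_pow_le.trans (Nat.mul_le_mul l.2.2.isLt.le natDegree_pow_le)

/-- At a point with `x ^ R ^ 2 = x` and `g(x) ^ (c (R + 1)) = ζ`, this is the value of
`g ^ ((d - 1) c) * (Xʲ X ^ (R i) g ^ (c k)) ^ R`, written with a degree far below `R ^ 2`. -/
noncomputable def frobeniusReduction (g : F[X]) (R c : ℕ) (ζ : F) (l : Fin A × Fin B × Fin d) :
    F[X] :=
  C (ζ ^ (l.2.2 : ℕ)) * ((X ^ R) ^ (l.1 : ℕ) * X ^ (l.2.1 : ℕ) * (g ^ c) ^ (d - 1 - l.2.2))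

theorem degree_frobeniusReduction_lt {g : F[X]} {R c D : ℕ} (ζ : F)
    (hD : R * A + B + d * (c * g.natDegree) ≤ D + R) (l : Fin A × Fin B × Fin d) :
    (frobeniusReduction g R c ζ l).degree < D := by
  refine (degree_le_of_natDegree_le (n := l.1 * R + l.2.1 + d * (c * g.natDegree)) ?_).trans_lt ?_
  · refine (natDegree_C_mul_le _ _).trans (natDegree_mul_le.trans (add_le_add
      (natDegree_mul_le.trans (add_le_add ?_ (natDegree_X_pow_le _))) ?_))
    · exact natDegree_pow_le.trans (Nat.mul_le_mul_left _ (natDegree_X_pow_le _))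
    · exact natDegree_pow_le.trans (Nat.mul_le_mul (by omega) natDegree_pow_le)
  · rw [Nat.cast_lt]
    have hj : ((l.1 : ℕ) + 1) * R ≤ A * R := Nat.mul_le_mul_right _ l.1.isLt
    have hi := l.2.1.isLt
    linarith

variable {E : Type*} [Field E] [Algebra F E]

theorem aeval_pow_of_expand_eq_pow {R : ℕ} {f : F[X]} (hf : expand F R f = f ^ R) (x : E) :
    aeval (x ^ R) f = aeval x f ^ R := by
  rw [← expand_aeval, hf, map_pow]

theorem aeval_mul_stepanovPoly_pow {g : F[X]} {R c : ℕ} {ζ : F}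
    (hR : ∀ f : F[X], expand F R f = f ^ R) (a : Fin A × Fin B × Fin d → F) {x : E}
    (hx : x ^ R ^ 2 = x) (hζ : aeval x g ^ (c * (R + 1)) = algebraMap F E ζ) :
    aeval x g ^ ((d - 1) * c) * aeval x (stepanovPoly g R c a) ^ R =
      aeval x (∑ l, C (a l) * frobeniusReduction g R c ζ l) := by
  rw [← aeval_pow_of_expand_eq_pow (hR _), stepanovPoly_eq_sum]
  simp only [frobeniusReduction, map_sum, map_mul, map_pow, aeval_C, aeval_X, mul_sum, ← hζ,
    aeval_pow_of_expand_eq_pow (hR g)]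
  refine sum_congr rfl fun l _ => ?_
  have hxR : (x ^ R) ^ R = x := by rw [← pow_mul, ← sq, hx]
  obtain ⟨e, he⟩ : ∃ e, d - 1 = e + l.2.2 := ⟨d - 1 - l.2.2, by omega⟩
  rw [hxR, he, Nat.add_sub_cancel]
  ring

theorem stepanov_dimension_count {A d m : ℕ} (hd : 2 ≤ d) (hA : 3 * m + 8 ≤ A) :
    (A + m) * (d * (A + m) + 1) + (A + m + (4 * m + 8)) < A * ((A + m + (4 * m + 8)) * d) := by
  have hdA : 2 * (8 * A) ≤ d * (8 * A) := Nat.mul_le_mul_right _ hd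
  have hmm : d * (m * m) ≤ d * (3 * m * A) := Nat.mul_le_mul_left _ (by nlinarith)
  linarith

theorem card_le_of_stepanov {g : F[X]} {R c : ℕ} (hd : 2 ≤ d)
    (hRc : R = d * c + 1) (hR : ∀ f : F[X], expand F R f = f ^ R)
    {ζ₀ : F} (hζ₀ : IsPrimitiveRoot ζ₀ d)
    (hg : g ≠ 0) (hmult : ∀ n, n ∣ d → (∀ p, n ∣ g.rootMultiplicity p) → n = 1)
    (hc : 4 * g.natDegree + 8 ≤ c) {ζ : F} (hζ : ζ ≠ 0) {T : Finset E}
    (hT : ∀ x ∈ T, x ^ R ^ 2 = x ∧ aeval x g ^ (c * (R + 1)) = algebraMap F E ζ) :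
    #T ≤ (c + 5 * g.natDegree + 9) * R := by
  obtain ⟨A, hA⟩ : ∃ A, c = A + g.natDegree := ⟨c - g.natDegree, by omega⟩
  set B := c + (4 * g.natDegree + 8) with hB
  obtain ⟨a, ha, hred⟩ : ∃ a : Fin A × Fin B × Fin d → F,
      a ≠ 0 ∧ ∑ l, C (a l) * frobeniusReduction g R c ζ l = 0 := by
    refine exists_ne_zero_sum_C_mul_eq_zero (D := c * R + B)
      (degree_frobeniusReduction_lt ζ ?_) ?_
    · have hdc : d * c * g.natDegree ≤ R * g.natDegree := Nat.mul_le_mul_right _ (by omega)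
      nlinarith [congrArg (· * R) hA]
    · simpa [hRc, hB, hA] using stepanov_dimension_count (m := g.natDegree) hd (by omega)
  set H := stepanovPoly g R c a
  have hH : H ≠ 0 := by
    subst hRc
    exact eval₂_specialize_ne_zero (by omega) hζ₀ hg hmult (hR g) (trivariate_ne_zero ha)
      (natDegree_trivariate_lt (by omega) a) (natDegree_coeff_trivariate_le a) hA.ge
  have hroot (x : E) (hx : x ∈ T) : x ∈ H.aroots E := by
    obtain ⟨hxR, hxζ⟩ := hT x hx
    have hgx : aeval x g ≠ 0 := by
      intro h
      rw [h, zero_pow (Nat.mul_ne_zero (by omega) R.succ_ne_zero), eq_comm, map_eq_zero] at hxζ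
      exact hζ hxζ
    have hmul := aeval_mul_stepanovPoly_pow hR a hxR hxζ
    rw [hred, map_zero, mul_eq_zero] at hmul
    rw [mem_aroots]
    exact ⟨hH, eq_zero_of_pow_eq_zero (hmul.resolve_left (pow_ne_zero _ hgx))⟩
  calc #T ≤ H.natDegree := by
        rw [← natDegree_map (algebraMap F E)]
        exact card_le_degree_of_subset_roots hroot
    _ ≤ A + B * R + d * (c * g.natDegree) := natDegree_stepanovPoly_le g R c a
    _ ≤ R + B * R + R * g.natDegree := by
        rw [← mul_assoc]
        gcongr <;> nlinarith
    _ = (c + 5 * g.natDegree + 9) * R := by rw [hB]; ring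

end Stepanov

section MonicSum

variable {F : Type*} [Field F]

theorem finite_setOf_monic_natDegree_eq (F : Type*) [Field F] [Finite F] (n : ℕ) :
    {f : F[X] | f.Monic ∧ f.natDegree = n}.Finite := by
  have hfin : Finite (degreeLT F (n + 1)) := .of_equiv _ (degreeLTEquiv F (n + 1)).symm.toEquiv
  refine (Set.toFinite (degreeLT F (n + 1) : Set F[X])).subset ?_
  rintro f ⟨-, rfl⟩
  exact mem_degreeLT.mpr (degree_le_natDegree.trans_lt (Nat.cast_lt.mpr f.natDegree.lt_succ_self))

variable [Fintype F]

/-- The monic polynomials of degree `n` over a finite field. -/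
noncomputable def monicsOfDegree (F : Type*) [Field F] [Fintype F] (n : ℕ) : Finset F[X] :=
  (finite_setOf_monic_natDegree_eq F n).toFinset

theorem mem_monicsOfDegree {n : ℕ} {f : F[X]} :
    f ∈ monicsOfDegree F n ↔ f.Monic ∧ f.natDegree = n := by
  simp [monicsOfDegree]

theorem monicsOfDegree_zero : monicsOfDegree F 0 = {1} := by
  ext f
  rw [mem_monicsOfDegree, mem_singleton]
  exact ⟨fun h => h.1.natDegree_eq_zero.mp h.2, by rintro rfl; simp⟩

theorem monicsOfDegree_one :
    monicsOfDegree F 1 = univ.map ⟨fun x : F => X + C x, fun x y h => by simpa using h⟩ := by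
  ext f
  simp only [mem_monicsOfDegree, mem_map, mem_univ, true_and]
  constructor
  · rintro ⟨hmonic, hdeg⟩
    exact ⟨f.coeff 0, (hmonic.eq_X_add_C hdeg).symm⟩
  · rintro ⟨x, rfl⟩
    exact ⟨monic_X_add_C x, natDegree_X_add_C x⟩

theorem add_mem_monicsOfDegree {n : ℕ} {f g : F[X]} (hf : f ∈ monicsOfDegree F n)
    (hg : g.degree < n) : f + g ∈ monicsOfDegree F n := by
  rw [mem_monicsOfDegree] at hf ⊢
  have hlt : g.degree < f.degree := by rwa [degree_eq_natDegree hf.1.ne_zero, hf.2]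
  exact ⟨hf.1.add_of_left hlt, by rw [natDegree_add_eq_left_of_degree_lt hlt, hf.2]⟩

theorem sum_monicsOfDegree_add {M : Type*} [AddCommMonoid M] {n : ℕ} {g : F[X]}
    (hg : g.degree < n) (φ : F[X] → M) :
    ∑ f ∈ monicsOfDegree F n, φ (f + g) = ∑ f ∈ monicsOfDegree F n, φ f :=
  sum_nbij' (· + g) (· - g) (fun _ hf => add_mem_monicsOfDegree hf hg)
    (fun f hf => sub_eq_add_neg f g ▸ add_mem_monicsOfDegree hf (by rwa [degree_neg]))
    (fun _ _ => add_sub_cancel_right _ _) (fun _ _ => sub_add_cancel _ _) (fun _ _ => rfl)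

open Classical in
theorem sum_monicsOfDegree_filter_dvd {M : Type*} [AddCommMonoid M] {n : ℕ} {p : F[X]}
    (hp : p.Monic) (hpn : p.natDegree ≤ n) (φ : F[X] → M) :
    ∑ f ∈ monicsOfDegree F n with p ∣ f, φ f =
      ∑ h ∈ monicsOfDegree F (n - p.natDegree), φ (p * h) := by
  refine (sum_bij (fun h _ => p * h) ?_ ?_ ?_ fun _ _ => rfl).symm
  · intro h hh
    rw [mem_monicsOfDegree] at hh
    rw [mem_filter, mem_monicsOfDegree, hp.natDegree_mul hh.1, hh.2]
    exact ⟨⟨hp.mul hh.1, Nat.add_sub_cancel' hpn⟩, dvd_mul_right _ _⟩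
  · exact fun _ _ _ _ h => mul_left_cancel₀ hp.ne_zero h
  · intro f hf
    rw [mem_filter, mem_monicsOfDegree] at hf
    obtain ⟨⟨hmonic, hdeg⟩, h, rfl⟩ := hf
    have hh : h.Monic := hp.of_mul_monic_left hmonic
    rw [hp.natDegree_mul hh] at hdeg
    exact ⟨h, mem_monicsOfDegree.mpr ⟨hh, by omega⟩, rfl⟩

variable {R : Type*} [CommSemiring R]

/-- The sum of `Λ` over the monic polynomials of degree `n`, that is, the coefficient of `Tⁿ` in
the L-series of `Λ`. -/
noncomputable def monicSum (Λ : F[X] →* R) (n : ℕ) : R :=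
  ∑ f ∈ monicsOfDegree F n, Λ f

theorem monicSum_zero (Λ : F[X] →* R) : monicSum Λ 0 = 1 := by
  rw [monicSum, monicsOfDegree_zero, sum_singleton, map_one]

theorem monicSum_one (Λ : F[X] →* R) : monicSum Λ 1 = ∑ x : F, Λ (X + C x) := by
  rw [monicSum, monicsOfDegree_one, sum_map]
  rfl

end MonicSum

section Points

variable {F E : Type*} [Field F] [Field E]

open Classical in
/-- The elements of `E` lying in the subfield with `q ^ n` elements, `q = #F`. For `n = 0` this is
the junk value `∅`. -/
noncomputable def frobeniusFixedPoints (F E : Type*) [Field F] [Fintype F] [Field E] (n : ℕ) :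
    Finset E :=
  (X ^ Fintype.card F ^ n - X : E[X]).roots.toFinset

theorem mem_frobeniusFixedPoints [Fintype F] {n : ℕ} (hn : n ≠ 0) {x : E} :
    x ∈ frobeniusFixedPoints F E n ↔ x ^ Fintype.card F ^ n = x := by
  classical
  have hne : (X ^ Fintype.card F ^ n - X : E[X]) ≠ 0 :=
    FiniteField.X_pow_card_pow_sub_X_ne_zero E hn Fintype.one_lt_card
  rw [frobeniusFixedPoints, Multiset.mem_toFinset, mem_roots hne]
  simp [sub_eq_zero]

variable [Algebra F E]

/-- The characteristic polynomial over `F` of an element `x` of the field with `q ^ n` elements,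
`q = #F`. -/
noncomputable def frobeniusCharpoly (F : Type*) {E : Type*} [Field F] [Field E] [Algebra F E]
    (n : ℕ) (x : E) : F[X] :=
  minpoly F x ^ (n / (minpoly F x).natDegree)

section Algebraic

variable [Algebra.IsAlgebraic F E]

theorem monic_frobeniusCharpoly (n : ℕ) (x : E) : (frobeniusCharpoly F n x).Monic :=
  (minpoly.monic (Algebra.IsIntegral.isIntegral x)).pow _

theorem rootMultiplicity_map_minpoly [PerfectField F] (x : E) :
    ((minpoly F x).map (algebraMap F E)).rootMultiplicity x = 1 := by
  have hintegral : IsIntegral F x := Algebra.IsIntegral.isIntegral x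
  have hsep : ((minpoly F x).map (algebraMap F E)).Separable :=
    (PerfectField.separable_of_irreducible (minpoly.irreducible hintegral)).map
  refine le_antisymm (rootMultiplicity_le_one_of_separable hsep x) ?_
  rw [Nat.one_le_iff_ne_zero, ← Nat.pos_iff_ne_zero, rootMultiplicity_pos hsep.ne_zero, IsRoot,
    eval_map_algebraMap]
  exact minpoly.aeval F x

theorem minpoly_pow_dvd_iff [PerfectField F] (x : E) {f : F[X]} (hf : f ≠ 0) (i : ℕ) :
    minpoly F x ^ i ∣ f ↔ i ≤ (f.map (algebraMap F E)).rootMultiplicity x := by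
  classical
  have hfin : FiniteMultiplicity (minpoly F x) f := FiniteMultiplicity.of_not_isUnit
    (minpoly.irreducible (Algebra.IsIntegral.isIntegral x)).not_isUnit hf
  rw [hfin.pow_dvd_iff_le_multiplicity]
  suffices (f.map (algebraMap F E)).rootMultiplicity x = multiplicity (minpoly F x) f by rw [this]
  obtain ⟨h, hfh, hndvd⟩ := hfin.exists_eq_pow_mul_and_not_dvd
  have hh : (h.map (algebraMap F E)).rootMultiplicity x = 0 := by
    refine rootMultiplicity_eq_zero ?_
    rw [IsRoot, eval_map_algebraMap]
    exact fun h0 => hndvd (minpoly.dvd F x h0)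
  have hne := (Polynomial.map_ne_zero_iff (algebraMap F E).injective).mpr hf
  conv_lhs => rw [hfh]
  rw [hfh, Polynomial.map_mul, Polynomial.map_pow] at hne
  rw [Polynomial.map_mul, Polynomial.map_pow, rootMultiplicity_mul hne, hh, ← count_roots,
    roots_pow, Multiset.count_nsmul, count_roots, rootMultiplicity_map_minpoly, mul_one, add_zero]

end Algebraic

variable [Fintype F]

theorem pow_card_pow_eq_self_iff {x : E} (hx : IsIntegral F x) (n : ℕ) :
    x ^ Fintype.card F ^ n = x ↔ (minpoly F x).natDegree ∣ n := by
  rw [(minpoly.irreducible hx).natDegree_dvd_iff_dvd_X_pow_card_pow_sub_X,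
    Nat.card_eq_fintype_card, minpoly.dvd_iff]
  simp [sub_eq_zero]

theorem card_frobeniusFixedPoints [IsAlgClosed E] {n : ℕ} (hn : n ≠ 0) :
    #(frobeniusFixedPoints F E n) = Fintype.card F ^ n := by
  classical
  obtain ⟨p, hp⟩ := CharP.exists F
  have : CharP E p := charP_of_injective_algebraMap (algebraMap F E).injective p
  have hsep : (X ^ Fintype.card F ^ n - X : E[X]).Separable :=
    galois_poly_separable p _
      (dvd_pow ((CharP.cast_eq_zero_iff F p _).mp (Nat.cast_card_eq_zero F)) hn)
  rw [frobeniusFixedPoints, Multiset.toFinset_card_of_nodup (nodup_roots hsep),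
    IsAlgClosed.card_roots_eq_natDegree,
    FiniteField.X_pow_card_pow_sub_X_natDegree_eq E hn Fintype.one_lt_card]

variable [Algebra.IsAlgebraic F E]

theorem natDegree_frobeniusCharpoly {n : ℕ} (hn : n ≠ 0) {x : E}
    (hx : x ∈ frobeniusFixedPoints F E n) : (frobeniusCharpoly F n x).natDegree = n := by
  rw [mem_frobeniusFixedPoints hn, pow_card_pow_eq_self_iff (Algebra.IsIntegral.isIntegral x)] at hx
  rw [frobeniusCharpoly, natDegree_pow, Nat.div_mul_cancel hx]

open Classical in
theorem card_frobeniusCharpoly_dvd (x : E) {f : F[X]} (hf : f ≠ 0) :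
    #{j ∈ Icc 1 f.natDegree | x ∈ frobeniusFixedPoints F E j ∧ frobeniusCharpoly F j x ∣ f} =
      (f.map (algebraMap F E)).rootMultiplicity x := by
  have hintegral : IsIntegral F x := Algebra.IsIntegral.isIntegral x
  have hpos : 0 < (minpoly F x).natDegree := minpoly.natDegree_pos hintegral
  have hmultiples : {j ∈ Icc 1 f.natDegree | x ∈ frobeniusFixedPoints F E j ∧
      frobeniusCharpoly F j x ∣ f} = (Icc 1 ((f.map (algebraMap F E)).rootMultiplicity x)).image
        ((minpoly F x).natDegree * ·) := by
    ext j
    rw [mem_filter, mem_image, mem_Icc]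
    constructor
    · rintro ⟨hj, hx, hdvd⟩
      rw [mem_frobeniusFixedPoints (by omega), pow_card_pow_eq_self_iff hintegral] at hx
      obtain ⟨i, rfl⟩ := hx
      rw [frobeniusCharpoly, Nat.mul_div_cancel_left _ hpos, minpoly_pow_dvd_iff x hf] at hdvd
      exact ⟨i, mem_Icc.mpr ⟨Nat.pos_of_mul_pos_left hj.1, hdvd⟩, rfl⟩
    · rintro ⟨i, hi, rfl⟩
      rw [mem_Icc] at hi
      have hdvd := (minpoly_pow_dvd_iff x hf i).mpr hi.2
      have hle := natDegree_le_of_dvd hdvd hf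
      rw [natDegree_pow, mul_comm] at hle
      have hj : 0 < (minpoly F x).natDegree * i := Nat.mul_pos hpos hi.1
      rw [mem_frobeniusFixedPoints hj.ne', pow_card_pow_eq_self_iff hintegral, frobeniusCharpoly,
        Nat.mul_div_cancel_left _ hpos]
      exact ⟨⟨hj, hle⟩, dvd_mul_right _ _, hdvd⟩
  rw [hmultiples, card_image_of_injective _ (mul_right_injective₀ hpos.ne'), Nat.card_Icc,
    Nat.add_sub_cancel]

variable {R : Type*} [CommSemiring R]

/-- The sum of `Λ` over the characteristic polynomials of the elements of the field with `q ^ n`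
elements; `∑ pointSum E Λ n Tⁿ` is `T` times the logarithmic derivative of the L-series of `Λ`. -/
noncomputable def pointSum (E : Type*) [Field E] [Algebra F E] (Λ : F[X] →* R) (n : ℕ) : R :=
  ∑ x ∈ frobeniusFixedPoints F E n, Λ (frobeniusCharpoly F n x)

open Classical in
theorem pointSum_mul_monicSum (Λ : F[X] →* R) {j n : ℕ} (hj : j ∈ Icc 1 n) :
    pointSum E Λ j * monicSum Λ (n - j) = ∑ f ∈ monicsOfDegree F n,
      #{x ∈ frobeniusFixedPoints F E j | frobeniusCharpoly F j x ∣ f} * Λ f := by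
  rw [mem_Icc] at hj
  calc pointSum E Λ j * monicSum Λ (n - j)
      = ∑ x ∈ frobeniusFixedPoints F E j,
          ∑ f ∈ monicsOfDegree F n with frobeniusCharpoly F j x ∣ f, Λ f := by
        rw [pointSum, sum_mul]
        refine sum_congr rfl fun x hx => ?_
        have hdeg := natDegree_frobeniusCharpoly (by omega) hx
        rw [sum_monicsOfDegree_filter_dvd (monic_frobeniusCharpoly j x) (by omega), hdeg,
          monicSum, mul_sum]
        simp only [map_mul]
    _ = _ := by
        simp only [sum_filter]
        rw [sum_comm]
        simp only [← sum_filter, sum_const, nsmul_eq_mul]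

variable [IsAlgClosed E]

open Classical in
theorem sum_card_frobeniusCharpoly_dvd {f : F[X]} (hf : f ≠ 0) :
    ∑ j ∈ Icc 1 f.natDegree, #{x ∈ frobeniusFixedPoints F E j | frobeniusCharpoly F j x ∣ f} =
      f.natDegree := by
  have hroots (j : ℕ) (hj : j ∈ Icc 1 f.natDegree) :
      {x ∈ frobeniusFixedPoints F E j | frobeniusCharpoly F j x ∣ f} = {x ∈ (f.aroots E).toFinset |
        x ∈ frobeniusFixedPoints F E j ∧ frobeniusCharpoly F j x ∣ f} := by
    ext x
    simp only [mem_filter, Multiset.mem_toFinset, iff_and_self]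
    rintro ⟨hx, hdvd⟩
    rw [← Multiset.count_pos, aroots, count_roots, ← card_frobeniusCharpoly_dvd x hf, card_pos]
    exact ⟨j, mem_filter.mpr ⟨hj, hx, hdvd⟩⟩
  calc ∑ j ∈ Icc 1 f.natDegree, #{x ∈ frobeniusFixedPoints F E j | frobeniusCharpoly F j x ∣ f}
      = ∑ x ∈ (f.aroots E).toFinset, #{j ∈ Icc 1 f.natDegree |
          x ∈ frobeniusFixedPoints F E j ∧ frobeniusCharpoly F j x ∣ f} := by
        rw [sum_congr rfl fun j hj => by rw [hroots j hj]]
        exact sum_card_bipartiteAbove_eq_sum_card_bipartiteBelow _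
    _ = ∑ x ∈ (f.aroots E).toFinset, (f.aroots E).count x :=
        sum_congr rfl fun x _ => by rw [card_frobeniusCharpoly_dvd x hf, aroots, count_roots]
    _ = f.natDegree := by
        rw [Multiset.toFinset_sum_count_eq, aroots, IsAlgClosed.card_roots_eq_natDegree,
          natDegree_map]

theorem natCast_mul_monicSum (Λ : F[X] →* R) (n : ℕ) :
    n * monicSum Λ n = ∑ j ∈ Icc 1 n, pointSum E Λ j * monicSum Λ (n - j) := by
  classical
  rw [sum_congr rfl fun j hj => pointSum_mul_monicSum Λ hj, sum_comm, monicSum, mul_sum]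
  refine sum_congr rfl fun f hf => ?_
  obtain ⟨hmonic, rfl⟩ := mem_monicsOfDegree.mp hf
  rw [← sum_mul, ← Nat.cast_sum, sum_card_frobeniusCharpoly_dvd hmonic.ne_zero]

end Points

section EvalChar

variable {F : Type*} [Field F]

/-- The multiplicative function `f ↦ ∏ p ∈ s, ψ p (f p)` on polynomials attached to a family of
characters `ψ p`. -/
noncomputable def evalChar (s : Finset F) (ψ : F → F →* ℂ) : F[X] →* ℂ :=
  ∏ p ∈ s, (ψ p).comp (evalRingHom p)

theorem evalChar_apply (s : Finset F) (ψ : F → F →* ℂ) (f : F[X]) :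
    evalChar s ψ f = ∏ p ∈ s, ψ p (f.eval p) := by
  simp [evalChar]

variable [Fintype F]

theorem sum_eq_zero_of_apply_unit_ne_one {ψ : F →* ℂ} (hψ : ∃ u : Fˣ, ψ u ≠ 1) :
    ∑ a, ψ a = 0 := by
  obtain ⟨u, hu⟩ := hψ
  refine eq_zero_of_mul_eq_self_left hu ?_
  simp only [mul_sum, ← map_mul]
  exact Fintype.sum_equiv (Units.mulLeft u) _ _ fun _ => rfl

theorem sum_affine_eq_zero {ψ : F →* ℂ} (hψ : ∃ u : Fˣ, ψ u ≠ 1) (b : F) {h : F} (hh : h ≠ 0) :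
    ∑ a, ψ (b + a * h) = 0 := by
  rw [← sum_eq_zero_of_apply_unit_ne_one hψ]
  exact Fintype.sum_equiv ((Units.mulRight (Units.mk0 h hh)).trans (Equiv.addLeft b)) _ _
    fun _ => rfl

theorem monicSum_evalChar_one (s : Finset F) (ψ : F → F →* ℂ) :
    monicSum (evalChar s ψ) 1 = ∑ x, ∏ p ∈ s, ψ p (p + x) := by
  simp [monicSum_one, evalChar_apply]

-- Translating by multiples of a polynomial that vanishes on `s` except at `c` averages the factor
-- of `evalChar s ψ` at `c` over all of `F`.
theorem monicSum_evalChar_eq_zero {s : Finset F} {ψ : F → F →* ℂ} {c : F} (hc : c ∈ s)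
    (hψ : ∃ u : Fˣ, ψ c u ≠ 1) {n : ℕ} (hn : #s ≤ n) : monicSum (evalChar s ψ) n = 0 := by
  classical
  let h : F[X] := ∏ p ∈ s.erase c, (X - C p)
  have hdeg (a : F) : (C a * h).degree < n := by
    have hcard : h.natDegree = #(s.erase c) := natDegree_finsetProd_X_sub_C_eq_card _ _
    refine degree_le_natDegree.trans_lt (Nat.cast_lt.mpr ((natDegree_C_mul_le a h).trans_lt ?_))
    exact hcard ▸ (card_erase_lt_of_mem hc).trans_le hn
  have hhc : h.eval c ≠ 0 := by
    rw [eval_prod, prod_ne_zero_iff]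
    intro p hp
    simpa [sub_eq_zero] using (ne_of_mem_erase hp).symm
  have hhp (p : F) (hp : p ∈ s.erase c) : h.eval p = 0 := by
    rw [eval_prod]
    exact prod_eq_zero hp (by simp)
  have hfactor (f : F[X]) (a : F) : evalChar s ψ (f + C a * h) =
      ψ c (f.eval c + a * h.eval c) * ∏ p ∈ s.erase c, ψ p (f.eval p) := by
    rw [evalChar_apply, ← mul_prod_erase s _ hc]
    congr 1
    · simp
    · exact prod_congr rfl fun p hp => by simp [hhp p hp]
  have haverage : Fintype.card F * monicSum (evalChar s ψ) n = 0 :=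
    calc Fintype.card F * monicSum (evalChar s ψ) n
        = ∑ a : F, ∑ f ∈ monicsOfDegree F n, evalChar s ψ (f + C a * h) := by
          simp only [sum_monicsOfDegree_add (hdeg _), sum_const, card_univ, nsmul_eq_mul, monicSum]
      _ = ∑ f ∈ monicsOfDegree F n, (∑ a, ψ c (f.eval c + a * h.eval c)) *
            ∏ p ∈ s.erase c, ψ p (f.eval p) := by
          rw [sum_comm]
          simp only [hfactor, sum_mul]
      _ = 0 := sum_eq_zero fun f _ => by rw [sum_affine_eq_zero hψ _ hhc, zero_mul]
  exact (mul_eq_zero.mp haverage).resolve_left (by simp)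

end EvalChar

section PowerSums

theorem sum_coeff_mul_sum_pow (G : ℂ[X]) (T : Finset ℂ) (w : ℂ → ℂ) (k : ℕ) :
    ∑ l ∈ range (G.natDegree + 1), G.coeff l * ∑ y ∈ T, w y * y ^ (k + l) =
      ∑ y ∈ T, w y * G.eval y * y ^ k := by
  simp_rw [mul_sum, eval_eq_sum_range, mul_sum, sum_mul]
  rw [sum_comm]
  exact sum_congr rfl fun y _ => sum_congr rfl fun l _ => by ring

-- The combination of shifted power sums with the coefficients of a polynomial that vanishes on
-- `T` except at `z` isolates the term `w z * z ^ k`.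
theorem norm_le_of_norm_sum_pow_le {T : Finset ℂ} {w : ℂ → ℂ} {B K : ℝ} (hB : 0 < B) {k₀ : ℕ}
    (hsum : ∀ k ≥ k₀, ‖∑ y ∈ T, w y * y ^ k‖ ≤ K * B ^ k) {z : ℂ} (hz : z ∈ T) (hw : w z ≠ 0) :
    ‖z‖ ≤ B := by
  by_contra! hlt
  let G : ℂ[X] := ∏ y ∈ T.erase z, (X - C y)
  have hGz : G.eval z ≠ 0 := by
    rw [eval_prod, prod_ne_zero_iff]
    intro y hy
    simpa [sub_eq_zero] using (ne_of_mem_erase hy).symm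
  have hisolate (k : ℕ) : ∑ l ∈ range (G.natDegree + 1), G.coeff l * ∑ y ∈ T, w y * y ^ (k + l) =
      w z * G.eval z * z ^ k := by
    rw [sum_coeff_mul_sum_pow]
    refine sum_eq_single_of_mem z hz fun y hy hyz => ?_
    rw [eval_prod, prod_eq_zero (mem_erase.mpr ⟨hyz, hy⟩) (by simp), mul_zero, zero_mul]
  let M : ℝ := ∑ l ∈ range (G.natDegree + 1), ‖G.coeff l‖ * (K * B ^ l)
  have hbound (k : ℕ) (hk : k₀ ≤ k) : ‖w z * G.eval z‖ * ‖z‖ ^ k ≤ M * B ^ k := by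
    rw [← norm_pow, ← norm_mul, ← hisolate k, sum_mul]
    refine (norm_sum_le _ _).trans (sum_le_sum fun l _ => ?_)
    calc ‖G.coeff l * ∑ y ∈ T, w y * y ^ (k + l)‖
        ≤ ‖G.coeff l‖ * (K * B ^ (k + l)) := by
          rw [norm_mul]
          gcongr
          exact hsum (k + l) (by omega)
      _ = ‖G.coeff l‖ * (K * B ^ l) * B ^ k := by ring
  have hpos : 0 < ‖w z * G.eval z‖ := norm_pos_iff.mpr (mul_ne_zero hw hGz)
  obtain ⟨k, hgt, hk⟩ := ((tendsto_pow_atTop_atTop_of_one_lt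
    ((one_lt_div hB).mpr hlt)).eventually_gt_atTop (M / ‖w z * G.eval z‖)).and
    (Filter.eventually_ge_atTop k₀) |>.exists
  rw [div_pow, div_lt_div_iff₀ hpos (by positivity)] at hgt
  linarith [hbound k hk, mul_comm ‖w z * G.eval z‖ (‖z‖ ^ k)]

theorem norm_le_of_norm_multiset_sum_pow_le {Y : Multiset ℂ} {B K : ℝ} (hB : 0 < B) {k₀ : ℕ}
    (hsum : ∀ k ≥ k₀, ‖(Y.map (· ^ k)).sum‖ ≤ K * B ^ k) {z : ℂ} (hz : z ∈ Y) : ‖z‖ ≤ B := by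
  classical
  have hcount (k : ℕ) (hk : k ≥ k₀) :
      ‖∑ y ∈ Y.toFinset, (Y.count y : ℂ) * y ^ k‖ ≤ K * B ^ k := by
    simpa [sum_multiset_map_count] using hsum k hk
  exact norm_le_of_norm_sum_pow_le hB hcount (Multiset.mem_toFinset.mpr hz) (by simpa using hz)

end PowerSums

section LogDeriv

theorem one_sub_C_mul_X_mul_mk_pow {R : Type*} [CommRing R] (a : R) :
    (1 - PowerSeries.C a * PowerSeries.X) * PowerSeries.mk (fun n => a ^ (n + 1)) =
      PowerSeries.C a := by
  ext n
  rw [sub_mul, one_mul, map_sub, mul_assoc, PowerSeries.coeff_C_mul]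
  cases n with
  | zero => simp
  | succ n => simp [PowerSeries.coeff_succ_X_mul, pow_succ' a (n + 1)]

theorem derivative_prod_one_sub_C_mul_X {R : Type*} [CommRing R] (ω : Multiset R) :
    PowerSeries.derivative R (ω.map fun w => 1 - PowerSeries.C w * PowerSeries.X).prod =
      (ω.map fun w => 1 - PowerSeries.C w * PowerSeries.X).prod *
        PowerSeries.mk fun n => -(ω.map (· ^ (n + 1))).sum := by
  induction ω using Multiset.induction with
  | empty =>
    ext n
    simp
  | cons a ω ih =>
    have hsplit : (PowerSeries.mk fun n => -((a ::ₘ ω).map (· ^ (n + 1))).sum) =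
        (PowerSeries.mk fun n => -(ω.map (· ^ (n + 1))).sum) -
          PowerSeries.mk fun n => a ^ (n + 1) := by
      ext n
      simp [sub_eq_add_neg, add_comm]
    have hderiv : PowerSeries.derivative R (1 - PowerSeries.C a * PowerSeries.X) =
        -PowerSeries.C a := by
      ext n
      simp [PowerSeries.coeff_C]
    rw [hsplit, Multiset.map_cons, Multiset.prod_cons, Derivation.leibniz, ih, hderiv]
    simp only [smul_eq_mul]
    linear_combination (ω.map fun w => 1 - PowerSeries.C w * PowerSeries.X).prod *
      one_sub_C_mul_X_mul_mk_pow a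

end LogDeriv

theorem exists_multiset_eq_prod_one_sub {k : Type*} [Field k] [IsAlgClosed k] {P : k[X]}
    (hP : P.coeff 0 = 1) :
    ∃ ω : Multiset k, ω.card = P.natDegree ∧ P = (ω.map fun w => 1 - C w * X).prod := by
  refine ⟨P.roots.map (·⁻¹), by rw [Multiset.card_map, IsAlgClosed.card_roots_eq_natDegree], ?_⟩
  have hroot (a : k) (ha : a ∈ P.roots) : a ≠ 0 := by
    rintro rfl
    have := (mem_roots'.mp ha).2
    rw [IsRoot, ← coeff_zero_eq_eval_zero, hP] at this
    exact one_ne_zero this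
  have hprod : (P.roots.map fun a => X - C a).prod = C (P.roots.map fun a => -a).prod *
      ((P.roots.map (·⁻¹)).map fun w => 1 - C w * X).prod := by
    rw [map_multiset_prod, Multiset.map_map, Multiset.map_map, ← Multiset.prod_map_mul]
    refine congrArg _ (Multiset.map_congr rfl fun a ha => ?_)
    have hinv : C a * C a⁻¹ = (1 : k[X]) := by rw [← C_mul, mul_inv_cancel₀ (hroot a ha), C_1]
    simp only [Function.comp, C_neg]
    linear_combination (-X : k[X]) * hinv
  have hfactor := (IsAlgClosed.splits P).eq_prod_roots
  rw [hprod, ← mul_assoc, ← C_mul] at hfactor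
  have hconst : P.leadingCoeff * (P.roots.map fun a => -a).prod = 1 := by
    have heval := congrArg (eval 0) hfactor
    rw [← coeff_zero_eq_eval_zero, hP] at heval
    simpa [eval_multiset_prod] using heval.symm
  rwa [hconst, C_1, one_mul] at hfactor

section Recursion

variable {L S : ℕ → ℂ}

theorem derivative_mk_eq_mul_mk (hrec : ∀ n : ℕ, n * L n = ∑ j ∈ Icc 1 n, S j * L (n - j)) :
    PowerSeries.derivative ℂ (PowerSeries.mk L) =
      PowerSeries.mk L * PowerSeries.mk fun n => S (n + 1) := by
  ext n
  have hsucc := hrec (n + 1)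
  rw [← Ico_add_one_right_eq_Icc, sum_Ico_eq_sum_range] at hsucc
  rw [PowerSeries.coeff_derivative, mul_comm (PowerSeries.mk L), PowerSeries.coeff_mul,
    Nat.sum_antidiagonal_eq_sum_range_succ_mk, PowerSeries.coeff_mk, mul_comm]
  push_cast at hsucc
  rw [hsucc]
  refine sum_congr (by simp) fun i _ => ?_
  rw [PowerSeries.coeff_mk, PowerSeries.coeff_mk, add_comm 1 i, Nat.add_sub_add_right]

theorem exists_multiset_eq_neg_sum_pow {m : ℕ} (hL₀ : L 0 = 1) (hL : ∀ n ≥ m, L n = 0)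
    (hrec : ∀ n : ℕ, n * L n = ∑ j ∈ Icc 1 n, S j * L (n - j)) :
    ∃ ω : Multiset ℂ, ω.card < m ∧ ∀ n, S (n + 1) = -(ω.map (· ^ (n + 1))).sum := by
  have hm : 0 < m := by
    by_contra! hm
    exact one_ne_zero (hL₀.symm.trans (hL 0 hm))
  let P : ℂ[X] := PowerSeries.trunc m (PowerSeries.mk L)
  have hcoe : (P : PowerSeries ℂ) = PowerSeries.mk L := by
    ext n
    rw [Polynomial.coeff_coe, PowerSeries.coeff_trunc, PowerSeries.coeff_mk]
    split_ifs with hn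
    · rfl
    · exact (hL n (not_lt.mp hn)).symm
  obtain ⟨ω, hcard, hprod⟩ := exists_multiset_eq_prod_one_sub (P := P)
    (by rw [← Polynomial.coeff_coe, hcoe, PowerSeries.coeff_mk, hL₀])
  refine ⟨ω, hcard.trans_lt ?_, fun n => ?_⟩
  · obtain ⟨m, rfl⟩ := Nat.exists_eq_add_one.mpr hm
    exact PowerSeries.natDegree_trunc_lt _ m
  have hmk : PowerSeries.mk L =
      (ω.map fun w => 1 - PowerSeries.C w * PowerSeries.X).prod := by
    rw [← hcoe, hprod, ← coeToPowerSeries.ringHom_apply, map_multiset_prod, Multiset.map_map]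
    simp [Function.comp_def]
  have hne : PowerSeries.mk L ≠ 0 := fun h => by
    simpa [hL₀] using congrArg (PowerSeries.coeff 0) h
  have hcancel := mul_left_cancel₀ hne <| (derivative_mk_eq_mul_mk hrec).symm.trans <| by
    simpa only [← hmk] using derivative_prod_one_sub_C_mul_X ω
  simpa using congrArg (PowerSeries.coeff n) hcancel

theorem norm_le_mul_sqrt_of_recursion {m : ℕ} (hL₀ : L 0 = 1) (hL : ∀ n ≥ m, L n = 0)
    (hrec : ∀ n : ℕ, n * L n = ∑ j ∈ Icc 1 n, S j * L (n - j)) {q K : ℝ} (hq : 0 < q) {k₀ : ℕ}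
    (hS : ∀ k ≥ k₀, ‖S (2 * k)‖ ≤ K * q ^ k) : ‖L 1‖ ≤ (m - 1) * √q := by
  obtain ⟨ω, hcard, hSω⟩ := exists_multiset_eq_neg_sum_pow hL₀ hL hrec
  have hsq (k : ℕ) (hk : k ≥ k₀ + 1) : ‖((ω.map (· ^ 2)).map (· ^ k)).sum‖ ≤ K * q ^ k := by
    have hSk := hS k (by omega)
    rw [show 2 * k = 2 * k - 1 + 1 by omega, hSω, norm_neg,
      show 2 * k - 1 + 1 = 2 * k by omega] at hSk
    simpa only [Multiset.map_map, Function.comp_def, ← pow_mul] using hSk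
  have hω (w : ℂ) (hw : w ∈ ω) : ‖w‖ ≤ √q := by
    refine Real.le_sqrt_of_sq_le ?_
    rw [← norm_pow]
    exact norm_le_of_norm_multiset_sum_pow_le hq hsq (Multiset.mem_map_of_mem _ hw)
  have hL₁ : L 1 = -ω.sum := by
    simpa [hL₀, hSω 0] using hrec 1
  have hcard' : (ω.card : ℝ) ≤ m - 1 := by
    rw [le_sub_iff_add_le]
    exact_mod_cast hcard
  calc ‖L 1‖ = ‖ω.sum‖ := by rw [hL₁, norm_neg]
    _ ≤ (ω.map fun w => ‖w‖).sum := norm_multiset_sum_le ω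
    _ ≤ ω.card * √q := by
      simpa using Multiset.sum_le_card_nsmul (ω.map fun w => ‖w‖) (√q) (by simpa using hω)
    _ ≤ (m - 1) * √q := by gcongr

end Recursion

section Counting

theorem sum_nthRootsFinset_one_eq_zero {d : ℕ} (hd : 2 ≤ d) :
    ∑ ω ∈ nthRootsFinset d (1 : ℂ), ω = 0 := by
  have hζ : IsPrimitiveRoot (Complex.exp (2 * Real.pi * Complex.I / d)) d :=
    Complex.isPrimitiveRoot_exp d (by omega)
  set ζ := Complex.exp (2 * Real.pi * Complex.I / d)
  have hζ₀ : ζ ≠ 0 := hζ.ne_zero (by omega)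
  refine eq_zero_of_mul_eq_self_left (hζ.ne_one hd) ?_
  rw [mul_sum]
  refine sum_nbij' (ζ * ·) (ζ⁻¹ * ·) ?_ ?_ ?_ ?_ fun _ _ => rfl <;>
    simp +contextual [mem_nthRootsFinset (show 0 < d by omega), mul_pow, hζ.pow_eq_one, hζ₀]

-- As the `d`-th roots of unity sum to zero, the multiplicity of each may be replaced by its
-- defect from `M`.
theorem norm_sum_le_of_card_fiber_le {ι : Type*} {T : Finset ι} {w : ι → ℂ} {d M N : ℕ}
    (hd : 2 ≤ d) (hw : ∀ x ∈ T, w x = 0 ∨ w x ^ d = 1)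
    (hM : ∀ ω ≠ 0, #{x ∈ T | w x = ω} ≤ M) (hN : #{x ∈ T | w x = 0} ≤ N) :
    ‖∑ x ∈ T, w x‖ ≤ d * M + N - #T := by
  set μ := nthRootsFinset d (1 : ℂ)
  have hmem {ω : ℂ} : ω ∈ μ ↔ ω ^ d = 1 := mem_nthRootsFinset (by omega) 1
  have hzero : (0 : ℂ) ∉ μ := by simp [hmem, zero_pow (show d ≠ 0 by omega)]
  have hcardμ : #μ = d := (Complex.isPrimitiveRoot_exp d (by omega)).card_nthRootsFinset
  have hmaps (x : ι) (hx : x ∈ T) : w x ∈ insert 0 μ := by simpa [hmem] using hw x hx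
  have hcardT : (#T : ℝ) = #{x ∈ T | w x = 0} + ∑ ω ∈ μ, (#{x ∈ T | w x = ω} : ℝ) := by
    rw [card_eq_sum_card_fiberwise (f := w) (t := insert 0 μ) hmaps, sum_insert hzero]
    push_cast
    rfl
  have hsum : ∑ x ∈ T, w x = -∑ ω ∈ μ, (M - #{x ∈ T | w x = ω}) * ω := by
    have hroots : ∑ ω ∈ μ, (M : ℂ) * ω = 0 := by
      rw [← mul_sum, sum_nthRootsFinset_one_eq_zero hd, mul_zero]
    rw [← sum_fiberwise_of_maps_to' hmaps fun ω => ω, sum_insert hzero]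
    simp [sub_mul, hroots]
  have hterm (ω : ℂ) (hω : ω ∈ μ) :
      ‖(M - #{x ∈ T | w x = ω} : ℂ) * ω‖ = M - #{x ∈ T | w x = ω} := by
    have hle := hM ω (by rintro rfl; exact hzero hω)
    rw [norm_mul, Complex.norm_eq_one_of_pow_eq_one (hmem.mp hω) (by omega), mul_one,
      ← Nat.cast_sub hle, Complex.norm_natCast, Nat.cast_sub hle]
  calc ‖∑ x ∈ T, w x‖ ≤ ∑ ω ∈ μ, ((M : ℝ) - #{x ∈ T | w x = ω}) := by
        rw [hsum, norm_neg, ← sum_congr rfl hterm]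
        exact norm_sum_le _ _
    _ = d * M + #{x ∈ T | w x = 0} - #T := by
        rw [sum_sub_distrib, sum_const, hcardμ, nsmul_eq_mul, hcardT]
        ring
    _ ≤ d * M + N - #T := by gcongr

end Counting

section Characters

variable {F : Type*} [Field F] [Fintype F]

theorem expand_card_pow (f : F[X]) (k : ℕ) :
    expand F (Fintype.card F ^ k) f = f ^ Fintype.card F ^ k := by
  induction k with
  | zero => simp
  | succ k ih =>
    rw [pow_succ, mul_comm, expand_mul, ih, map_pow, FiniteField.expand_card, ← pow_mul]

theorem card_sub_one_ne_zero (F : Type*) [Fintype F] [Nontrivial F] : Fintype.card F - 1 ≠ 0 :=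
  Nat.sub_ne_zero_of_lt Fintype.one_lt_card

theorem exists_isPrimitiveRoot_mulChar (F : Type*) [Field F] [Fintype F] :
    ∃ (g : F) (χ : MulChar F ℂ), IsPrimitiveRoot g (Fintype.card F - 1) ∧
      IsPrimitiveRoot (χ g) (Fintype.card F - 1) := by
  classical
  obtain ⟨u, hu⟩ := IsCyclic.exists_generator (α := Fˣ)
  have hprim : IsPrimitiveRoot u (Fintype.card F - 1) := by
    rw [← Fintype.card_units, ← Nat.card_eq_fintype_card,
      ← orderOf_eq_card_of_forall_mem_zpowers hu]
    exact IsPrimitiveRoot.orderOf u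
  have hζ := (Complex.isPrimitiveRoot_exp _ (card_sub_one_ne_zero F)).isUnit_unit
    (card_sub_one_ne_zero F)
  refine ⟨u, .ofRootOfUnity (M := F) (by simpa [Fintype.card_units] using hζ.pow_eq_one) hu,
    IsPrimitiveRoot.coe_units_iff.mpr hprim, ?_⟩
  rw [MulChar.ofRootOfUnity_spec]
  exact IsPrimitiveRoot.coe_units_iff.mpr hζ

section PrimitiveRoot

variable {g : F} {χ : MulChar F ℂ}

theorem exists_lt_pow_eq_of_ne_zero (hg : IsPrimitiveRoot g (Fintype.card F - 1)) {x : F}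
    (hx : x ≠ 0) : ∃ i < Fintype.card F - 1, g ^ i = x :=
  have : NeZero (Fintype.card F - 1) := ⟨card_sub_one_ne_zero F⟩
  hg.eq_pow_of_pow_eq_one (FiniteField.pow_card_sub_one_eq_one x hx)

theorem mulChar_injective_of_isPrimitiveRoot (hg : IsPrimitiveRoot g (Fintype.card F - 1))
    (hχ : IsPrimitiveRoot (χ g) (Fintype.card F - 1)) : Function.Injective χ := by
  have hzero {x : F} (hx : χ x = 0) : x = 0 := by
    by_contra hne
    exact ((IsUnit.mk0 x hne).map χ).ne_zero hx
  intro x y hxy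
  rcases eq_or_ne y 0 with rfl | hy
  · exact hzero (hxy.trans (MulChar.map_zero χ))
  rcases eq_or_ne x 0 with rfl | hx
  · exact (hzero (hxy.symm.trans (MulChar.map_zero χ))).symm
  obtain ⟨i, hi, rfl⟩ := exists_lt_pow_eq_of_ne_zero hg hx
  obtain ⟨j, hj, rfl⟩ := exists_lt_pow_eq_of_ne_zero hg hy
  rw [map_pow, map_pow] at hxy
  rw [hχ.pow_inj hi hj hxy]

theorem exists_eq_mulChar_pow (hg : IsPrimitiveRoot g (Fintype.card F - 1))
    (hχ : IsPrimitiveRoot (χ g) (Fintype.card F - 1)) (ψ : F →* ℂ) :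
    ∃ e : ℕ, ∀ x, ψ x = χ x ^ e := by
  have : NeZero (Fintype.card F - 1) := ⟨card_sub_one_ne_zero F⟩
  by_cases hψ : ψ 0 = 1
  · exact ⟨0, fun x => by rw [pow_zero, ← hψ, ← one_mul (ψ x), ← hψ, ← map_mul, zero_mul]⟩
  have hψ₀ : ψ 0 = 0 := by
    by_contra hne
    exact hψ (mul_left_cancel₀ hne (by rw [← map_mul, mul_zero, mul_one]))
  have hψg : ψ g ^ (Fintype.card F - 1) = 1 := by rw [← map_pow, hg.pow_eq_one, map_one]
  obtain ⟨i, -, hi⟩ := hχ.eq_pow_of_pow_eq_one hψg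
  -- Adding `q - 1` makes the exponent positive, so that both sides vanish at `0`.
  refine ⟨i + (Fintype.card F - 1), fun x => ?_⟩
  rcases eq_or_ne x 0 with rfl | hx
  · rw [hψ₀, MulChar.map_zero, zero_pow (by have := card_sub_one_ne_zero F; omega)]
  obtain ⟨j, -, rfl⟩ := exists_lt_pow_eq_of_ne_zero hg hx
  rw [map_pow, map_pow, ← pow_mul, mul_comm j, add_mul, pow_add, pow_mul, pow_mul, hχ.pow_eq_one,
    one_pow, mul_one, hi]

end PrimitiveRoot

end Characters

section RootProd

variable {F E : Type*} [Field F] [Field E] [Algebra F E]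

/-- The product `∏ p ∈ s, (p - X) ^ e p` of powers of linear factors. -/
noncomputable def rootProd (s : Finset F) (e : F → ℕ) : F[X] :=
  ∏ p ∈ s, (C p - X) ^ e p

theorem rootProd_ne_zero (s : Finset F) (e : F → ℕ) : rootProd s e ≠ 0 :=
  prod_ne_zero_iff.mpr fun p _ =>
    pow_ne_zero _ (neg_sub X (C p) ▸ neg_ne_zero.mpr (X_sub_C_ne_zero p))

theorem rootMultiplicity_rootProd {s : Finset F} (e : F → ℕ) {c : F}
    (hc : c ∈ s) : (rootProd s e).rootMultiplicity c = e c := by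
  classical
  have hrest : ¬ (C ((-1) ^ e c) * rootProd (s.erase c) e).IsRoot c := by
    rw [IsRoot, rootProd, eval_mul, eval_C, eval_prod]
    refine mul_ne_zero (by simp) (prod_ne_zero_iff.mpr fun p hp => ?_)
    simpa using fun h => (sub_ne_zero.mpr (ne_of_mem_erase hp) h).elim
  have hsplit : rootProd s e = (C ((-1) ^ e c) * rootProd (s.erase c) e) * (X - C c) ^ e c := by
    rw [rootProd, ← mul_prod_erase s _ hc, ← neg_sub X (C c), neg_pow, rootProd]
    simp only [map_pow, map_neg, map_one]
    ring
  rw [hsplit, rootMultiplicity_mul (hsplit ▸ rootProd_ne_zero s e), rootMultiplicity_eq_zero hrest,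
    rootMultiplicity_X_sub_C_pow, zero_add]

theorem mem_image_of_aeval_rootProd_eq_zero [DecidableEq E] {s : Finset F} {e : F → ℕ} {x : E}
    (hx : aeval x (rootProd s e) = 0) : x ∈ s.image (algebraMap F E) := by
  rw [rootProd, map_prod, prod_eq_zero_iff] at hx
  obtain ⟨p, hp, hpx⟩ := hx
  rw [map_pow, map_sub, aeval_C, aeval_X] at hpx
  exact mem_image.mpr ⟨p, hp, sub_eq_zero.mp (eq_zero_of_pow_eq_zero hpx)⟩

end RootProd

section StepanovCharSum

variable {F E : Type*} [Field F] [Field E] [Algebra F E]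

theorem aeval_pow_eq_one_or_eq_zero {g : F[X]} {R c d : ℕ} (hRc : R = d * c + 1)
    (hR : ∀ f : F[X], expand F R f = f ^ R) {x : E} (hx : x ^ R ^ 2 = x) :
    aeval x g = 0 ∨ (aeval x g ^ (c * (R + 1))) ^ d = 1 := by
  have hfix : (aeval x g ^ (c * (R + 1))) ^ d * aeval x g = aeval x g :=
    calc (aeval x g ^ (c * (R + 1))) ^ d * aeval x g = (aeval x g ^ R) ^ R := by
          rw [← pow_mul, ← pow_succ, ← pow_mul]
          congr 1
          rw [hRc]
          ring
      _ = aeval x g := by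
          rw [← aeval_pow_of_expand_eq_pow (hR g), ← aeval_pow_of_expand_eq_pow (hR g), ← pow_mul,
            ← sq, hx]
  exact or_iff_not_imp_left.mpr fun hne => mul_eq_right₀ hne |>.mp hfix

theorem norm_sum_mulChar_le_of_stepanov [DecidableEq F] {χ : MulChar F ℂ}
    (hχ : Function.Injective χ) {g : F[X]} {R c d : ℕ} (hd : 2 ≤ d) (hRc : R = d * c + 1)
    (hR : ∀ f : F[X], expand F R f = f ^ R) {ζ₀ : F} (hζ₀ : IsPrimitiveRoot ζ₀ d) (hg : g ≠ 0)
    (hmult : ∀ n, n ∣ d → (∀ p, n ∣ g.rootMultiplicity p) → n = 1) (hc : 4 * g.natDegree + 8 ≤ c)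
    {T : Finset E} {z : E → F}
    (hT : ∀ x ∈ T, x ^ R ^ 2 = x ∧ aeval x g ^ (c * (R + 1)) = algebraMap F E (z x))
    {N : ℕ} (hN : #{x ∈ T | z x = 0} ≤ N) :
    ‖∑ x ∈ T, χ (z x)‖ ≤ d * ((c + 5 * g.natDegree + 9) * R : ℕ) + N - #T := by
  classical
  have hχz (y : F) : χ y = 0 ↔ y = 0 := by rw [← MulChar.map_zero χ, hχ.eq_iff]
  refine norm_sum_le_of_card_fiber_le hd (fun x hx => ?_) (fun ω hω => ?_) (by simpa [hχz] using hN)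
  · rw [hχz, ← map_pow, ← map_one χ, hχ.eq_iff, ← (algebraMap F E).injective.eq_iff,
      ← (algebraMap F E).injective.eq_iff (b := 1), map_zero, map_one, map_pow, ← (hT x hx).2]
    exact (aeval_pow_eq_one_or_eq_zero hRc hR (hT x hx).1).imp_left
      fun h => by rw [h, zero_pow (mul_ne_zero (by omega) R.succ_ne_zero)]
  · rcases eq_empty_or_nonempty {x ∈ T | χ (z x) = ω} with hempty | ⟨x₀, hx₀⟩
    · simp [hempty]
    rw [mem_filter] at hx₀
    have hζ : z x₀ ≠ 0 := fun h => hω (by rw [← hx₀.2, h, MulChar.map_zero])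
    refine card_le_of_stepanov hd hRc hR hζ₀ hg hmult hc hζ fun x hx => ?_
    rw [mem_filter] at hx
    rw [← hχ (hx.2.trans hx₀.2.symm)]
    exact hT x hx.1

end StepanovCharSum

section PointSumBound

theorem norm_algebraMap_sub_gen {F K : Type*} [Field F] [Field K] [Algebra F K]
    (B : PowerBasis F K) (p : F) :
    Algebra.norm F (algebraMap F K p - B.gen) = (minpoly F B.gen).eval p := by
  rw [← charpoly_leftMulMatrix, Matrix.eval_charpoly, Algebra.norm_eq_matrix_det B.basis, map_sub,
    AlgHom.commutes]
  rfl

variable {F E : Type*} [Field F] [Fintype F] [Field E] [Algebra F E]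

theorem algebraMap_eval_minpoly {x : E} (hx : IsIntegral F x) (p : F) :
    algebraMap F E ((minpoly F x).eval p) =
      (algebraMap F E p - x) ^ ∑ i ∈ range (minpoly F x).natDegree, Fintype.card F ^ i := by
  have := IntermediateField.adjoin.finiteDimensional hx
  have : Finite (IntermediateField.adjoin F {x}) := Module.finite_of_finite F
  have heval := norm_algebraMap_sub_gen (IntermediateField.adjoin.powerBasis hx) p
  rw [IntermediateField.adjoin.powerBasis_gen, IntermediateField.minpoly_gen] at heval
  have hnorm := FiniteField.algebraMap_norm_eq_pow_sum F (IntermediateField.adjoin F {x})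
    (algebraMap F _ p - IntermediateField.AdjoinSimple.gen F x)
  rw [heval, IntermediateField.adjoin.finrank hx, Nat.card_eq_fintype_card] at hnorm
  exact congrArg (algebraMap (IntermediateField.adjoin F {x}) E) hnorm

theorem sum_range_mul_pow (q e r : ℕ) :
    ∑ i ∈ range (e * r), q ^ i = ∑ j ∈ range r, (∑ i ∈ range e, q ^ i) * q ^ (e * j) := by
  induction r with
  | zero => simp
  | succ r ih =>
    rw [Nat.mul_succ, sum_range_add, ih, sum_range_succ, sum_mul]
    simp only [pow_add, mul_comm]

theorem algebraMap_eval_frobeniusCharpoly {x : E} (hx : IsIntegral F x) {n : ℕ}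
    (hn : x ^ Fintype.card F ^ n = x) (p : F) :
    algebraMap F E ((frobeniusCharpoly F n x).eval p) =
      (algebraMap F E p - x) ^ ∑ i ∈ range n, Fintype.card F ^ i := by
  obtain ⟨r, rfl⟩ := (pow_card_pow_eq_self_iff hx n).mp hn
  rw [frobeniusCharpoly, Nat.mul_div_cancel_left _ (minpoly.natDegree_pos hx), eval_pow,
    sum_range_mul_pow, ← prod_pow_eq_pow_sum]
  simp only [pow_mul, ← algebraMap_eval_minpoly hx p, ← map_pow, ← map_prod]
  simp only [← pow_mul, FiniteField.pow_card_pow, prod_const, card_range]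

theorem exists_evalChar_frobeniusCharpoly_eq {s : Finset F} {e : F → ℕ} {χ : F →* ℂ} {δ : ℕ}
    {ψ : F → F →* ℂ} (hψ : ∀ p ∈ s, ∀ y, ψ p y = χ y ^ (δ * e p)) {x : E} (hx : IsIntegral F x)
    {n : ℕ} (hn : x ^ Fintype.card F ^ n = x) :
    ∃ z : F, evalChar s ψ (frobeniusCharpoly F n x) = χ z ∧
      aeval x (rootProd s e) ^ ((∑ i ∈ range n, Fintype.card F ^ i) * δ) = algebraMap F E z := by
  refine ⟨∏ p ∈ s, (frobeniusCharpoly F n x).eval p ^ (δ * e p), ?_, ?_⟩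
  · rw [evalChar_apply, map_prod]
    exact prod_congr rfl fun p hp => by rw [hψ p hp, map_pow]
  · rw [rootProd, map_prod, map_prod, ← prod_pow]
    simp only [map_pow (aeval x)]
    refine prod_congr rfl fun p _ => ?_
    rw [map_pow (algebraMap F E), algebraMap_eval_frobeniusCharpoly hx hn, map_sub, aeval_C,
      aeval_X, ← pow_mul, ← pow_mul]
    congr 1
    ring

theorem mul_sum_range_two_mul_pow {q c d δ k : ℕ} (hd : 0 < d) (hq : q = δ * d + 1)
    (hk : q ^ k = d * c + 1) : (∑ i ∈ range (2 * k), q ^ i) * δ = c * (q ^ k + 1) := by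
  have hgeom := geom_sum_mul_add (δ * d) (2 * k)
  have hsq : q ^ (2 * k) = c * (q ^ k + 1) * d + 1 := by rw [two_mul, pow_add, hk]; ring
  rw [← hq, hsq] at hgeom
  exact Nat.eq_of_mul_eq_mul_right hd (by linarith)

theorem norm_pointSum_evalChar_le [IsAlgClosed E] [Algebra.IsAlgebraic F E] {s : Finset F}
    {e : F → ℕ} {χ : MulChar F ℂ} (hχ : Function.Injective χ) {d δ : ℕ} (hd : 2 ≤ d)
    (hq : Fintype.card F = δ * d + 1) {ζ₀ : F} (hζ₀ : IsPrimitiveRoot ζ₀ d)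
    (he : ∀ n, n ∣ d → (∀ p ∈ s, n ∣ e p) → n = 1)
    {ψ : F → F →* ℂ} (hψ : ∀ p ∈ s, ∀ y, ψ p y = χ y ^ (δ * e p))
    {c k : ℕ} (hk : k ≠ 0) (hc : Fintype.card F ^ k = d * c + 1)
    (hcdeg : 4 * (rootProd s e).natDegree + 8 ≤ c) :
    ‖pointSum E (evalChar s ψ) (2 * k)‖ ≤
      d * ((c + 5 * (rootProd s e).natDegree + 9) * Fintype.card F ^ k : ℕ) + #s -
        Fintype.card F ^ (2 * k) := by
  classical
  have h2k : 2 * k ≠ 0 := mul_ne_zero two_ne_zero hk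
  choose! z hψz hz using fun x (hx : x ∈ frobeniusFixedPoints F E (2 * k)) =>
    exists_evalChar_frobeniusCharpoly_eq (χ := (χ : F →* ℂ)) hψ
      (Algebra.IsIntegral.isIntegral (R := F) x) ((mem_frobeniusFixedPoints h2k).mp hx)
  rw [mul_sum_range_two_mul_pow (by omega) hq hc] at hz
  have hzero : #{x ∈ frobeniusFixedPoints F E (2 * k) | z x = 0} ≤ #s := by
    refine (card_le_card fun x hx => ?_).trans (card_image_le (f := algebraMap F E))
    rw [mem_filter] at hx
    refine mem_image_of_aeval_rootProd_eq_zero (e := e)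
      (eq_zero_of_pow_eq_zero ((hz x hx.1).trans ?_))
    rw [hx.2, map_zero]
  rw [pointSum, sum_congr rfl hψz, ← Nat.cast_pow _ (2 * k),
    ← card_frobeniusFixedPoints (F := F) (E := E) h2k]
  refine norm_sum_mulChar_le_of_stepanov hχ hd hc (expand_card_pow · k) hζ₀ (rootProd_ne_zero s e)
    (fun n hn hroots => he n hn fun p hp => rootMultiplicity_rootProd e hp ▸ hroots p) hcdeg
    (fun x hx => ⟨?_, hz x hx⟩) hzero
  rw [← pow_mul, mul_comm k]
  exact (mem_frobeniusFixedPoints h2k).mp hx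

theorem exists_eq_gcd_mul {N : ℕ} (hN : N ≠ 0) {ι : Type*} (s : Finset ι) (e : ι → ℕ) :
    ∃ (δ d : ℕ) (e' : ι → ℕ), N = δ * d ∧ (∀ p ∈ s, e p = δ * e' p) ∧
      ∀ n, n ∣ d → (∀ p ∈ s, n ∣ e' p) → n = 1 := by
  have hδ : 0 < N.gcd (s.gcd e) := Nat.gcd_pos_of_pos_left _ (Nat.pos_of_ne_zero hN)
  obtain ⟨d, hd⟩ : N.gcd (s.gcd e) ∣ N := Nat.gcd_dvd_left _ _
  have hdvd (p : ι) (hp : p ∈ s) : N.gcd (s.gcd e) ∣ e p :=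
    (Nat.gcd_dvd_right _ _).trans (gcd_dvd hp)
  choose! e' he' using hdvd
  refine ⟨_, d, e', hd, he', fun n hnd hne => ?_⟩
  have hmul : N.gcd (s.gcd e) * n ∣ N.gcd (s.gcd e) := by
    refine Nat.dvd_gcd ?_ (dvd_gcd fun p hp => ?_)
    · exact (mul_dvd_mul_left _ hnd).trans hd.symm.dvd
    · exact he' p hp ▸ mul_dvd_mul_left _ (hne p hp)
  exact Nat.dvd_one.mp ((Nat.mul_dvd_mul_iff_left hδ).mp (by simpa using hmul))

theorem exists_norm_pointSum_evalChar_le (E : Type*) [Field E] [Algebra F E] [IsAlgClosed E]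
    [Algebra.IsAlgebraic F E] {s : Finset F} {ψ : F → F →* ℂ} {c : F} (hc : c ∈ s)
    (hψ : ∃ u : Fˣ, ψ c u ≠ 1) :
    ∃ (K : ℝ) (k₀ : ℕ), ∀ k ≥ k₀,
      ‖pointSum E (evalChar s ψ) (2 * k)‖ ≤ K * (Fintype.card F : ℝ) ^ k := by
  obtain ⟨g, χ, hg, hχ⟩ := exists_isPrimitiveRoot_mulChar F
  have hcard := card_sub_one_ne_zero F
  choose e he using fun p => exists_eq_mulChar_pow hg hχ (ψ p)
  obtain ⟨δ, d, e', hδd, hee', hcop⟩ := exists_eq_gcd_mul hcard s e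
  have hd₀ : d ≠ 0 := fun h => hcard (by rw [hδd, h, mul_zero])
  have hd₁ : d ≠ 1 := by
    rintro rfl
    obtain ⟨u, hu⟩ := hψ
    rw [mul_one] at hδd
    rw [he, hee' c hc, ← hδd, ← map_pow, pow_mul, FiniteField.pow_card_sub_one_eq_one _ u.ne_zero,
      one_pow, map_one] at hu
    exact hu rfl
  set m := (rootProd s e').natDegree
  refine ⟨d * (5 * m + 9) + #s, d * (4 * m + 8) + 1, fun k hk => ?_⟩
  have hq : Fintype.card F = δ * d + 1 := by omega
  have hkq : k < Fintype.card F ^ k := Nat.lt_pow_self Fintype.one_lt_card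
  obtain ⟨b, hb⟩ : d ∣ Fintype.card F ^ k - 1 :=
    (Dvd.intro_left _ hδd.symm).trans (by simpa using Nat.sub_dvd_pow_sub_pow (Fintype.card F) 1 k)
  have hbk : Fintype.card F ^ k = d * b + 1 := by omega
  have hbm : 4 * m + 8 ≤ b := Nat.le_of_mul_le_mul_left (by omega) (Nat.pos_of_ne_zero hd₀)
  have hbound := norm_pointSum_evalChar_le (E := E)
    (mulChar_injective_of_isPrimitiveRoot hg hχ) (by omega) hq (hg.pow (by omega) hδd) hcop
    (fun p hp x => by rw [he, hee' p hp]) (by omega) hbk hbm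
  have hR : (Fintype.card F : ℝ) ^ k = d * b + 1 := mod_cast hbk
  have hR₁ : (1 : ℝ) ≤ (Fintype.card F : ℝ) ^ k := one_le_pow₀ (mod_cast Fintype.card_pos)
  refine hbound.trans ?_
  push_cast
  rw [two_mul, pow_add]
  nlinarith [mul_le_mul_of_nonneg_left hR₁ (Nat.cast_nonneg (α := ℝ) #s)]

theorem norm_sum_prod_char_le {s : Finset F} {ψ : F → F →* ℂ} {c : F} (hc : c ∈ s)
    (hψ : ∃ u : Fˣ, ψ c u ≠ 1) :
    ‖∑ x, ∏ p ∈ s, ψ p (p + x)‖ ≤ (#s - 1) * √(Fintype.card F) := by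
  obtain ⟨K, k₀, hK⟩ := exists_norm_pointSum_evalChar_le (AlgebraicClosure F) hc hψ
  rw [← monicSum_evalChar_one]
  exact norm_le_mul_sqrt_of_recursion (monicSum_zero _)
    (fun n hn => monicSum_evalChar_eq_zero hc hψ hn) (natCast_mul_monicSum _)
    (mod_cast Fintype.card_pos) hK

end PointSumBound

section Duality

open scoped ComplexConjugate

variable {α β : Type*} [Fintype α]

theorem sum_norm_sq_sum_mul_le [Fintype β] {θ : α → ℂ} (hθ : ∀ y, ‖θ y‖ ≤ 1) (f : α → β → ℂ) :
    ∑ s, ‖∑ y, θ y * f y s‖ ^ 2 ≤ ∑ p : α × α, ‖∑ s, f p.1 s * conj (f p.2 s)‖ := by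
  have hexpand : ((∑ s, ‖∑ y, θ y * f y s‖ ^ 2 : ℝ) : ℂ) =
      ∑ p : α × α, θ p.1 * conj (θ p.2) * ∑ s, f p.1 s * conj (f p.2 s) := by
    push_cast
    simp only [mul_sum]
    rw [sum_comm]
    refine sum_congr rfl fun s _ => ?_
    rw [← Complex.mul_conj', map_sum, sum_mul_sum, ← Fintype.sum_prod_type']
    exact sum_congr rfl fun p _ => by rw [map_mul]; ring
  have hnonneg : 0 ≤ ∑ s, ‖∑ y, θ y * f y s‖ ^ 2 := by positivity
  rw [← Complex.norm_of_nonneg hnonneg, hexpand]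
  refine (norm_sum_le _ _).trans (sum_le_sum fun p _ => ?_)
  rw [norm_mul, norm_mul, RCLike.norm_conj]
  exact mul_le_of_le_one_left (norm_nonneg _) (mul_le_one₀ (hθ _) (norm_nonneg _) (hθ _))

theorem sq_sum_norm_sum_le [Fintype β] (f : α → β → ℂ) (S : Finset β) :
    (∑ y, ‖∑ s ∈ S, f y s‖) ^ 2 ≤
      #S * ∑ p : α × α, ‖∑ s, f p.1 s * conj (f p.2 s)‖ := by
  choose θ hθ hθf using fun y => RCLike.exists_norm_eq_mul_self (∑ s ∈ S, f y s)
  have hlin : ((∑ y, ‖∑ s ∈ S, f y s‖ : ℝ) : ℂ) = ∑ s ∈ S, ∑ y, θ y * f y s := by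
    rw [sum_comm]
    push_cast
    exact sum_congr rfl fun y _ => (hθf y).trans (mul_sum ..)
  have hle : ∑ y, ‖∑ s ∈ S, f y s‖ ≤ ∑ s ∈ S, ‖∑ y, θ y * f y s‖ := by
    have hnonneg : 0 ≤ ∑ y, ‖∑ s ∈ S, f y s‖ := by positivity
    rw [← Complex.norm_of_nonneg hnonneg, hlin]
    exact norm_sum_le _ _
  calc (∑ y, ‖∑ s ∈ S, f y s‖) ^ 2 ≤ (∑ s ∈ S, ‖∑ y, θ y * f y s‖) ^ 2 := by gcongr
    _ ≤ #S * ∑ s ∈ S, ‖∑ y, θ y * f y s‖ ^ 2 := sq_sum_le_card_mul_sum_sq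
    _ ≤ #S * ∑ s, ‖∑ y, θ y * f y s‖ ^ 2 := by
        gcongr
        exact subset_univ S
    _ ≤ #S * ∑ p : α × α, ‖∑ s, f p.1 s * conj (f p.2 s)‖ := by
        gcongr
        exact sum_norm_sq_sum_mul_le (fun y => (hθ y).le) f

theorem sq_sum_le_eleven_mul_card_pow_five {K : α × α → ℝ} (hK₀ : ∀ p, 0 ≤ K p)
    (hK : ∀ p, K p ≤ Fintype.card α) (A : α → α)
    (hKA : ∀ y z, y ≠ z → A y ≠ z → K (y, z) ≤ 3 * √(Fintype.card α)) :
    (∑ p, K p) ^ 2 ≤ 11 * (Fintype.card α : ℝ) ^ 5 := by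
  classical
  set q : ℝ := (Fintype.card α : ℝ) with hq
  have hpoint (y z : α) :
      K (y, z) ^ 2 ≤ 9 * q + ((if y = z then q ^ 2 else 0) + if A y = z then q ^ 2 else 0) := by
    have htrivial : K (y, z) ^ 2 ≤ q ^ 2 := pow_le_pow_left₀ (hK₀ _) (hK _) 2
    have hq₀ : 0 ≤ q := Nat.cast_nonneg _
    split_ifs with hyz hAz hAz
    · nlinarith
    · linarith
    · linarith
    · have := pow_le_pow_left₀ (hK₀ _) (hKA y z hyz hAz) 2
      rw [mul_pow, Real.sq_sqrt hq₀] at this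
      linarith
  calc (∑ p, K p) ^ 2 ≤ q ^ 2 * ∑ p, K p ^ 2 := by
        refine sq_sum_le_card_mul_sum_sq.trans_eq ?_
        rw [card_univ, Fintype.card_prod, Nat.cast_mul, ← sq]
    _ ≤ q ^ 2 * ∑ y, ∑ z,
          (9 * q + ((if y = z then q ^ 2 else 0) + if A y = z then q ^ 2 else 0)) := by
        rw [Fintype.sum_prod_type]
        gcongr
        exact hpoint _ _
    _ = 11 * q ^ 5 := by
        simp only [sum_add_distrib, sum_ite_eq, mem_univ, if_true, sum_const, card_univ,
          nsmul_eq_mul, ← hq]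
        ring

end Duality

theorem le_rpow_mul_rpow_of_sq_le {N q S K : ℝ} (hq : 0 ≤ q) (hS : 0 ≤ S) (hN : N ^ 2 ≤ S * K)
    (hK : K ^ 2 ≤ 11 * q ^ 5) :
    N ≤ (11 : ℝ) ^ ((1 : ℝ) / 4) * q ^ ((5 : ℝ) / 4) * S ^ ((1 : ℝ) / 2) := by
  refine le_of_pow_le_pow_left₀ (n := 4) (by norm_num) (by positivity) ?_
  calc N ^ 4 = (N ^ 2) ^ 2 := by ring
    _ ≤ (S * K) ^ 2 := by gcongr
    _ ≤ S ^ 2 * (11 * q ^ 5) := by rw [mul_pow]; gcongr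
    _ = _ := by
        rw [mul_pow, mul_pow, ← Real.rpow_mul_natCast (by norm_num), ← Real.rpow_mul_natCast hq,
          ← Real.rpow_mul_natCast hS]
        norm_num
        ring

section Correlation

open scoped ComplexConjugate

theorem norm_apply_le_one {F : Type*} [Field F] [Finite F] (ψ : F →* ℂ) (x : F) : ‖ψ x‖ ≤ 1 := by
  have := Fintype.ofFinite F
  by_contra! h
  have hpow : ‖ψ x‖ ^ Fintype.card F = ‖ψ x‖ := by rw [← norm_pow, ← map_pow, FiniteField.pow_card]
  exact (lt_self_pow₀ h Fintype.one_lt_card).ne' hpow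

variable {F : Type*} [Field F] [Fintype F]

theorem norm_sum_prod_shift_le {ι : Type*} [Fintype ι] (w : ι → F) (φ : ι → F →* ℂ) {i : ι}
    (hw : ∀ j ≠ i, w j ≠ w i) (hφ : ∃ u : Fˣ, φ i u ≠ 1) :
    ‖∑ x, ∏ j, φ j (w j + x)‖ ≤ (Fintype.card ι - 1) * √(Fintype.card F) := by
  classical
  have hi : ∏ j with w j = w i, φ j = φ i := by
    rw [show ({j | w j = w i} : Finset ι) = {i} by ext j; simpa using
      ⟨not_imp_not.mp (hw j), congrArg w⟩, prod_singleton]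
  have hprod (x : F) : ∏ j, φ j (w j + x) =
      ∏ p ∈ univ.image w, (∏ j with w j = p, φ j) (p + x) := by
    rw [← prod_fiberwise_of_maps_to (t := univ.image w) (g := w) (by simp)]
    refine prod_congr rfl fun p _ => ?_
    rw [MonoidHom.finsetProd_apply]
    exact prod_congr rfl fun j hj => by rw [(mem_filter.mp hj).2]
  simp only [hprod]
  refine (norm_sum_prod_char_le (mem_image_of_mem w (mem_univ i)) (by rwa [hi])).trans ?_
  gcongr
  exact card_image_le

theorem norm_correlation_le {χ : MulChar F ℂ} (hχ : χ ≠ 1) (ψ : F →* ℂ) {u v z w : F}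
    (hu : u ≠ z) (hv : v ≠ z) (hw : w ≠ z) :
    ‖∑ s, χ (s + u) * ψ (s + v) * conj (χ (s + z) * ψ (s + w))‖ ≤ 3 * √(Fintype.card F) := by
  let conjComp (φ : F →* ℂ) : F →* ℂ := (starRingEnd ℂ : ℂ →* ℂ).comp φ
  have hconj : ∃ t : Fˣ, conjComp χ t ≠ 1 := by
    obtain ⟨t, ht⟩ := MulChar.ne_one_iff.mp hχ
    exact ⟨t, fun h => ht ((starRingEnd ℂ).injective (h.trans (map_one _).symm))⟩
  have hweil := norm_sum_prod_shift_le ![u, v, z, w]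
    ![χ, ψ, conjComp χ, conjComp ψ] (i := 2)
    (by intro j hj; fin_cases j <;> simp_all) hconj
  convert hweil using 2
  · simp [conjComp, Fin.prod_univ_four, add_comm, mul_assoc]
  · norm_num

theorem norm_correlation_le_card (χ ψ : F →* ℂ) (u v z w : F) :
    ‖∑ s, χ (s + u) * ψ (s + v) * conj (χ (s + z) * ψ (s + w))‖ ≤ Fintype.card F := by
  have hterm (a b : F) : ‖χ a * ψ b‖ ≤ 1 := by
    rw [norm_mul]
    exact mul_le_one₀ (norm_apply_le_one χ a) (norm_nonneg _) (norm_apply_le_one ψ b)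
  refine (norm_sum_le_of_le univ (n := fun _ => 1) fun s _ => ?_).trans_eq (by simp)
  rw [norm_mul, RCLike.norm_conj]
  exact mul_le_one₀ (hterm _ _) (norm_nonneg _) (hterm _ _)

theorem stmt_8_general (χ : MulChar F ℂ) (hχ : χ ≠ 1) (ψ : F →* ℂ) (S : Finset F) (A : F → F)
    (hA : ∀ y, A y ≠ y) :
    ∑ y, ‖∑ s ∈ S, χ (s + y) * ψ (s + A y)‖ ≤
      (11 : ℝ) ^ ((1 : ℝ) / 4) * (Fintype.card F : ℝ) ^ ((5 : ℝ) / 4) *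
        (#S : ℝ) ^ ((1 : ℝ) / 2) := by
  have hcorr := sq_sum_le_eleven_mul_card_pow_five (fun _ => norm_nonneg _)
    (fun p => norm_correlation_le_card (χ : F →* ℂ) ψ p.1 (A p.1) p.2 (A p.2)) A
    fun _ z hyz hAz => norm_correlation_le hχ ψ hyz hAz (hA z)
  exact le_rpow_mul_rpow_of_sq_le (Nat.cast_nonneg _) (Nat.cast_nonneg _)
    (sq_sum_norm_sum_le (fun y s => χ (s + y) * ψ (s + A y)) S) hcorr

end Correlation

/-- Let F = F_q, χ a multiplicative character of order q-1, χ_a = χ^a,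
χ_b = χ^b with 0 < a < q-1 and 0 ≤ b < q-1, S a nonempty subset of F and A : F → F
with no fixed points.  Then
∑_{y∈F} |∑_{s∈S} χ_a(s+y)·χ_b(s+A(y))| ≤ 11^{1/4} · q^{5/4} · |S|^{1/2}. -/
theorem stmt_8 {F : Type*} [Field F] [Fintype F]
    (χ : MulChar F ℂ) (hord : orderOf χ = Fintype.card F - 1)
    (a b : ℕ) (ha : 0 < a) (ha' : a < Fintype.card F - 1) (hb : b < Fintype.card F - 1)
    (S : Finset F) (hS : S.Nonempty) (A : F → F) (hA : ∀ y, A y ≠ y) :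
    ∑ y : F, ‖∑ s ∈ S, (χ (s + y)) ^ a * (χ (s + A y)) ^ b‖ ≤
      (11 : ℝ) ^ ((1 : ℝ)/4) * (Fintype.card F : ℝ) ^ ((5 : ℝ)/4) *
        (S.card : ℝ) ^ ((1 : ℝ)/2) := by
  have hχa : χ ^ a ≠ 1 := pow_ne_one_of_lt_orderOf ha.ne' (hord ▸ ha')
  simpa [MulChar.pow_apply' χ ha.ne'] using stmt_8_general (χ ^ a) hχa ((χ : F →* ℂ) ^ b) S A hA
end
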